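/- With high probability, the random colored digraph Γ described in the context contains a rainbow directed Hamilton cycle, i.e., a directed Hamilton cycle all of whose edges have pairwise distinct colors. -/

import Mathlib

open MeasureTheory Filter

/-- The Bernoulli measure on `Bool` with success probability `p` (clamped into `[0,1]`;
for `0 ≤ p ≤ 1` this is the genuine Bernoulli measure). -/
noncomputable def bernoulliM (p : ℝ) : Measure Bool :=
  (PMF.bernoulli (min (Real.toNNReal p) 1) (min_le_right _ _)).toMeasure

instance (p : ℝ) : IsProbabilityMeasure (bernoulliM p) := by
  unfold bernoulliM; infer_instance

instance {α : Type*} : MeasurableSpace (Finset α) := ⊤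

/-- The uniform probability measure on a finite set (zero measure if the set is empty). -/
noncomputable def uniformOn {α : Type*} [MeasurableSpace α] (s : Finset α) : Measure α :=
  if h : s.Nonempty then (PMF.uniformOfFinset s h).toMeasure else 0

instance {α : Type*} [MeasurableSpace α] (s : Finset α) : SigmaFinite (uniformOn s) := by
  unfold uniformOn
  split
  · infer_instance
  · infer_instance

/-- `θ₁ = θ₃ = min(θ/3, ε₂/4)` where `ε₂ = ε/3`. -/
noncomputable def th1 (ε θ : ℝ) : ℝ := min (θ / 3) (ε / 3 / 4)

/-- `L = max(15·e^{40/(ε₃θ₃)}, 7/θ₁)` where `ε₃ = ε/3` and `θ₃ = θ₁`. -/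
noncomputable def Lparam (ε θ : ℝ) : ℝ :=
  max (15 * Real.exp (40 / (ε / 3 * th1 ε θ))) (7 / th1 ε θ)

/-- The collection of admissible neighbor sets for vertex `k`: subsets of the other
`r - 1` vertices of size exactly `d`. -/
def validSets (r d : ℕ) (k : Fin r) : Finset (Finset (Fin r)) :=
  Finset.univ.filter fun S => S.card = d ∧ k ∉ S

/-- The sample space of the auxiliary colored digraph `Γ` on `Fin r`: for each vertex a
pair (out-neighbor set, in-neighbor set); a color in `Fin C` for each potential directed
edge; and a deletion coin for each potential directed edge. -/
abbrev GammaSpace (r C : ℕ) : Type :=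
  (∀ _ : Fin r, Finset (Fin r) × Finset (Fin r)) ×
    ((Fin r × Fin r) → Fin C) × ((Fin r × Fin r) → Bool)

/-- The law of the random colored digraph `Γ`: independently for each vertex `k`, a
uniformly random set of `δ⁺ k` out-neighbors and a uniformly random set of `δ⁻ k`
in-neighbors among the other `r - 1` vertices; independently a uniformly random color
from `Fin C` for each potential directed edge; and independently a deletion coin with
success probability `q₀` for each potential directed edge (used only on edges of
`E₁ \ F₁`). -/
noncomputable def gammaM (r C : ℕ) (δp δm : Fin r → ℕ) (q₀ : ℝ) :
    Measure (GammaSpace r C) :=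
  (Measure.pi fun k =>
      (uniformOn (validSets r (δp k) k)).prod (uniformOn (validSets r (δm k) k))).prod
    ((Measure.pi fun _ : Fin r × Fin r => uniformOn (Finset.univ : Finset (Fin C))).prod
      (Measure.pi fun _ : Fin r × Fin r => bernoulliM q₀))

/-- The directed edge `e` lies in `E₁`: it was generated as an out-choice of its tail or
as an in-choice of its head. -/
def memE1 {r C : ℕ} (ω : GammaSpace r C) (e : Fin r × Fin r) : Prop :=
  e.2 ∈ (ω.1 e.1).1 ∨ e.1 ∈ (ω.1 e.2).2

/-- The directed edge `e` lies in `F₁`: it was doubly generated, both as an out-choice of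
its tail and as an in-choice of its head. -/
def memF1 {r C : ℕ} (ω : GammaSpace r C) (e : Fin r × Fin r) : Prop :=
  e.2 ∈ (ω.1 e.1).1 ∧ e.1 ∈ (ω.1 e.2).2

/-- The directed edge `e` is an edge of `Γ`: it lies in `E₁` and, if it is not doubly
generated, it survives the independent deletion coin. -/
def memGamma {r C : ℕ} (ω : GammaSpace r C) (e : Fin r × Fin r) : Prop :=
  memE1 ω e ∧ (memF1 ω e ∨ ω.2.2 e = false)

/-- `Γ` contains a rainbow directed Hamilton cycle: a cyclic ordering `f` of all `r`
vertices such that each consecutive directed edge is an edge of `Γ` and the colors of the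
`r` cycle edges are pairwise distinct. -/
def HasRainbowDirHamCycle {r C : ℕ} (ω : GammaSpace r C) : Prop :=
  ∃ f : ZMod r → Fin r, Function.Bijective f ∧
    (∀ i : ZMod r, memGamma ω (f i, f (i + 1))) ∧
    Function.Injective fun i : ZMod r => ω.2.1 (f i, f (i + 1))


section
open Equiv

/-- all points lie in one cycle -/
def cyc {α : Type*} (σ : Perm α) : Prop := ∀ x y, σ.SameCycle x y

lemma sameCycle_map {α β : Type*} {σ : Perm α} {π : Perm β} (f : β → α)
    (h : ∀ y, σ.SameCycle (f y) (f (π y))) {a b : β} (hab : π.SameCycle a b) :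
    σ.SameCycle (f a) (f b) := by
  obtain ⟨i, rfl⟩ := hab
  induction i using Int.induction_on with
  | zero => simpa using Perm.SameCycle.refl σ (f a)
  | succ i ih =>
    refine ih.trans ?_
    have := h ((π ^ (i : ℤ)) a)
    rwa [add_comm, zpow_add, Perm.mul_apply, zpow_one]
  | pred i ih =>
    refine ih.trans ?_
    have := h ((π ^ (-(i : ℤ) - 1)) a)
    have e : π ((π ^ (-(i : ℤ) - 1)) a) = (π ^ (-(i : ℤ))) a := by
      rw [← Perm.mul_apply, ← zpow_one_add]; congr 2; ring
    rw [e] at this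
    exact this.symm

lemma cyc_conj {α : Type*} (σ τ : Perm α) (h : cyc σ) : cyc (τ * σ * τ⁻¹) := by
  intro x y
  have := sameCycle_map (σ := τ * σ * τ⁻¹) (π := σ) (fun z => τ z) (fun z => ⟨1, by simp⟩)
    (h (τ⁻¹ x) (τ⁻¹ y))
  simpa using this

lemma cyc_decomp {n : ℕ} (p : Fin (n + 2)) (σ : Perm (Fin (n + 1))) :
    cyc (Perm.decomposeFin.symm (p, σ)) ↔ p ≠ 0 ∧ cyc σ := by
  set π := Perm.decomposeFin.symm (p, σ) with hπ
  have h0 : π 0 = p := Perm.decomposeFin_symm_apply_zero p σ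
  have hs : ∀ x : Fin (n + 1), π x.succ = swap 0 p (σ x).succ :=
    fun x => Perm.decomposeFin_symm_apply_succ σ p x
  constructor
  · intro hc
    have hp : p ≠ 0 := by
      intro hp
      have := hc 0 1
      have hfix : Function.IsFixedPt π 0 := by rw [Function.IsFixedPt, h0, hp]
      have := this.eq_of_left hfix
      exact absurd this (by simp)
    refine ⟨hp, ?_⟩
    obtain ⟨q, rfl⟩ := Fin.exists_succ_eq.mpr hp
    let f : Fin (n + 2) → Fin (n + 1) := Fin.cases q id
    have key : ∀ y, σ.SameCycle (f y) (f (π y)) := by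
      intro y
      refine Fin.cases ?_ (fun x => ?_) y
      · rw [h0]; exact Perm.SameCycle.refl _ _
      · rw [hs]
        by_cases hx : (σ x) = q
        · rw [hx, swap_apply_right]
          exact ⟨1, by simp [f, hx]⟩
        · rw [swap_apply_of_ne_of_ne (Fin.succ_ne_zero _) (by simpa using hx)]
          exact ⟨1, by simp [f]⟩
    intro x y
    have := sameCycle_map f key (hc x.succ y.succ)
    simpa [f] using this
  · rintro ⟨hp, hc⟩
    have key : ∀ x, π.SameCycle (Fin.succ x) (Fin.succ (σ x)) := by
      intro x
      by_cases hx : (σ x).succ = p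
      · refine ⟨2, ?_⟩
        have : π x.succ = 0 := by rw [hs, hx, swap_apply_right]
        rw [zpow_two, Perm.mul_apply, this, h0, hx]
      · refine ⟨1, ?_⟩
        rw [zpow_one, hs, swap_apply_of_ne_of_ne (Fin.succ_ne_zero _) hx]
    have h1 : ∀ x y, π.SameCycle (Fin.succ x) (Fin.succ y) :=
      fun x y => sameCycle_map Fin.succ key (hc x y)
    have h2 : ∀ x : Fin (n+1), π.SameCycle 0 (Fin.succ x) := by
      intro x
      obtain ⟨q, rfl⟩ := Fin.exists_succ_eq.mpr hp
      exact (show π.SameCycle 0 q.succ from ⟨1, by simpa using h0⟩).trans (h1 q x)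
    intro x y
    refine Fin.cases ?_ (fun x => ?_) x <;> refine Fin.cases ?_ (fun y => ?_) y
    · exact Perm.SameCycle.refl _ _
    · exact h2 y
    · exact (h2 x).symm
    · exact h1 x y

open Classical in
/-- number of cyclic `φ` with `β φ` cyclic -/
noncomputable def NN {n : ℕ} (β : Perm (Fin n)) : ℕ :=
  (Finset.univ.filter fun φ : Perm (Fin n) => cyc φ ∧ cyc (β * φ)).card

lemma decomp_mul {n : ℕ} (p : Fin (n + 2)) (τ σ : Perm (Fin (n + 1))) :
    Perm.decomposeFin.symm (p, τ) * Perm.decomposeFin.symm (0, σ) =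
      Perm.decomposeFin.symm (p, τ * σ) := by
  ext x : 1
  refine Fin.cases ?_ (fun x => ?_) x
  · simp
  · simp

lemma decomp_zero {n : ℕ} (p : Fin (n + 2)) (σ : Perm (Fin (n + 1))) :
    Perm.decomposeFin.symm (p, σ) = swap 0 p * Perm.decomposeFin.symm (0, σ) := by
  ext x : 1
  refine Fin.cases ?_ (fun x => ?_) x
  · simp
  · simp

/-- the reduced permutation -/
def tau {n : ℕ} (β : Perm (Fin (n + 2))) (p : Fin (n + 2)) : Perm (Fin (n + 1)) :=
  (Perm.decomposeFin (β * swap 0 p)).2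

lemma tau_spec {n : ℕ} (β : Perm (Fin (n + 2))) (p : Fin (n + 2)) :
    β * swap 0 p = Perm.decomposeFin.symm (β p, tau β p) := by
  have h : Perm.decomposeFin.symm (Perm.decomposeFin (β * swap 0 p)) = β * swap 0 p :=
    Equiv.symm_apply_apply _ _
  have h2 : (Perm.decomposeFin (β * swap 0 p)).1 = β p := by
    have := congrArg (fun f => f 0) h
    have h3 : Perm.decomposeFin (β * swap 0 p) =
      ((Perm.decomposeFin (β * swap 0 p)).1, (Perm.decomposeFin (β * swap 0 p)).2) := rfl
    rw [h3, Perm.decomposeFin_symm_apply_zero] at this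
    simpa using this
  rw [← h2]; exact h.symm

open Classical in
lemma NN_rec {n : ℕ} (β : Perm (Fin (n + 2))) :
    NN β = ∑ p, if p ≠ 0 ∧ β p ≠ 0 then NN (tau β p) else 0 := by
  unfold NN
  rw [Finset.card_filter, ← Equiv.sum_comp Perm.decomposeFin.symm, Fintype.sum_prod_type]
  refine Finset.sum_congr rfl fun p _ => ?_
  have : ∀ σ : Perm (Fin (n+1)), (cyc (Perm.decomposeFin.symm (p, σ)) ∧
      cyc (β * Perm.decomposeFin.symm (p, σ))) ↔
      ((p ≠ 0 ∧ β p ≠ 0) ∧ (cyc σ ∧ cyc (tau β p * σ))) := by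
    intro σ
    have e : β * Perm.decomposeFin.symm (p, σ) =
        Perm.decomposeFin.symm (β p, tau β p * σ) := by
      rw [decomp_zero p σ, ← mul_assoc, tau_spec, decomp_mul]
    rw [e, cyc_decomp, cyc_decomp]; tauto
  simp only [this]
  split_ifs with h
  · simp only [h, true_and, Finset.card_filter, not_false_eq_true, ne_eq]
  · simp [h]

end

section
open Equiv Matrix

section detpart
variable {R : Type*} [CommRing R]

/-- matrix `a I + b P_β` -/
def MB (n : ℕ) (a b : R) (β : Perm (Fin n)) : Matrix (Fin n) (Fin n) R :=
  fun i => a • Pi.single i 1 + b • Pi.single (β i) 1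

lemma MB_apply (n : ℕ) (a b : R) (β : Perm (Fin n)) (i j) :
    MB n a b β i j = a * (if j = i then 1 else 0) + b * (if j = β i then 1 else 0) := by
  simp [MB, Pi.single_apply]

lemma det_tau {n : ℕ} (a b : R) (β : Perm (Fin (n + 2))) (z : Fin (n + 2)) (hz : z ≠ 0) :
    (((MB (n+2) a b β).updateRow 0 (a • Pi.single z 1 + b • Pi.single (β 0) 1)).updateRow z
      (b • Pi.single (β z) 1 - b • Pi.single 0 1)).det =
      if β z ≠ 0 then b * (MB (n+1) a b (tau β z)).det else 0 := by
  have hswap : (((MB (n+2) a b β).updateRow 0 (a • Pi.single z 1 + b • Pi.single (β 0) 1)).updateRow z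
      (b • Pi.single (β z) 1 - b • Pi.single 0 1)).det =
      - ((MB (n+2) a b (β * swap 0 z)).updateRow 0 (b • Pi.single (β z) 1 - b • Pi.single 0 1)).det := by
    have e : ((MB (n+2) a b (β * swap 0 z)).updateRow 0 (b • Pi.single (β z) 1 - b • Pi.single 0 1))
      = (((MB (n+2) a b β).updateRow 0 (a • Pi.single z 1 + b • Pi.single (β 0) 1)).updateRow z
      (b • Pi.single (β z) 1 - b • Pi.single 0 1)).submatrix (swap 0 z) id := by
      ext i j
      by_cases h0 : i = 0
      · subst h0; simp
      · by_cases hi : i = z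
        · subst hi
          simp [MB, updateRow_apply, h0, hz.symm, Ne.symm h0]
        · simp [MB, updateRow_apply, h0, hi, swap_apply_of_ne_of_ne h0 hi]
    rw [e, det_permute]
    simp [Perm.sign_swap hz.symm]
  rw [hswap]
  have hR0 : (β * swap 0 z) 0 = β z := by simp
  split_ifs with h
  · set B := ((MB (n+2) a b (β * swap 0 z)).updateRow 0 (b • Pi.single (β z) 1 - b • Pi.single 0 1)) with hB
    rw [← det_updateCol_add_self B (i := β z) (j := 0) h]
    set B' := B.updateCol (β z) fun k => B k (β z) + B k 0 with hB'
    rw [det_succ_row_zero, Finset.sum_eq_single 0]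
    · have e1 : B' 0 0 = -b := by
        simp [hB', hB, updateCol_apply, h.symm]
      have e2 : B'.submatrix Fin.succ (Fin.succAbove 0) = MB (n+1) a b (tau β z) := by
        ext i j
        have hs : (β * swap 0 z) i.succ = swap 0 (β z) (tau β z i).succ := by
          rw [tau_spec]; simp
        have hs' : β (swap 0 z i.succ) = swap 0 (β z) (tau β z i).succ := hs
        simp only [submatrix_apply, Fin.succAbove_zero, hB', updateCol_apply, hB, MB_apply,
          updateRow_apply, Fin.succ_ne_zero, if_false, Perm.mul_apply, hs']
        by_cases ht : (tau β z i).succ = β z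
        · rw [ht, swap_apply_right]
          by_cases hj : j.succ = β z
          · have : j = tau β z i := by rw [← Fin.succ_inj, hj, ht]
            rw [if_pos hj, ← hj]
            simp [this, (Fin.succ_ne_zero _).symm]
          · have : j ≠ tau β z i := by rintro rfl; exact hj ht
            simp [hj, this]
        · rw [swap_apply_of_ne_of_ne (Fin.succ_ne_zero _) ht]
          by_cases hj : j.succ = β z
          · have : j ≠ tau β z i := by rintro rfl; exact ht hj
            rw [if_pos hj, ← hj]
            simp [this, (Fin.succ_ne_zero _).symm]
          · simp [hj]
      rw [e1, e2]; simp
    · intro j _ hj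
      have : B' 0 j = 0 := by
        by_cases hj2 : j = β z
        · simp [hB', hB, hj2, h, h.symm, Pi.single_apply]
        · simp [hB', hB, hj2, hj, updateCol_apply]
      rw [this]; simp
    · simp
  · have h' : β z = 0 := by simpa using h
    rw [h', sub_self]
    rw [det_eq_zero_of_row_eq_zero 0]; simp
    simp

lemma det_expand {n : ℕ} (A : Matrix (Fin (n+2)) (Fin (n+2)) R) (a b : R) (hab : a + b = 1)
    (z : Fin (n+2)) (hz : z ≠ 0) :
    ((A.updateRow 0 (A 0 + a • (Pi.single z 1 - Pi.single 0 1))).updateRow z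
      (A z - a • Pi.single z 1 - b • Pi.single 0 1)).det =
    A.det + a * (A.updateRow 0 (Pi.single z 1)).det - a * (A.updateRow 0 (Pi.single 0 1)).det
      - a * (A.updateRow z (Pi.single z 1)).det - b * (A.updateRow z (Pi.single 0 1)).det
      + a * ((A.updateRow 0 (Pi.single 0 1)).updateRow z (Pi.single z 1)).det := by
  have key : ∀ u : Fin (n+2) → R, ((A.updateRow 0 u).updateRow z
      (A z - a • Pi.single z 1 - b • Pi.single 0 1)).det =
      (A.updateRow 0 u).det - a * ((A.updateRow 0 u).updateRow z (Pi.single z 1)).det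
       - b * ((A.updateRow 0 u).updateRow z (Pi.single 0 1)).det := by
    intro u
    rw [sub_eq_add_neg, sub_eq_add_neg, ← neg_smul, ← neg_smul, det_updateRow_add,
      det_updateRow_add, det_updateRow_smul, det_updateRow_smul]
    have : (A.updateRow 0 u).updateRow z (A z) = A.updateRow 0 u := by
      conv_lhs => rw [← updateRow_ne (M := A) (b := u) hz, updateRow_eq_self]
    rw [this]; ring
  have key2 : ∀ v : Fin (n+2) → R, ((A.updateRow 0 (A 0 + a • (Pi.single z 1 - Pi.single 0 1))).updateRow z v).det
     = (A.updateRow z v).det + a * ((A.updateRow 0 (Pi.single z 1)).updateRow z v).det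
      - a * ((A.updateRow 0 (Pi.single 0 1)).updateRow z v).det := by
    intro v
    rw [updateRow_comm _ hz.symm, smul_sub, ← add_sub_assoc, sub_eq_add_neg, ← neg_smul,
      det_updateRow_add, det_updateRow_add, det_updateRow_smul, det_updateRow_smul]
    have : (A.updateRow z v).updateRow 0 (A 0) = A.updateRow z v := by
      conv_lhs => rw [← updateRow_ne (M := A) (b := v) hz.symm, updateRow_eq_self]
    rw [this, updateRow_comm _ hz, updateRow_comm _ hz]; ring
  have key3 : (A.updateRow 0 (A 0 + a • (Pi.single z 1 - Pi.single 0 1))).det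
     = A.det + a * (A.updateRow 0 (Pi.single z 1)).det
      - a * (A.updateRow 0 (Pi.single 0 1)).det := by
    rw [smul_sub, ← add_sub_assoc, sub_eq_add_neg, ← neg_smul,
      det_updateRow_add, det_updateRow_add, det_updateRow_smul, det_updateRow_smul,
      updateRow_eq_self]; ring
  have z1 : ((A.updateRow 0 (Pi.single z 1)).updateRow z (Pi.single z 1)).det = 0 :=
    det_zero_of_row_eq hz (by simp [updateRow_ne hz.symm])
  have z2 : ((A.updateRow 0 (Pi.single 0 1)).updateRow z (Pi.single 0 1)).det = 0 :=
    det_zero_of_row_eq hz (by simp [updateRow_ne hz.symm])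
  have z3 : ((A.updateRow 0 (Pi.single z 1)).updateRow z (Pi.single 0 1)).det =
     - ((A.updateRow 0 (Pi.single 0 1)).updateRow z (Pi.single z 1)).det := by
    have e : ((A.updateRow 0 (Pi.single z 1)).updateRow z (Pi.single 0 1)) =
       ((A.updateRow 0 (Pi.single 0 1)).updateRow z (Pi.single z 1)).submatrix (swap 0 z) id := by
      ext i j
      by_cases h0 : i = 0
      · subst h0; simp [updateRow_ne hz.symm]
      · by_cases hi : i = z
        · subst hi
          simp [updateRow_apply, h0, hz.symm, Ne.symm h0]
        · simp [updateRow_apply, h0, hi, swap_apply_of_ne_of_ne h0 hi]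
    rw [e, det_permute]
    simp [Perm.sign_swap hz.symm]
  rw [key, key2, key2, key3, z1, z2, z3]
  have hb : b = 1 - a := by rw [← hab]; ring
  rw [hb]; ring

lemma MB_sum_row {n : ℕ} (a b : R) (hab : a + b = 1) (β : Perm (Fin n)) :
    MB n a b β *ᵥ (fun _ => 1) = fun _ => 1 := by
  ext i; simp [mulVec, dotProduct, MB_apply, Finset.sum_add_distrib, hab]

lemma MB_sum_col {n : ℕ} (a b : R) (hab : a + b = 1) (β : Perm (Fin n)) :
    (fun _ => 1) ᵥ* MB n a b β = fun _ => 1 := by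
  ext j
  have : ∀ i, (j = β i) ↔ (i = β.symm j) := fun i => by
    rw [Equiv.eq_symm_apply]; exact eq_comm
  simp [vecMul, dotProduct, MB_apply, Finset.sum_add_distrib, this, hab]

lemma sum_d_row {n : ℕ} (a b : R) (hab : a + b = 1) (β : Perm (Fin n)) (u : Fin n) :
    ∑ z, ((MB n a b β).updateRow u (Pi.single z 1)).det = (MB n a b β).det := by
  have h : ((fun _ => 1) ᵥ* MB n a b β) ᵥ* (adjugate (MB n a b β)) =
      (fun _ => (MB n a b β).det) := by
    rw [vecMul_vecMul, mul_adjugate]; ext j; simp [vecMul, dotProduct, Matrix.one_apply]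
  rw [MB_sum_col a b hab] at h
  have := congrFun h u
  simpa [vecMul, dotProduct, adjugate_apply] using this

lemma sum_d_col {n : ℕ} (a b : R) (hab : a + b = 1) (β : Perm (Fin n)) (v : Fin n) :
    ∑ z, ((MB n a b β).updateRow z (Pi.single v 1)).det = (MB n a b β).det := by
  have h : (adjugate (MB n a b β)) *ᵥ (MB n a b β *ᵥ (fun _ => 1)) =
      (fun _ => (MB n a b β).det) := by
    rw [mulVec_mulVec, adjugate_mul]; ext j; simp [mulVec, dotProduct, Matrix.one_apply]
  rw [MB_sum_row a b hab] at h
  have := congrFun h v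
  simpa [mulVec, dotProduct, adjugate_apply] using this

lemma det_tau' {n : ℕ} (a b : R) (hab : a + b = 1) (β : Perm (Fin (n + 2)))
    (z : Fin (n + 2)) (hz : z ≠ 0) (A : Matrix (Fin (n+2)) (Fin (n+2)) R) (hA : A = MB (n+2) a b β) :
    (if β z ≠ 0 then b * (MB (n+1) a b (tau β z)).det else 0) =
    A.det + a * (A.updateRow 0 (Pi.single z 1)).det - a * (A.updateRow 0 (Pi.single 0 1)).det
      - a * (A.updateRow z (Pi.single z 1)).det - b * (A.updateRow z (Pi.single 0 1)).det
      + a * ((A.updateRow 0 (Pi.single 0 1)).updateRow z (Pi.single z 1)).det := by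
  rw [← det_expand A a b hab z hz, ← det_tau a b β z hz, ← hA]
  congr 2
  · congr 1
    rw [hA]; simp only [MB]; module
  · rw [hA]; simp only [MB]; module

/-- sum form -/
lemma det_tau_sum {n : ℕ} (a b : R) (hab : a + b = 1) (β : Perm (Fin (n + 2)))
    (A : Matrix (Fin (n+2)) (Fin (n+2)) R) (hA : A = MB (n+2) a b β) :
    b * (∑ z, if z ≠ 0 ∧ β z ≠ 0 then (MB (n+1) a b (tau β z)).det else 0) =
    (n+1) * A.det + a * (A.det - (A.updateRow 0 (Pi.single 0 1)).det)
      - a * (n+1) * (A.updateRow 0 (Pi.single 0 1)).det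
      - a * (∑ z, (A.updateRow z (Pi.single z 1)).det - (A.updateRow 0 (Pi.single 0 1)).det)
      - b * (A.det - (A.updateRow 0 (Pi.single 0 1)).det)
      + a * ∑ z ∈ Finset.univ.erase 0,
          ((A.updateRow 0 (Pi.single 0 1)).updateRow z (Pi.single z 1)).det := by
  have h1 : ∑ z ∈ Finset.univ.erase (0 : Fin (n+2)), (A.updateRow 0 (Pi.single z 1)).det =
      A.det - (A.updateRow 0 (Pi.single 0 1)).det := by
    rw [hA, ← sum_d_row a b hab β 0, ← Finset.add_sum_erase _ _ (Finset.mem_univ 0)]; ring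
  have h2 : ∑ z ∈ Finset.univ.erase (0 : Fin (n+2)), (A.updateRow z (Pi.single 0 1)).det =
      A.det - (A.updateRow 0 (Pi.single 0 1)).det := by
    rw [hA, ← sum_d_col a b hab β 0, ← Finset.add_sum_erase _ _ (Finset.mem_univ 0)]; ring
  have h3 : ∑ z ∈ Finset.univ.erase (0 : Fin (n+2)), (A.updateRow z (Pi.single z 1)).det =
      ∑ z, (A.updateRow z (Pi.single z 1)).det - (A.updateRow 0 (Pi.single 0 1)).det := by
    rw [← Finset.add_sum_erase _ _ (Finset.mem_univ 0)]; ring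
  have hc : (Finset.univ.erase (0 : Fin (n+2))).card = n + 1 := by simp
  rw [Finset.mul_sum, ← Finset.add_sum_erase _ _ (Finset.mem_univ 0)]
  have : ∀ z ∈ Finset.univ.erase (0 : Fin (n+2)),
    b * (if z ≠ 0 ∧ β z ≠ 0 then (MB (n+1) a b (tau β z)).det else 0) =
    A.det + a * (A.updateRow 0 (Pi.single z 1)).det - a * (A.updateRow 0 (Pi.single 0 1)).det
      - a * (A.updateRow z (Pi.single z 1)).det - b * (A.updateRow z (Pi.single 0 1)).det
      + a * ((A.updateRow 0 (Pi.single 0 1)).updateRow z (Pi.single z 1)).det := by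
    intro z hz
    have hz0 : z ≠ 0 := Finset.ne_of_mem_erase hz
    rw [← det_tau' a b hab β z hz0 A hA]
    simp [hz0]
  rw [Finset.sum_congr rfl this]
  simp only [Finset.sum_add_distrib, Finset.sum_sub_distrib, ← Finset.mul_sum, h1, h2, h3,
    Finset.sum_const, hc, nsmul_eq_mul]
  push_cast
  simp only [ne_eq, not_true_eq_false, false_and, if_false, mul_zero, zero_add]
  ring

end detpart

end

section
open Equiv Matrix Polynomial

lemma derivative_det {n : ℕ} (A : Matrix (Fin n) (Fin n) ℝ[X]) :
    derivative A.det = ∑ z, (A.updateRow z (fun j => derivative (A z j))).det := by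
  have h : ∀ B : Matrix (Fin n) (Fin n) ℝ[X], B.det =
      ∑ σ : Perm (Fin n), ((Perm.sign σ : ℤ) : ℝ[X]) * ∏ i, B i (σ i) := by
    intro B; rw [← det_transpose, det_apply']; simp
  rw [h, derivative_sum]
  simp_rw [h]
  rw [Finset.sum_comm]
  refine Finset.sum_congr rfl fun σ _ => ?_
  rw [derivative_mul, derivative_intCast, zero_mul, zero_add, derivative_prod_finset, Finset.mul_sum]
  refine Finset.sum_congr rfl fun z _ => ?_
  congr 1
  rw [← Finset.mul_prod_erase _ _ (Finset.mem_univ z), updateRow_self, mul_comm]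
  congr 1
  refine Finset.prod_congr rfl fun i hi => ?_
  rw [updateRow_ne (Finset.ne_of_mem_erase hi)]

/-- the polynomial determinant -/
noncomputable def DP {n : ℕ} (β : Perm (Fin n)) : ℝ[X] := (MB n (1 - X : ℝ[X]) X β).det

/-- minor -/
noncomputable def mP {n : ℕ} (β : Perm (Fin (n+1))) : ℝ[X] :=
  ((MB (n+1) (1 - X : ℝ[X]) X β).updateRow 0 (Pi.single 0 1)).det

lemma row_deriv {n : ℕ} (β : Perm (Fin n)) (z : Fin n) :
    (X : ℝ[X]) • (fun j => derivative (MB n (1 - X : ℝ[X]) X β z j)) =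
      MB n (1 - X : ℝ[X]) X β z - Pi.single z 1 := by
  funext j
  simp only [Pi.smul_apply, Pi.sub_apply, MB_apply, Pi.single_apply, smul_eq_mul]
  split_ifs <;> simp

lemma X_deriv_DP {n : ℕ} (β : Perm (Fin n)) :
    X * derivative (DP β) = (n : ℝ[X]) * DP β -
      ∑ z, ((MB n (1 - X : ℝ[X]) X β).updateRow z (Pi.single z 1)).det := by
  unfold DP
  rw [derivative_det, Finset.mul_sum]
  simp_rw [← det_updateRow_smul, row_deriv, sub_eq_add_neg (MB n _ _ β _)]
  have : ∀ z : Fin n, - (Pi.single z 1 : Fin n → ℝ[X]) = (-1 : ℝ[X]) • Pi.single z 1 := by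
    intro z; simp
  simp_rw [this, det_updateRow_add, det_updateRow_smul, updateRow_eq_self,
    Finset.sum_add_distrib]
  simp [sub_eq_add_neg]

lemma X_deriv_mP {n : ℕ} (β : Perm (Fin (n+1))) :
    X * derivative (mP β) = (n : ℝ[X]) * mP β -
      ∑ z ∈ Finset.univ.erase 0, (((MB (n+1) (1 - X : ℝ[X]) X β).updateRow 0
        (Pi.single 0 1)).updateRow z (Pi.single z 1)).det := by
  unfold mP
  rw [derivative_det, ← Finset.add_sum_erase _ _ (Finset.mem_univ 0)]
  have h0 : (((MB (n+1) (1 - X : ℝ[X]) X β).updateRow 0 (Pi.single 0 1)).updateRow 0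
     (fun j => derivative (((MB (n+1) (1 - X : ℝ[X]) X β).updateRow 0 (Pi.single 0 1)) 0 j))).det = 0 := by
    apply det_eq_zero_of_row_eq_zero 0
    intro j
    rw [updateRow_self, updateRow_self, Pi.single_apply]
    split_ifs <;> simp
  rw [h0, zero_add, Finset.mul_sum]
  have : ∀ z ∈ Finset.univ.erase (0 : Fin (n+1)),
     X * (((MB (n+1) (1 - X : ℝ[X]) X β).updateRow 0 (Pi.single 0 1)).updateRow z
     (fun j => derivative (((MB (n+1) (1 - X : ℝ[X]) X β).updateRow 0 (Pi.single 0 1)) z j))).det =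
      ((MB (n+1) (1 - X : ℝ[X]) X β).updateRow 0 (Pi.single 0 1)).det
       - (((MB (n+1) (1 - X : ℝ[X]) X β).updateRow 0
        (Pi.single 0 1)).updateRow z (Pi.single z 1)).det := by
    intro z hz
    have hz := Finset.ne_of_mem_erase hz
    rw [← det_updateRow_smul, updateRow_ne hz, row_deriv]
    have e : MB (n+1) (1 - X : ℝ[X]) X β z = ((MB (n+1) (1 - X : ℝ[X]) X β).updateRow 0 (Pi.single 0 1)) z := by
      rw [updateRow_ne hz]
    have e2 : - (Pi.single z 1 : Fin (n+1) → ℝ[X]) = (-1 : ℝ[X]) • Pi.single z 1 := by simp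
    rw [e, sub_eq_add_neg _ (Pi.single z 1), e2, det_updateRow_add, det_updateRow_smul, updateRow_eq_self]
    ring
  rw [Finset.sum_congr rfl this, Finset.sum_sub_distrib]
  simp

lemma DP_rec {n : ℕ} (β : Perm (Fin (n+2))) :
    (∑ z, if z ≠ 0 ∧ β z ≠ 0 then DP (tau β z) else 0) =
      ((n : ℝ[X])+1) * DP β + derivative ((1 - X) * (DP β - mP β)) := by
  apply mul_left_cancel₀ (X_ne_zero (R := ℝ))
  have h := det_tau_sum (1 - X : ℝ[X]) X (by ring) β _ rfl
  have h1 := X_deriv_DP β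
  have h2 := X_deriv_mP β
  change _ * (∑ z, if z ≠ 0 ∧ β z ≠ 0 then DP (tau β z) else 0) = ((n : ℝ[X])+1) * DP β +
    (1 - X) * (DP β - mP β) - (1 - X) * ((n : ℝ[X])+1) * mP β - (1 - X) * (_ - mP β) -
    X * (DP β - mP β) + _ at h
  rw [h]
  simp only [derivative_mul, derivative_sub, derivative_X, derivative_one, mul_add]
  push_cast at h1 h2
  linear_combination (1 - X : ℝ[X]) * h2 - (1 - X : ℝ[X]) * h1

/-- integral over [0,1] -/
noncomputable def I01 (p : ℝ[X]) : ℝ := ∫ x in (0:ℝ)..1, p.eval x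

lemma I01_add (p q : ℝ[X]) : I01 (p + q) = I01 p + I01 q := by
  unfold I01
  simp only [eval_add]
  exact intervalIntegral.integral_add (p.continuous.intervalIntegrable _ _)
    (q.continuous.intervalIntegrable _ _)

lemma I01_sum {ι : Type*} (s : Finset ι) (f : ι → ℝ[X]) : I01 (∑ i ∈ s, f i) = ∑ i ∈ s, I01 (f i) := by
  unfold I01
  simp only [eval_finsetSum]
  exact intervalIntegral.integral_finsetSum fun i _ => ((f i).continuous.intervalIntegrable _ _)

lemma I01_deriv (p : ℝ[X]) : I01 (derivative p) = p.eval 1 - p.eval 0 := by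
  unfold I01
  exact intervalIntegral.integral_eq_sub_of_hasDerivAt (fun x _ => p.hasDerivAt x)
    ((derivative p).continuous.intervalIntegrable _ _)

lemma eval_DP {n : ℕ} (β : Perm (Fin n)) (x : ℝ) : (DP β).eval x = (MB n (1 - x) x β).det := by
  unfold DP
  rw [← coe_evalRingHom, RingHom.map_det]
  congr 1
  ext i j
  rw [RingHom.mapMatrix_apply, map_apply, MB_apply, MB_apply]
  split_ifs <;> simp

lemma DP_zero {n : ℕ} (β : Perm (Fin n)) : (DP β).eval 0 = 1 := by
  rw [eval_DP]
  have : MB n (1 - 0 : ℝ) 0 β = 1 := by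
    ext i j; simp [MB_apply, Matrix.one_apply, eq_comm]
  rw [this, det_one]

lemma mP_zero {n : ℕ} (β : Perm (Fin (n+1))) : (mP β).eval 0 = 1 := by
  unfold mP
  rw [← coe_evalRingHom, RingHom.map_det]
  have : ((evalRingHom (0:ℝ)).mapMatrix ((MB (n+1) (1 - X : ℝ[X]) X β).updateRow 0 (Pi.single 0 1))) = 1 := by
    ext i j
    by_cases h : i = 0
    · subst h
      simp only [RingHom.mapMatrix_apply, map_apply, updateRow_self, Pi.single_apply,
        Matrix.one_apply, apply_ite, map_one, map_zero]
      simp [eq_comm]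
    · rw [RingHom.mapMatrix_apply, map_apply, updateRow_ne h, MB_apply]
      rw [Matrix.one_apply]
      have hh : (j = i) ↔ (i = j) := eq_comm
      simp only [hh]
      split_ifs <;> simp
  rw [this, det_one]

instance : Subsingleton (Fin (0+1)) := inferInstanceAs (Subsingleton (Fin 1))

open Classical in
lemma NN_eq : ∀ (n : ℕ) (β : Perm (Fin (n+1))), (NN β : ℝ) = n.factorial * I01 (DP β)
  | 0, β => by
    have hβ : β = 1 := Equiv.ext fun x => Subsingleton.elim _ _
    have h1 : NN β = 1 := by
      unfold NN
      rw [Finset.filter_true_of_mem]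
      · simp
      · intro φ _
        constructor <;> (intro x y; rw [Subsingleton.elim x y])
    have h2 : ∀ x : ℝ, (DP β).eval x = 1 := by
      intro x; rw [eval_DP, det_fin_one, MB_apply]; simp [hβ]
    simp [h1, I01, h2]
  | n+1, β => by
    rw [NN_rec]
    push_cast
    have h := congrArg I01 (DP_rec β)
    rw [I01_sum, I01_add, I01_deriv] at h
    have e : I01 (((n:ℝ[X])+1) * DP β) = (n+1) * I01 (DP β) := by
      unfold I01; simp
    rw [e] at h
    simp only [eval_mul, eval_sub, eval_one, eval_X, sub_self, zero_mul, DP_zero, mP_zero, mul_zero,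
      add_zero] at h
    rw [Nat.factorial_succ]; push_cast
    rw [mul_comm ((n:ℝ)+1), mul_assoc, ← h, Finset.mul_sum]
    refine Finset.sum_congr rfl fun z _ => ?_
    split_ifs with hz
    · exact NN_eq n _
    · simp [I01]

end

section
open Equiv Matrix Polynomial

lemma hadamard {n : ℕ} (A : Matrix (Fin n) (Fin n) ℝ) :
    |A.det| ≤ ∏ i, Real.sqrt (∑ j, A i j ^ 2) := by
  have : Fact (Module.finrank ℝ (EuclideanSpace ℝ (Fin n)) = n) := ⟨by simp⟩
  let b := EuclideanSpace.basisFun (Fin n) ℝ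
  let o := b.toBasis.orientation
  let v : Fin n → EuclideanSpace ℝ (Fin n) := fun i => WithLp.toLp 2 (A i)
  have h := o.abs_volumeForm_apply_le v
  rw [o.volumeForm_robust' b v] at h
  have e : b.toBasis.det v = A.det := by
    rw [Module.Basis.det_apply, ← det_transpose]
    congr 1
  rw [e] at h
  refine h.trans (le_of_eq ?_)
  refine Finset.prod_congr rfl fun i _ => ?_
  simp [v, EuclideanSpace.norm_eq]

lemma DP_bound {n : ℕ} (β : Perm (Fin n)) (x : ℝ) :
    (DP β).eval x ≤ Real.exp (-(β.support.card * (x * (1 - x)))) := by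
  rw [eval_DP]
  refine (le_abs_self _).trans ((hadamard _).trans ?_)
  have h : ∀ i, Real.sqrt (∑ j, MB n (1 - x) x β i j ^ 2) ≤
      if i ∈ β.support then Real.exp (-(x * (1 - x))) else 1 := by
    intro i
    split_ifs with hi
    · have hi : β i ≠ i := Perm.mem_support.mp hi
      have e : ∀ j, MB n (1 - x) x β i j ^ 2 =
          (1 - x)^2 * (if j = i then 1 else 0) + x^2 * (if j = β i then 1 else 0) := by
        intro j
        rw [MB_apply]
        by_cases h1 : j = i
        · have : i ≠ β i := Ne.symm hi
          simp [h1, this]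
        · simp [h1]
      have e2 : ∑ j, MB n (1 - x) x β i j ^ 2 = (1-x)^2 + x^2 := by
        simp [e, Finset.sum_add_distrib]
      rw [e2]
      rw [Real.sqrt_le_left (Real.exp_pos _).le, ← Real.exp_nat_mul]
      have := Real.add_one_le_exp (((2:ℕ):ℝ) * -(x * (1 - x)))
      push_cast at this ⊢
      nlinarith
    · have hi : β i = i := by simpa using hi
      have e : ∀ j, MB n (1 - x) x β i j ^ 2 = (if j = i then 1 else 0) := by
        intro j
        rw [MB_apply, hi]
        split_ifs <;> simp
      simp [e]
  refine (Finset.prod_le_prod (fun i _ => Real.sqrt_nonneg _) (fun i _ => h i)).trans ?_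
  rw [Finset.prod_ite_mem, Finset.univ_inter, Finset.prod_const, ← Real.exp_nat_mul]
  simp

/-- bound for correlations -/
lemma I01_bound {n : ℕ} (β : Perm (Fin n)) (s η : ℝ) (hs : 0 < s) (hsβ : s ≤ β.support.card)
    (hη0 : 0 < η) (hη : η ≤ 1/2) :
    I01 (DP β) ≤ 2 / (s * (1 - η)) + Real.exp (-(s * η / 2)) := by
  set c := s * (1 - η) with hc
  have hcpos : 0 < c := by rw [hc]; apply mul_pos hs; linarith
  have hb : ∀ x ∈ Set.Icc (0:ℝ) 1, (DP β).eval x ≤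
      Real.exp (-(s * η / 2)) + (Real.exp (-(c * x)) + Real.exp (-(c * (1 - x)))) := by
    intro x ⟨h0, h1⟩
    refine (DP_bound β x).trans ?_
    have hmono : Real.exp (-(β.support.card * (x * (1 - x)))) ≤ Real.exp (-(s * (x * (1 - x)))) := by
      apply Real.exp_le_exp.mpr
      have : 0 ≤ x * (1 - x) := mul_nonneg h0 (by linarith)
      nlinarith
    refine hmono.trans ?_
    have p1 := Real.exp_pos (-(s * η / 2))
    have p2 := Real.exp_pos (-(c * x))
    have p3 := Real.exp_pos (-(c * (1 - x)))
    by_cases hx : x ≤ η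
    · have : Real.exp (-(s * (x * (1 - x)))) ≤ Real.exp (-(c * x)) := by
        apply Real.exp_le_exp.mpr
        have : x * (1 - η) ≤ x * (1 - x) := by nlinarith
        rw [hc]; nlinarith
      linarith
    · by_cases hx' : 1 - x ≤ η
      · have : Real.exp (-(s * (x * (1 - x)))) ≤ Real.exp (-(c * (1 - x))) := by
          apply Real.exp_le_exp.mpr
          have : (1 - x) * (1 - η) ≤ x * (1 - x) := by nlinarith
          rw [hc]; nlinarith
        linarith
      · have : Real.exp (-(s * (x * (1 - x)))) ≤ Real.exp (-(s * η / 2)) := by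
          apply Real.exp_le_exp.mpr
          have : η / 2 ≤ x * (1 - x) := by
            push Not at hx hx'
            nlinarith
          nlinarith
        linarith
  have hI01 : I01 (DP β) ≤ ∫ x in (0:ℝ)..1, (Real.exp (-(s * η / 2)) + (Real.exp (-(c * x)) + Real.exp (-(c * (1 - x))))) := by
    unfold I01
    apply intervalIntegral.integral_mono_on (by norm_num) ((DP β).continuous.intervalIntegrable _ _)
    · apply Continuous.intervalIntegrable; fun_prop
    · exact hb
  have i1 : ∫ x in (0:ℝ)..1, Real.exp (-(c * x)) = (1 - Real.exp (-c)) / c := by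
    have h : ∀ x ∈ Set.uIcc (0:ℝ) 1, HasDerivAt (fun x => - Real.exp (-(c * x)) / c) (Real.exp (-(c * x))) x := by
      intro x _
      have h1 : HasDerivAt (fun x : ℝ => -c * x) (-c) x := by
        simpa using (hasDerivAt_id x).const_mul (-c)
      have h2 := (h1.exp.neg).div_const c
      have e1 : (fun x => - Real.exp (-(c * x)) / c) = (fun x => (-fun x => Real.exp (-c * x)) x / c) := by
        funext y; simp
      rw [e1]
      have e2 : -(Real.exp (-c * x) * -c) / c = Real.exp (-(c * x)) := by
        rw [neg_mul]; field_simp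
      rw [e2] at h2
      exact h2
    rw [intervalIntegral.integral_eq_sub_of_hasDerivAt h (by apply Continuous.intervalIntegrable; fun_prop)]
    simp; ring
  have i2 : ∫ x in (0:ℝ)..1, Real.exp (-(c * (1 - x))) = (1 - Real.exp (-c)) / c := by
    rw [← i1]
    have := intervalIntegral.integral_comp_sub_left (a := 0) (b := 1) (fun x : ℝ => Real.exp (-(c * x))) 1
    simpa using this
  rw [intervalIntegral.integral_add (by simp) (by apply Continuous.intervalIntegrable; fun_prop),
    intervalIntegral.integral_add (by apply Continuous.intervalIntegrable; fun_prop) (by apply Continuous.intervalIntegrable; fun_prop), i1, i2] at hI01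
  simp only [intervalIntegral.integral_const, sub_zero, one_smul] at hI01
  have : (1 - Real.exp (-c)) / c ≤ 1 / c := by
    gcongr
    have := Real.exp_pos (-c); linarith
  have e : 2 / c = 1 / c + 1 / c := by ring
  rw [e]
  linarith

lemma cyc_isCycleOn {n : ℕ} {σ : Perm (Fin n)} (h : cyc σ) (hn : 2 ≤ n) :
    Perm.sign σ = -(-1) ^ n := by
  have : NeZero n := ⟨by omega⟩
  have hsup : σ.support = Finset.univ := by
    ext x
    simp only [Perm.mem_support, Finset.mem_univ, iff_true]
    intro hx
    have : Nontrivial (Fin n) := Fin.nontrivial_iff_two_le.mpr hn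
    obtain ⟨y, hy⟩ := exists_ne x
    exact hy ((h x y).eq_of_left hx).symm
  have hcyc : σ.IsCycle := by
    refine ⟨0, ?_, fun y _ => h 0 y⟩
    have : (0 : Fin n) ∈ σ.support := by rw [hsup]; simp
    exact Perm.mem_support.mp this
  rw [hcyc.sign, hsup]; simp

open Classical in
lemma NN_odd {n : ℕ} (hn : 2 ≤ n) (β : Perm (Fin n)) (h : Perm.sign β ≠ 1) : NN β = 0 := by
  unfold NN
  rw [Finset.card_eq_zero, Finset.filter_eq_empty_iff]
  rintro φ _ ⟨h1, h2⟩
  have e1 := cyc_isCycleOn h1 hn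
  have e2 := cyc_isCycleOn h2 hn
  rw [map_mul, e1] at e2
  apply h
  exact mul_eq_right.mp e2

open Classical in
lemma card_cyc (n : ℕ) : ((Finset.univ.filter fun φ : Perm (Fin (n+1)) => cyc φ).card) = n.factorial := by
  have h := NN_eq n 1
  have h2 : NN (1 : Perm (Fin (n+1))) = (Finset.univ.filter fun φ : Perm (Fin (n+1)) => cyc φ).card := by
    unfold NN; simp
  have h3 : ∀ x : ℝ, (DP (1 : Perm (Fin (n+1)))).eval x = 1 := by
    intro x
    rw [eval_DP]
    have : MB (n+1) (1 - x) x 1 = 1 := by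
      ext i j; rw [MB_apply, Matrix.one_apply]
      have hh : (j = i) ↔ (i = j) := eq_comm
      simp only [hh, Perm.one_apply]
      split_ifs <;> simp
    rw [this, det_one]
  rw [h2] at h
  simp [I01, h3] at h
  exact_mod_cast h

end

section
open Equiv

section avg
variable {α β γ : Type*} [Fintype α] [Fintype β] [Fintype γ]

/-- average -/
noncomputable def Av (f : α → ℝ) : ℝ := (∑ x, f x) / Fintype.card α

open Classical in
/-- indicator -/
noncomputable def ind (p : Prop) : ℝ := if p then 1 else 0

/-- uniform probability -/
noncomputable def Pr (p : α → Prop) : ℝ := Av fun x => ind (p x)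

lemma ind_true {p : Prop} (h : p) : ind p = 1 := by simp [ind, h]
lemma ind_false {p : Prop} (h : ¬ p) : ind p = 0 := by simp [ind, h]
lemma ind_nonneg (p : Prop) : 0 ≤ ind p := by unfold ind; split_ifs <;> norm_num
lemma ind_le_one (p : Prop) : ind p ≤ 1 := by unfold ind; split_ifs <;> norm_num
lemma ind_mono {p q : Prop} (h : p → q) : ind p ≤ ind q := by
  by_cases hp : p
  · rw [ind_true hp, ind_true (h hp)]
  · rw [ind_false hp]; exact ind_nonneg q
lemma ind_and (p q : Prop) : ind (p ∧ q) = ind p * ind q := by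
  by_cases hp : p <;> by_cases hq : q <;> simp [ind, hp, hq]
lemma ind_or_le (p q : Prop) : ind (p ∨ q) ≤ ind p + ind q := by
  by_cases hp : p <;> by_cases hq : q <;> simp [ind, hp, hq]
lemma ind_not (p : Prop) : ind (¬ p) = 1 - ind p := by
  by_cases hp : p <;> simp [ind, hp]

lemma Av_mono {f g : α → ℝ} (h : ∀ x, f x ≤ g x) : Av f ≤ Av g := by
  unfold Av
  exact div_le_div_of_nonneg_right (Finset.sum_le_sum fun x _ => h x) (Nat.cast_nonneg _)
lemma Av_nonneg {f : α → ℝ} (h : ∀ x, 0 ≤ f x) : 0 ≤ Av f :=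
  div_nonneg (Finset.sum_nonneg fun x _ => h x) (Nat.cast_nonneg _)
lemma Av_add (f g : α → ℝ) : Av (fun x => f x + g x) = Av f + Av g := by
  unfold Av; rw [Finset.sum_add_distrib, add_div]
lemma Av_sub (f g : α → ℝ) : Av (fun x => f x - g x) = Av f - Av g := by
  unfold Av; rw [Finset.sum_sub_distrib, sub_div]
lemma Av_sum {ι : Type*} (s : Finset ι) (f : ι → α → ℝ) :
    Av (fun x => ∑ i ∈ s, f i x) = ∑ i ∈ s, Av (f i) := by
  unfold Av; rw [Finset.sum_comm, Finset.sum_div]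
lemma Av_mul_left (c : ℝ) (f : α → ℝ) : Av (fun x => c * f x) = c * Av f := by
  unfold Av; rw [← Finset.mul_sum, mul_div_assoc]
lemma Av_mul_right (c : ℝ) (f : α → ℝ) : Av (fun x => f x * c) = Av f * c := by
  unfold Av; rw [← Finset.sum_mul, div_mul_eq_mul_div]
lemma Av_const [Nonempty α] (c : ℝ) : Av (fun _ : α => c) = c := by
  unfold Av
  rw [Finset.sum_const, nsmul_eq_mul, Finset.card_univ, mul_comm]
  exact mul_div_cancel_right₀ _ (Nat.cast_ne_zero.mpr Fintype.card_ne_zero)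
lemma Av_le_const [Nonempty α] {f : α → ℝ} {c : ℝ} (h : ∀ x, f x ≤ c) : Av f ≤ c := by
  rw [← Av_const (α := α) c]; exact Av_mono h
lemma Av_equiv (e : α ≃ β) (f : β → ℝ) : Av (fun x => f (e x)) = Av f := by
  unfold Av; rw [Equiv.sum_comp e, Fintype.card_congr e]
lemma Av_prod (f : α × β → ℝ) : Av f = Av fun a => Av fun b => f (a, b) := by
  unfold Av
  rw [Fintype.sum_prod_type, Fintype.card_prod, ← Finset.sum_div, div_div, Nat.cast_mul, mul_comm]
lemma Av_comm (f : α → β → ℝ) : (Av fun a => Av fun b => f a b) = Av fun b => Av fun a => f a b := by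
  rw [← Av_prod (fun p : α × β => f p.1 p.2), ← Av_equiv (Equiv.prodComm β α), Av_prod]; rfl
lemma Av_fst [Nonempty β] (f : α → ℝ) : Av (fun p : α × β => f p.1) = Av f := by
  rw [Av_prod]; simp only [Av_const]
lemma Av_snd [Nonempty α] (f : β → ℝ) : Av (fun p : α × β => f p.2) = Av f := by
  rw [Av_prod]; simp only [Av_const]

lemma Pr_mono {p q : α → Prop} (h : ∀ x, p x → q x) : Pr p ≤ Pr q :=
  Av_mono fun x => ind_mono (h x)
lemma Pr_nonneg (p : α → Prop) : 0 ≤ Pr p := Av_nonneg fun _ => ind_nonneg _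
lemma Pr_le_one (p : α → Prop) : Pr p ≤ 1 := by
  unfold Pr Av
  refine div_le_one_of_le₀ ?_ (Nat.cast_nonneg _)
  refine (Finset.sum_le_sum fun x _ => ind_le_one (p x)).trans ?_
  simp
lemma Pr_or_le (p q : α → Prop) : Pr (fun x => p x ∨ q x) ≤ Pr p + Pr q := by
  unfold Pr; rw [← Av_add]; exact Av_mono fun x => ind_or_le _ _
lemma Pr_not [Nonempty α] (p : α → Prop) : Pr (fun x => ¬ p x) = 1 - Pr p := by
  unfold Pr; simp only [ind_not]; rw [Av_sub, Av_const]
lemma Pr_exists_le {ι : Type*} (s : Finset ι) (p : ι → α → Prop) :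
    Pr (fun x => ∃ i ∈ s, p i x) ≤ ∑ i ∈ s, Pr (p i) := by
  unfold Pr; rw [← Av_sum]
  refine Av_mono fun x => ?_
  by_cases h : ∃ i ∈ s, p i x
  · rw [ind_true h]
    obtain ⟨i, hi, hp⟩ := h
    rw [← ind_true hp]
    exact Finset.single_le_sum (f := fun i => ind (p i x)) (fun i _ => ind_nonneg _) hi
  · rw [ind_false h]; exact Finset.sum_nonneg fun i _ => ind_nonneg _
lemma Pr_equiv (e : α ≃ β) (p : β → Prop) : Pr (fun x => p (e x)) = Pr p :=
  Av_equiv e (fun y => ind (p y))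
lemma Pr_prod (p : α × β → Prop) : Pr p = Av fun a => Pr fun b => p (a, b) := Av_prod _
lemma Pr_markov {f : α → ℝ} (h : ∀ x, 0 ≤ f x) {t : ℝ} (ht : 0 < t) :
    Pr (fun x => t ≤ f x) ≤ Av f / t := by
  rw [le_div_iff₀ ht, Pr, ← Av_mul_right]
  refine Av_mono fun x => ?_
  by_cases hx : t ≤ f x
  · rw [ind_true hx]; linarith
  · rw [ind_false hx]; simpa using h x

/-- Cauchy–Schwarz -/
lemma Pr_pos_ge (X : α → ℝ) : (Av X) ^ 2 ≤ Pr (fun x => X x ≠ 0) * Av (fun x => X x ^ 2) := by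
  unfold Pr Av
  rw [div_pow, div_mul_div_comm, ← sq]
  gcongr
  have h := Finset.sum_mul_sq_le_sq_mul_sq Finset.univ (fun x => ind (X x ≠ 0)) X
  have e1 : ∀ x, ind (X x ≠ 0) * X x = X x := by
    intro x; by_cases hx : X x = 0 <;> simp [ind, hx]
  have e2 : ∀ x, ind (X x ≠ 0) ^ 2 = ind (X x ≠ 0) := by
    intro x; by_cases hx : X x = 0 <;> simp [ind, hx]
  simpa only [e1, e2] using h

end avg

lemma Pr_cyc {n : ℕ} (M : Perm (Fin (n+1))) :
    Pr (fun φ : Perm (Fin (n+1)) => cyc (φ * M)) = 1 / (n+1) := by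
  rw [show (fun φ : Perm (Fin (n+1)) => cyc (φ * M)) = fun φ => (fun ψ => cyc ψ) (Equiv.mulRight M φ) from rfl,
    Pr_equiv (Equiv.mulRight M) (fun ψ => cyc ψ)]
  unfold Pr Av ind
  rw [Finset.sum_boole, card_cyc, Fintype.card_perm, Fintype.card_fin, Nat.factorial_succ]
  push_cast
  have : (n.factorial : ℝ) ≠ 0 := by positivity
  field_simp

lemma Pr_cyc2 {n : ℕ} (M M' : Perm (Fin (n+1))) :
    Pr (fun φ : Perm (Fin (n+1)) => cyc (φ * M) ∧ cyc (φ * M')) = NN (M⁻¹ * M') / (n+1).factorial := by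
  have : (fun φ : Perm (Fin (n+1)) => cyc (φ * M) ∧ cyc (φ * M')) =
    fun φ => (fun ψ => cyc ψ ∧ cyc (M⁻¹ * M' * ψ)) (Equiv.mulRight M φ) := by
    funext φ
    simp only [Equiv.coe_mulRight]
    have h1 : M⁻¹ * M' * (φ * M) = (M⁻¹ * M') * (φ * M') * (M⁻¹ * M')⁻¹ := by group
    have h2 : φ * M' = (M⁻¹ * M')⁻¹ * (M⁻¹ * M' * (φ * M)) * ((M⁻¹ * M')⁻¹)⁻¹ := by group
    apply propext
    constructor
    · rintro ⟨a, b⟩; refine ⟨a, ?_⟩; rw [h1]; exact cyc_conj _ _ b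
    · rintro ⟨a, b⟩; refine ⟨a, ?_⟩; rw [h2]; exact cyc_conj _ _ b
  rw [this, Pr_equiv (Equiv.mulRight M) (fun ψ => cyc ψ ∧ cyc (M⁻¹ * M' * ψ))]
  unfold Pr Av ind NN
  rw [Finset.sum_boole, Fintype.card_perm, Fintype.card_fin]
  congr!

lemma Pr_cyc2_le {n : ℕ} (M M' : Perm (Fin (n+1))) (U : ℝ) (h : I01 (DP (M⁻¹ * M')) ≤ U) :
    Pr (fun φ : Perm (Fin (n+1)) => cyc (φ * M) ∧ cyc (φ * M')) ≤ U / (n+1) := by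
  rw [Pr_cyc2, NN_eq, Nat.factorial_succ]
  push_cast
  have : (n.factorial : ℝ) ≠ 0 := by positivity
  rw [mul_comm ((n:ℝ)+1), mul_div_mul_left _ _ this]
  gcongr

lemma Pr_cyc2_odd {n : ℕ} (hn : 1 ≤ n) (M M' : Perm (Fin (n+1))) (h : Perm.sign M ≠ Perm.sign M') :
    Pr (fun φ : Perm (Fin (n+1)) => cyc (φ * M) ∧ cyc (φ * M')) = 0 := by
  rw [Pr_cyc2, NN_odd (by omega)]
  · simp
  · rw [map_mul, map_inv]
    intro h2
    exact h (inv_mul_eq_one.mp h2)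

open Classical in
/-- Second moment argument. -/
lemma second_moment {P : Type*} [Fintype P] {n : ℕ} (hn : 1 ≤ n) (G : Finset P)
    (M : P → Bool → Perm (Fin (n+1)))
    (hsign : ∀ b ∈ G, Perm.sign (M b false) ≠ Perm.sign (M b true))
    (Bad : P → P → Prop) (U κ : ℝ) (hU : 0 ≤ U)
    (hgood : ∀ b ∈ G, ∀ b' ∈ G, ¬ Bad b b' → ∀ e e', I01 (DP ((M b e)⁻¹ * M b' e')) ≤ U)
    (hP : 0 < Fintype.card P) (hG : (Fintype.card P : ℝ) ≤ 2 * G.card)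
    (hBad : Av (fun b : P => Av fun b' : P => ind (b ∈ G ∧ b' ∈ G ∧ Bad b b')) ≤ κ) :
    1 ≤ Pr (fun φ : Perm (Fin (n+1)) => ∃ b ∈ G, ∃ e, cyc (φ * M b e)) *
      ((n+1) * U / 2 + 4 * (n+1) * κ) := by
  set X : Perm (Fin (n+1)) → ℝ := fun φ => ∑ b ∈ G, ∑ e, ind (cyc (φ * M b e)) with hX
  have hPr : Pr (fun φ => X φ ≠ 0) ≤ Pr (fun φ : Perm (Fin (n+1)) => ∃ b ∈ G, ∃ e, cyc (φ * M b e)) := by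
    apply Pr_mono
    intro φ h
    by_contra hc
    push Not at hc
    apply h
    rw [hX]
    refine Finset.sum_eq_zero fun b hb => Finset.sum_eq_zero fun e _ => ind_false (hc b hb e)
  have hn1 : (0:ℝ) < n + 1 := by positivity
  have hE : Av X = 2 * G.card / (n+1) := by
    rw [hX, Av_sum]
    simp only [Av_sum]
    have : ∀ b e, Av (fun φ : Perm (Fin (n+1)) => ind (cyc (φ * M b e))) = 1 / (n+1) :=
      fun b e => Pr_cyc (M b e)
    simp only [this]
    simp; ring
  have hE2 : Av (fun φ => X φ ^ 2) = ∑ b ∈ G, ∑ b' ∈ G, ∑ e, ∑ e',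
      Pr (fun φ : Perm (Fin (n+1)) => cyc (φ * M b e) ∧ cyc (φ * M b' e')) := by
    have : ∀ φ, X φ ^ 2 = ∑ b ∈ G, ∑ b' ∈ G, ∑ e, ∑ e', ind (cyc (φ * M b e) ∧ cyc (φ * M b' e')) := by
      intro φ
      rw [hX, sq]
      simp only [Finset.sum_mul_sum, ind_and]
    simp only [this, Av_sum]; rfl
  have hterm : ∀ b ∈ G, ∀ b' ∈ G, ∑ e, ∑ e',
      Pr (fun φ : Perm (Fin (n+1)) => cyc (φ * M b e) ∧ cyc (φ * M b' e')) ≤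
      2 * U / (n+1) + 4 / (n+1) * ind (b ∈ G ∧ b' ∈ G ∧ Bad b b') := by
    intro b hb b' hb'
    by_cases hbad : Bad b b'
    · rw [ind_true ⟨hb, hb', hbad⟩]
      have : ∀ e e', Pr (fun φ : Perm (Fin (n+1)) => cyc (φ * M b e) ∧ cyc (φ * M b' e')) ≤ 1 / (n+1) := by
        intro e e'
        rw [← Pr_cyc (M b e)]; exact Pr_mono fun φ h => h.1
      have h4 : ∑ e : Bool, ∑ e' : Bool, Pr (fun φ : Perm (Fin (n+1)) => cyc (φ * M b e) ∧ cyc (φ * M b' e')) ≤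
         ∑ e : Bool, ∑ e' : Bool, (1:ℝ) / (n+1) := Finset.sum_le_sum fun e _ => Finset.sum_le_sum fun e' _ => this e e'
      simp only [Fintype.sum_bool] at h4 ⊢
      have : 0 ≤ 2 * U / (n+1) := by positivity
      have e : (4:ℝ) / (n+1) * 1 = 1/(n+1) + 1/(n+1) + (1/(n+1) + 1/(n+1)) := by ring
      linarith
    · have hu := fun e e' => Pr_cyc2_le _ _ U (hgood b hb b' hb' hbad e e')
      have ho := fun e e' => Pr_cyc2_odd hn (M b e) (M b' e')
      have s1 := hsign b hb
      have s2 := hsign b' hb'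
      have hr : 0 ≤ 4 / ((n:ℝ)+1) * ind (b ∈ G ∧ b' ∈ G ∧ Bad b b') :=
        mul_nonneg (by positivity) (ind_nonneg _)
      have e : 2 * U / (n+1) = U / (n+1) + U / (n+1) := by ring
      have hUn : 0 ≤ U / ((n:ℝ)+1) := by positivity
      simp only [Fintype.sum_bool]
      by_cases h1 : Perm.sign (M b false) = Perm.sign (M b' false)
      · have a1 := ho false true (by rw [h1]; exact s2)
        have a2 := ho true false (by rw [← h1]; exact s1.symm)
        rw [a1, a2]
        linarith [hu true true, hu false false]
      · have a1 := ho false false h1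
        have h2 : Perm.sign (M b true) ≠ Perm.sign (M b' true) := by
          rcases Int.units_eq_one_or (Perm.sign (M b true)) with h | h <;>
          rcases Int.units_eq_one_or (Perm.sign (M b false)) with h' | h' <;>
          rcases Int.units_eq_one_or (Perm.sign (M b' true)) with h'' | h'' <;>
          rcases Int.units_eq_one_or (Perm.sign (M b' false)) with h''' | h''' <;>
          simp_all
        have a2 := ho true true h2
        rw [a1, a2]
        linarith [hu true false, hu false true]
  have hPc : (0:ℝ) < Fintype.card P := by exact_mod_cast hP
  have hGpos : (0:ℝ) < G.card := by linarith
  have hsum : ∑ b ∈ G, ∑ b' ∈ G, ind (b ∈ G ∧ b' ∈ G ∧ Bad b b') ≤ κ * (Fintype.card P)^2 := by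
    have h1 : ∑ b ∈ G, ∑ b' ∈ G, ind (b ∈ G ∧ b' ∈ G ∧ Bad b b') ≤
        ∑ b, ∑ b', ind (b ∈ G ∧ b' ∈ G ∧ Bad b b') := by
      refine (Finset.sum_le_sum fun b _ => Finset.sum_le_sum_of_subset_of_nonneg (Finset.subset_univ G)
        fun _ _ _ => ind_nonneg _).trans (Finset.sum_le_sum_of_subset_of_nonneg (Finset.subset_univ G)
        fun _ _ _ => Finset.sum_nonneg fun _ _ => ind_nonneg _)
    refine h1.trans ?_
    unfold Av at hBad
    rw [← Finset.sum_div, div_div, div_le_iff₀ (by positivity)] at hBad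
    rw [sq]; exact hBad
  have hE2le : Av (fun φ => X φ ^ 2) ≤ 2 * U / (n+1) * G.card^2 + 4 / (n+1) * (κ * (2 * G.card)^2) := by
    have hκ : 0 ≤ κ := le_trans (Av_nonneg fun _ => Av_nonneg fun _ => ind_nonneg _) hBad
    rw [hE2]
    refine (Finset.sum_le_sum fun b hb => Finset.sum_le_sum fun b' hb' => hterm b hb b' hb').trans ?_
    simp only [Finset.sum_add_distrib, ← Finset.mul_sum, Finset.sum_const, nsmul_eq_mul]
    have h3 : κ * (Fintype.card P : ℝ)^2 ≤ κ * (2 * G.card)^2 := by gcongr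
    have h4 := mul_le_mul_of_nonneg_left (hsum.trans h3) (show 0 ≤ 4 / ((n:ℝ)+1) by positivity)
    have : (G.card : ℝ) * (G.card * (2 * U / (n+1))) = 2 * U / (n+1) * G.card^2 := by ring
    linarith
  have hcs := Pr_pos_ge X
  rw [hE] at hcs
  have h5 : (2 * (G.card:ℝ) / (n+1))^2 ≤ Pr (fun φ : Perm (Fin (n+1)) => ∃ b ∈ G, ∃ e, cyc (φ * M b e)) *
     (2 * U / (n+1) * G.card^2 + 4 / (n+1) * (κ * (2 * G.card)^2)) := by
    refine hcs.trans ?_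
    refine mul_le_mul hPr hE2le (Av_nonneg fun _ => sq_nonneg _) (Pr_nonneg _)
  set p := Pr (fun φ : Perm (Fin (n+1)) => ∃ b ∈ G, ∃ e, cyc (φ * M b e)) with hp
  have e6 : p * (2 * U / (n+1) * G.card^2 + 4 / (n+1) * (κ * (2 * G.card)^2)) =
    (2 * (G.card:ℝ) / (n+1))^2 * (p * ((n+1) * U / 2 + 4 * (n+1) * κ)) := by
    field_simp
  rw [e6] at h5
  have hpos : 0 < (2 * (G.card:ℝ) / (n+1))^2 := by positivity
  exact (le_mul_iff_one_le_right hpos).mp h5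

end

section
open Equiv

section avgpi
variable {X Y Z : Type*} [Fintype X] [Fintype Y] [Fintype Z] [DecidableEq X] [DecidableEq Z]

lemma Av_pi_prod (h : X → Y → ℝ) :
    Av (fun f : X → Y => ∏ x, h x (f x)) = ∏ x, Av (h x) := by
  unfold Av
  rw [Finset.prod_div_distrib]
  congr 1
  · rw [Finset.prod_univ_sum]; simp
  · simp

lemma Av_inj [Nonempty Y] (ι : Z → X) (hι : Function.Injective ι) (F : (Z → Y) → ℝ) :
    Av (fun f : X → Y => F (f ∘ ι)) = Av F := by
  classical
  let e0 : (Z ⊕ ((Set.range ι)ᶜ : Set X)) ≃ X :=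
    (Equiv.sumCongr (Equiv.ofInjective ι hι) (Equiv.refl _)).trans (Equiv.Set.sumCompl _)
  let e : (X → Y) ≃ (Z → Y) × (((Set.range ι)ᶜ : Set X) → Y) :=
    (Equiv.arrowCongr e0.symm (Equiv.refl Y)).trans (Equiv.sumArrowEquivProdArrow _ _ _)
  have h : ∀ f : X → Y, (e f).1 = f ∘ ι := by
    intro f; funext z; simp [e, e0]
  rw [← Av_fst (β := (((Set.range ι)ᶜ : Set X) → Y)) F, ← Av_equiv e]
  simp only [h]

lemma Av_inj_prod [Nonempty Y] (ι : Z → X) (hι : Function.Injective ι) (h : Z → Y → ℝ) :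
    Av (fun f : X → Y => ∏ z, h z (f (ι z))) = ∏ z, Av (h z) := by
  rw [← Av_pi_prod, ← Av_inj ι hι]; rfl

lemma Av_pi_prod_on [Nonempty Y] (S : Finset X) (h : X → Y → ℝ) :
    Av (fun f : X → Y => ∏ x ∈ S, h x (f x)) = ∏ x ∈ S, Av (h x) := by
  have := Av_inj_prod (Y := Y) (fun z : S => (z : X)) Subtype.val_injective (fun z => h z)
  rw [Finset.prod_coe_sort S (fun x => Av (h x))] at this
  rw [← this]
  congr 1; funext f
  rw [Finset.prod_coe_sort S (fun x => h x (f x))]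

lemma Av_resample [Nonempty Y] (F : (X → Y) → ℝ) (x0 : X) :
    Av F = Av fun f => Av fun y => F (Function.update f x0 y) := by
  have hs : ∀ f : X → Y, F f = F (Function.update f x0 (f x0)) := by
    intro f; rw [Function.update_eq_self]
  -- split coordinates
  have h1 := Equiv.piSplitAt x0 (fun _ : X => Y)
  have key : ∀ H : (X → Y) → ℝ, Av H = Av fun p : Y × (∀ j : {j // j ≠ x0}, Y) =>
      H ((Equiv.piSplitAt x0 (fun _ : X => Y)).symm p) := by
    intro H; exact (Av_equiv (Equiv.piSplitAt x0 (fun _ : X => Y)).symm H).symm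
  rw [key F, key]
  rw [Av_prod, Av_prod, Av_comm]
  have : ∀ (a : Y) (b : ∀ j : {j // j ≠ x0}, Y) (y : Y),
      Function.update ((Equiv.piSplitAt x0 (fun _ : X => Y)).symm (a, b)) x0 y =
       (Equiv.piSplitAt x0 (fun _ : X => Y)).symm (y, b) := by
    intro a b y
    funext j
    by_cases hj : j = x0
    · subst hj; simp [Equiv.piSplitAt]
    · simp [Equiv.piSplitAt, hj]
  simp only [this]
  rw [Av_const]

end avgpi
section avgpi2
variable {X : Type*} [Fintype X]
lemma ind_forall (S : Finset X) (p : X → Prop) : ind (∀ x ∈ S, p x) = ∏ x ∈ S, ind (p x) := by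
  by_cases h : ∀ x ∈ S, p x
  · rw [ind_true h, Finset.prod_eq_one]; intro x hx; exact ind_true (h x hx)
  · rw [ind_false h]
    push Not at h
    obtain ⟨x, hx, hp⟩ := h
    exact (Finset.prod_eq_zero hx (ind_false hp)).symm

lemma Pr_mem (B : Finset X) : Pr (fun x : X => x ∈ B) = B.card / Fintype.card X := by
  classical
  have h : ∀ x, ind (x ∈ B) = if x ∈ B then (1:ℝ) else 0 := by
    intro x; by_cases hx : x ∈ B <;> simp [ind, hx]
  simp only [Pr, Av, h, Finset.sum_ite_mem]
  simp

lemma Pr_eq_const (y : X) : Pr (fun x : X => x = y) = 1 / Fintype.card X := by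
  have := Pr_mem ({y} : Finset X)
  simpa using this

end avgpi2

section hall
variable {X Y : Type*} [Fintype X] [Fintype Y]

/-- at most one exception -/
def almostIn {k : ℕ} (h : Fin k → Y) (B : Finset Y) : Prop := ∃ i0, ∀ i, i ≠ i0 → h i ∈ B

lemma Pr_almostIn [Nonempty Y] (k : ℕ) (B : Finset Y) :
    Pr (fun h : Fin k → Y => almostIn h B) ≤ k * ((B.card : ℝ) / Fintype.card Y) ^ (k-1) := by
  classical
  have h1 : Pr (fun h : Fin k → Y => almostIn h B) ≤
      Pr (fun h : Fin k → Y => ∃ i0 ∈ Finset.univ, ∀ i ∈ Finset.univ.erase i0, h i ∈ B) := by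
    apply Pr_mono
    rintro h ⟨i0, hi⟩
    exact ⟨i0, Finset.mem_univ _, fun i hi' => hi i (Finset.ne_of_mem_erase hi')⟩
  refine h1.trans ((Pr_exists_le _ _).trans ?_)
  have : ∀ i0 : Fin k, Pr (fun h : Fin k → Y => ∀ i ∈ Finset.univ.erase i0, h i ∈ B) =
      ((B.card : ℝ) / Fintype.card Y) ^ (k-1) := by
    intro i0
    unfold Pr
    simp only [ind_forall]
    rw [Av_pi_prod_on (Finset.univ.erase i0) (fun _ y => ind (y ∈ B))]
    have : Av (fun y : Y => ind (y ∈ B)) = (B.card : ℝ) / Fintype.card Y := Pr_mem B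
    rw [this, Finset.prod_const, Finset.card_erase_of_mem (Finset.mem_univ _), Finset.card_univ, Fintype.card_fin]
  rw [Finset.sum_congr rfl fun i _ => this i]; simp

lemma Pr_hall_fixed [DecidableEq X] [Nonempty Y] (k : ℕ) (A : Finset X) (B : Finset Y) :
    Pr (fun f : X × Fin k → Y => ∀ x ∈ A, almostIn (fun i => f (x, i)) B) ≤
      (k * ((B.card : ℝ) / Fintype.card Y) ^ (k-1)) ^ A.card := by
  classical
  have e := Pr_equiv (Equiv.curry X (Fin k) Y).symm
    (fun f : X × Fin k → Y => ∀ x ∈ A, almostIn (fun i => f (x, i)) B)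
  rw [← e]
  unfold Pr
  simp only [ind_forall]
  have := Av_pi_prod_on (Y := Fin k → Y) A (fun _ h => ind (almostIn h B))
  have e2 : (fun x : X → Fin k → Y => ∏ x_1 ∈ A, ind (almostIn (fun i => (Equiv.curry X (Fin k) Y).symm x (x_1, i)) B))
    = fun f => ∏ x ∈ A, ind (almostIn (f x) B) := rfl
  rw [e2, this, Finset.prod_const]
  apply pow_le_pow_left₀ (Av_nonneg fun _ => ind_nonneg _)
  exact Pr_almostIn k B

lemma choose_le_exp (y u : ℕ) (hu : 1 ≤ u) : (y.choose u : ℝ) ≤ (3 * y / u) ^ u := by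
  have h1 : (y.choose u : ℝ) ≤ (y:ℝ) ^ u / u.factorial := Nat.choose_le_pow_div u y
  have h2 := Real.pow_div_factorial_le_exp (u:ℝ) (Nat.cast_nonneg u) u
  have h3 : Real.exp (u:ℝ) ≤ 3 ^ u := by
    have := Real.exp_one_lt_d9
    calc Real.exp (u:ℝ) = Real.exp 1 ^ u := by rw [← Real.exp_nat_mul]; simp
      _ ≤ 3 ^ u := by apply pow_le_pow_left₀ (Real.exp_pos _).le; linarith
  have hf : (0:ℝ) < u.factorial := by positivity
  have hu' : (0:ℝ) < u := by exact_mod_cast hu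
  rw [div_le_iff₀ hf] at h2
  refine h1.trans ?_
  rw [div_pow, mul_pow, div_le_div_iff₀ hf (by positivity)]
  have : (u:ℝ)^u ≤ 3^u * u.factorial := h2.trans (by gcongr)
  nlinarith [pow_nonneg (Nat.cast_nonneg (α := ℝ) y) u]

lemma choose_pred_le (y u : ℕ) (hu : 1 ≤ u) (h : 2 * u ≤ y + 1) : y.choose (u-1) ≤ y.choose u := by
  obtain ⟨v, rfl⟩ : ∃ v, u = v + 1 := ⟨u - 1, by omega⟩
  have := Nat.choose_succ_right_eq y v
  simp only [Nat.add_sub_cancel]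
  have h2 : v + 1 ≤ y - v := by omega
  have h3 : y.choose v * (v+1) ≤ y.choose (v+1) * (v+1) := by
    rw [this]; exact Nat.mul_le_mul_left _ h2
  exact Nat.le_of_mul_le_mul_right h3 (by omega)

lemma hall_term (x y u : ℕ) (hxy : x ≤ y) (hy : 5 ≤ y) (hu : 1 ≤ u) (h : 2 * u ≤ y + 1) :
    (x.choose u : ℝ) * y.choose (u-1) * ((40:ℕ) * (((u - 1 : ℕ) : ℝ) / y) ^ (40-1)) ^ u ≤ (1/2)^u / y := by
  have hy0 : (0:ℝ) < y := by exact_mod_cast (by omega : 0 < y)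
  have hu0 : (0:ℝ) < u := by exact_mod_cast hu
  have c1 : (x.choose u : ℝ) ≤ (3 * y / u) ^ u := by
    refine le_trans ?_ (choose_le_exp y u hu)
    exact_mod_cast Nat.choose_le_choose u hxy
  have c2 : (y.choose (u-1) : ℝ) ≤ (3 * y / u) ^ u := by
    refine le_trans ?_ (choose_le_exp y u hu)
    exact_mod_cast choose_pred_le y u hu h
  set z : ℝ := u / y with hz
  have hz0 : 0 < z := by positivity
  have hz1 : z ≤ 3/5 := by
    rw [hz, div_le_iff₀ hy0]
    have : (2:ℝ) * u ≤ y + 1 := by exact_mod_cast h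
    have : (5:ℝ) ≤ y := by exact_mod_cast hy
    linarith
  have c3 : ((40:ℕ) * (((u - 1 : ℕ) : ℝ) / y) ^ (40-1)) ^ u ≤ (40 * z ^ 39) ^ u := by
    push_cast
    gcongr
    · rw [hz]; gcongr; exact Nat.sub_le u 1
  have e1 : 3 * (y:ℝ) / u = 3 / z := by rw [hz]; field_simp
  rw [e1] at c1 c2
  calc _ ≤ (3/z)^u * (3/z)^u * (40 * z^39)^u := by gcongr
    _ = (z * (360 * z^36))^u := by rw [← mul_pow, ← mul_pow]; congr 1; field_simp; norm_num
    _ ≤ (z * (1/4))^u := by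
      have : z^36 ≤ (3/5)^36 := by gcongr
      have h3 : (360:ℝ) * (3/5)^36 ≤ 1/4 := by norm_num
      gcongr
      linarith
    _ = z^u * (1/4)^u := by rw [mul_pow]
    _ ≤ z * (1/4)^u := by
      gcongr
      calc z^u ≤ z^1 := pow_le_pow_of_le_one hz0.le (by linarith) hu
        _ = z := pow_one z
    _ ≤ (1/2)^u / y := by
      rw [hz, div_mul_eq_mul_div]
      gcongr
      have : (u:ℝ) ≤ 2^u := by exact_mod_cast (Nat.lt_two_pow_self).le
      have e : ((1:ℝ)/4)^u = (1/2)^u * (1/2)^u := by rw [← mul_pow]; norm_num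
      rw [e, ← mul_assoc]
      have : (u:ℝ) * (1/2)^u ≤ 1 := by
        rw [div_pow, one_pow, mul_one_div, div_le_one (by positivity)]; exact this
      have hp : (0:ℝ) ≤ (1/2)^u := by positivity
      nlinarith

/-- Hall obstruction -/
def hallBad {k : ℕ} (f : X × Fin k → Y) : Prop :=
  ∃ (A : Finset X) (B : Finset Y), 1 ≤ A.card ∧ 2 * A.card ≤ Fintype.card Y + 1 ∧
    B.card = A.card - 1 ∧ ∀ x ∈ A, almostIn (fun i => f (x, i)) B

lemma Pr_hall [DecidableEq X] (hXY : Fintype.card X ≤ Fintype.card Y) (hY : 5 ≤ Fintype.card Y) (k : ℕ) (hk : k = 40) :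
    Pr (fun f : X × Fin k → Y => hallBad f) ≤ 1 / Fintype.card Y := by
  classical
  have : Nonempty Y := Fintype.card_pos_iff.mp (by omega)
  set y := Fintype.card Y with hy
  set U := (Finset.range (y+1)).filter (fun u => 1 ≤ u ∧ 2 * u ≤ y + 1) with hU
  have h1 : Pr (fun f : X × Fin k → Y => hallBad f) ≤
    Pr (fun f : X × Fin k → Y => ∃ u ∈ U, ∃ A ∈ Finset.univ.powersetCard u,
      ∃ B ∈ (Finset.univ : Finset Y).powersetCard (u-1),
      ∀ x ∈ A, almostIn (fun i => f (x, i)) B) := by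
    apply Pr_mono
    rintro f ⟨A, B, h1, h2, h3, h4⟩
    refine ⟨A.card, ?_, A, ?_, B, ?_, h4⟩
    · simp only [hU, Finset.mem_filter, Finset.mem_range]; omega
    · simp
    · simp [h3]
  refine h1.trans ((Pr_exists_le _ _).trans ?_)
  have h2 : ∀ u ∈ U, Pr (fun f : X × Fin k → Y => ∃ A ∈ Finset.univ.powersetCard u,
      ∃ B ∈ (Finset.univ : Finset Y).powersetCard (u-1),
      ∀ x ∈ A, almostIn (fun i => f (x, i)) B) ≤ (1/2)^u / y := by
    intro u hu
    simp only [hU, Finset.mem_filter, Finset.mem_range] at hu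
    refine (Pr_exists_le _ _).trans ?_
    refine (Finset.sum_le_sum fun A hA => (Pr_exists_le _ _).trans
      (Finset.sum_le_sum (g := fun _ => (k * (((u - 1 : ℕ) : ℝ) / y) ^ (k-1)) ^ u) fun B hB => ?_)).trans ?_
    · have hA := (Finset.mem_powersetCard.mp hA).2
      have hB := (Finset.mem_powersetCard.mp hB).2
      have := Pr_hall_fixed k A B
      rwa [hA, hB] at this
    · have := hall_term (Fintype.card X) y u hXY hY hu.2.1 hu.2.2
      subst hk
      simp only [Finset.sum_const, Finset.card_powersetCard, Finset.card_univ, nsmul_eq_mul]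
      rw [← mul_assoc]
      exact this
  refine (Finset.sum_le_sum h2).trans ?_
  rw [← Finset.sum_div]
  gcongr
  have h3 : ∑ u ∈ U, ((1:ℝ)/2)^u ≤ ∑ u ∈ Finset.Ico 1 (y+1), ((1:ℝ)/2)^u := by
    apply Finset.sum_le_sum_of_subset_of_nonneg
    · intro u hu
      simp only [hU, Finset.mem_filter, Finset.mem_range] at hu
      simp; omega
    · intros; positivity
  refine h3.trans ?_
  have h4 := geom_sum_Ico (K := ℝ) (x := 1/2) (by norm_num) (show 1 ≤ y + 1 by omega)
  rw [h4]
  have : (0:ℝ) < (1/2)^(y+1) := by positivity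
  norm_num
  rw [div_le_one_of_neg (by norm_num)] at *
  linarith [show (0:ℝ) < (1/2)^(y+1) from by positivity]
end hall

end

section
open Equiv

section indep
variable {X Y : Type*} [Fintype X] [Fintype Y] [DecidableEq X]

lemma Av_indep [Nonempty Y] (S : Finset X) (F H : (X → Y) → ℝ)
    (hF : ∀ f f' : X → Y, (∀ x ∈ S, f x = f' x) → F f = F f')
    (hH : ∀ f f' : X → Y, (∀ x, x ∉ S → f x = f' x) → H f = H f') :
    Av (fun f => F f * H f) = Av F * Av H := by
  let e := Equiv.piEquivPiSubtypeProd (fun x => x ∈ S) (fun _ : X => Y)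
  have key : ∀ K : (X → Y) → ℝ, Av K = Av fun a => Av fun b => K (e.symm (a, b)) := by
    intro K
    rw [← Av_equiv e.symm K, Av_prod]
  have a0 : {x // x ∈ S} → Y := fun _ => Classical.arbitrary Y
  have b0 : {x // x ∉ S} → Y := fun _ => Classical.arbitrary Y
  have h1 : ∀ a b, F (e.symm (a, b)) = F (e.symm (a, b0)) := by
    intro a b; apply hF; intro x hx; simp [e, Equiv.piEquivPiSubtypeProd, hx]
  have h2 : ∀ a b, H (e.symm (a, b)) = H (e.symm (a0, b)) := by
    intro a b; apply hH; intro x hx; simp [e, Equiv.piEquivPiSubtypeProd, hx]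
  rw [key F, key H, key]
  simp only [h1 _ _, h2 _ _]
  simp only [Av_mul_left, Av_mul_right, Av_const]

lemma Pr_pi_on [Nonempty Y] (S : Finset X) (B : X → Finset Y) :
    Pr (fun f : X → Y => ∀ x ∈ S, f x ∈ B x) = ∏ x ∈ S, ((B x).card : ℝ) / Fintype.card Y := by
  unfold Pr
  simp only [ind_forall]
  rw [Av_pi_prod_on S (fun x y => ind (y ∈ B x))]
  exact Finset.prod_congr rfl fun x _ => Pr_mem (B x)

lemma Pr_indep [Nonempty Y] (S : Finset X) (p q : (X → Y) → Prop)
    (hF : ∀ f f' : X → Y, (∀ x ∈ S, f x = f' x) → (p f ↔ p f'))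
    (hH : ∀ f f' : X → Y, (∀ x, x ∉ S → f x = f' x) → (q f ↔ q f')) :
    Pr (fun f => p f ∧ q f) = Pr p * Pr q := by
  unfold Pr
  simp only [ind_and]
  refine Av_indep S _ _ ?_ ?_
  · intro f f' h; rw [hF f f' h]
  · intro f f' h; rw [hH f f' h]
end indep

section switch
variable {r g : ℕ} {Mk : Type*} [Fintype Mk]

/-- R-requirement of a switch -/
def swA (M : Perm (Fin r)) (a : (Fin r × Fin r) × Fin g) (R : Fin r × Fin g → Fin r) : Prop :=
  ∀ z ∈ ({(a.1.1, a.2), (a.1.2, a.2)} : Finset (Fin r × Fin g)),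
    R z ∈ ({M (swap a.1.1 a.1.2 z.1)} : Finset (Fin r))
/-- colour requirement of a switch -/
def swB (M : Perm (Fin r)) (good : Fin r × Fin r → Finset Mk) (a : (Fin r × Fin r) × Fin g)
    (κ : Fin r × Fin r → Mk) : Prop :=
  ∀ e ∈ ({(a.1.1, M a.1.2), (a.1.2, M a.1.1)} : Finset (Fin r × Fin r)), κ e ∈ good e

lemma Pr_swA (M : Perm (Fin r)) (a : (Fin r × Fin r) × Fin g) (ha : a.1.1 ≠ a.1.2) :
    Pr (swA M a) = 1 / (r:ℝ)^2 := by
  have : Nonempty (Fin r) := ⟨a.1.1⟩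
  unfold swA
  rw [Pr_pi_on _ (fun z : Fin r × Fin g => ({M (swap a.1.1 a.1.2 z.1)} : Finset (Fin r))),
    Finset.prod_pair (by simpa using ha)]
  simp
  ring

lemma swA_indep (M : Perm (Fin r)) (a b : (Fin r × Fin r) × Fin g)
    (h : Disjoint ({(a.1.1, a.2), (a.1.2, a.2)} : Finset (Fin r × Fin g)) {(b.1.1, b.2), (b.1.2, b.2)}) :
    Pr (fun R => swA M a R ∧ swA M b R) = Pr (swA M a) * Pr (swA M b) := by
  have : Nonempty (Fin r) := ⟨a.1.1⟩
  apply Pr_indep ({(a.1.1, a.2), (a.1.2, a.2)} : Finset (Fin r × Fin g))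
  · intro f f' h; unfold swA
    exact forall₂_congr fun z hz => by rw [h z hz]
  · intro f f' h'; unfold swA
    exact forall₂_congr fun z hz => by rw [h' z (Finset.disjoint_right.mp h hz)]

lemma swB_indep [Nonempty Mk] (M : Perm (Fin r)) (good : Fin r × Fin r → Finset Mk) (a b : (Fin r × Fin r) × Fin g)
    (h : Disjoint ({(a.1.1, M a.1.2), (a.1.2, M a.1.1)} : Finset (Fin r × Fin r))
      {(b.1.1, M b.1.2), (b.1.2, M b.1.1)}) :
    Pr (fun R => swB M good a R ∧ swB M good b R) = Pr (swB M good a) * Pr (swB M good b) := by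
  apply Pr_indep ({(a.1.1, M a.1.2), (a.1.2, M a.1.1)} : Finset (Fin r × Fin r))
  · intro f f' h; unfold swB
    exact forall₂_congr fun z hz => by rw [h z hz]
  · intro f f' h'; unfold swB
    exact forall₂_congr fun z hz => by rw [h' z (Finset.disjoint_right.mp h hz)]

lemma Pr_and_le_left {α : Type*} [Fintype α] (p q : α → Prop) : Pr (fun x => p x ∧ q x) ≤ Pr p :=
  Pr_mono fun _ h => h.1

lemma switch_pair [Nonempty Mk] (M : Perm (Fin r)) (good : Fin r × Fin r → Finset Mk)
    (a b : (Fin r × Fin r) × Fin g) (ha : a.1.1 < a.1.2) (hb : b.1.1 < b.1.2) :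
    Pr (fun R => swA M a R ∧ swA M b R) * Pr (fun R => swB M good a R ∧ swB M good b R) ≤
      (Pr (swA M a) * Pr (swB M good a)) * (Pr (swA M b) * Pr (swB M good b)) +
      ((if a = b then Pr (swA M a) * Pr (swB M good a) else 0) +
       (if a.1 = b.1 then 1 / (r:ℝ)^4 else 0)) := by
  obtain ⟨⟨v, u⟩, i⟩ := a
  obtain ⟨⟨v', u'⟩, i'⟩ := b
  simp only at ha hb
  have n1 := fun a => Pr_nonneg (swA (g := g) M a)
  have n2 := fun a => Pr_nonneg (swB (g := g) M good a)
  have hpos : (0:ℝ) ≤ (if ((v,u) : Fin r × Fin r) = (v',u') then 1 / (r:ℝ)^4 else 0) := by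
    split_ifs <;> positivity
  have hprod := mul_nonneg (mul_nonneg (n1 ((v,u),i)) (n2 ((v,u),i))) (mul_nonneg (n1 ((v',u'),i')) (n2 ((v',u'),i')))
  by_cases hab : (((v,u),i) : (Fin r × Fin r) × Fin g) = ((v',u'),i')
  · rw [if_pos hab]
    have := mul_le_mul (Pr_and_le_left (swA (g := g) M ((v,u),i)) (swA (g := g) M ((v',u'),i')))
      (Pr_and_le_left (swB (g := g) M good ((v,u),i)) (swB (g := g) M good ((v',u'),i')))
      (Pr_nonneg _) (n1 _)
    linarith
  rw [if_neg hab]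
  by_cases hp : ((v,u) : Fin r × Fin r) = (v',u')
  · rw [if_pos hp]
    have hi : i ≠ i' := by rintro rfl; exact hab (by rw [hp])
    rw [swA_indep, Pr_swA _ _ ha.ne, Pr_swA _ _ hb.ne]
    · have h1 := Pr_le_one (fun R => swB (g := g) M good ((v,u),i) R ∧ swB (g := g) M good ((v',u'),i') R)
      have h2 : (0:ℝ) ≤ 1 / (r:ℝ)^4 := by positivity
      have h3 : 1 / (r:ℝ)^2 * (1 / (r:ℝ)^2) = 1 / (r:ℝ)^4 := by
        rw [div_mul_div_comm, ← pow_add]; norm_num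
      rw [Pr_swA _ _ ha.ne, Pr_swA _ _ hb.ne] at hprod
      rw [h3]
      nlinarith
    · have hi' := hi.symm
      simp [hi']
  rw [if_neg hp, add_zero, add_zero]
  by_cases hS : Disjoint ({(v, i), (u, i)} : Finset (Fin r × Fin g)) {(v', i'), (u', i')}
  · rw [swA_indep _ _ _ hS, swB_indep]
    · apply le_of_eq; ring
    · simp only [Finset.disjoint_insert_left, Finset.disjoint_singleton_left, Finset.mem_insert,
        Finset.mem_singleton, Prod.mk.injEq, EmbeddingLike.apply_eq_iff_eq] at hp ⊢
      simp only [Fin.ext_iff, Fin.lt_def] at *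
      omega
  · have h0 : Pr (fun R => swA (g := g) M ((v,u),i) R ∧ swA (g := g) M ((v',u'),i') R) = 0 := by
      have : ∀ R, ¬ (swA (g := g) M ((v,u),i) R ∧ swA (g := g) M ((v',u'),i') R) := by
        rintro R ⟨h1, h2⟩
        rw [Finset.not_disjoint_iff] at hS
        obtain ⟨z, hz, hz'⟩ := hS
        have e1 := h1 z hz
        have e2 := h2 z hz'
        rw [Finset.mem_singleton] at e1 e2
        rw [e1] at e2
        have e3 := M.injective e2
        simp only [Finset.mem_insert, Finset.mem_singleton] at hz hz'
        simp only [Prod.mk.injEq] at hp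
        rcases hz with rfl | rfl <;> rcases hz' with h | h <;> 
          (simp only [Prod.mk.injEq] at h; obtain ⟨h, -⟩ := h; subst h; simp at e3; simp_all; try omega)
      unfold Pr
      simp only [ind_false (this _)]
      simp [Av]
    rw [h0, zero_mul]
    exact hprod

lemma switch_prob [Nonempty Mk] (M : Perm (Fin r)) (good : Fin r × Fin r → Finset Mk)
    (hr : 0 < r) (hg : 0 < g)
    (hgood : ∀ e, (1/3 : ℝ) ≤ (good e).card / Fintype.card Mk)
    (P : Finset (Fin r × Fin r)) (hP : ∀ p ∈ P, p.1 < p.2) (hPc : (r:ℝ)^2 / 4 ≤ P.card) :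
    Pr (fun ω : (Fin r × Fin g → Fin r) × (Fin r × Fin r → Mk) =>
      ¬ ∃ a : (Fin r × Fin r) × Fin g, a.1 ∈ P ∧ swA M a ω.1 ∧ swB M good a ω.2) ≤
      36 / g + 1296 / (r:ℝ)^2 := by
  have : Nonempty (Fin r) := ⟨⟨0, hr⟩⟩
  have hr0 : (0:ℝ) < r := by exact_mod_cast hr
  have hg0 : (0:ℝ) < g := by exact_mod_cast hg
  set I : Finset ((Fin r × Fin r) × Fin g) := P ×ˢ Finset.univ with hI
  have hIm : ∀ a ∈ I, a.1.1 < a.1.2 := fun a ha => hP _ (Finset.mem_product.mp ha).1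
  let N : (Fin r × Fin g → Fin r) × (Fin r × Fin r → Mk) → ℝ := fun ω =>
    ∑ a ∈ I, ind (swA M a ω.1) * ind (swB M good a ω.2)
  set p : (Fin r × Fin r) × Fin g → ℝ := fun a => Pr (swA M a) * Pr (swB M good a) with hp
  have hEN : Av N = ∑ a ∈ I, p a := by
    simp only [N]
    rw [Av_sum]
    refine Finset.sum_congr rfl fun a ha => ?_
    rw [Av_prod]
    simp only [Av_mul_left, Av_mul_right, hp, Pr]
  have hEN2 : Av (fun ω => N ω ^ 2) ≤ (Av N)^2 + Av N + g^2 / (r:ℝ)^2 := by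
    have e1 : ∀ ω, N ω ^ 2 = ∑ a ∈ I, ∑ b ∈ I, ind (swA M a ω.1 ∧ swA M b ω.1) *
        ind (swB M good a ω.2 ∧ swB M good b ω.2) := by
      intro ω
      simp only [N]
      rw [sq, Finset.sum_mul_sum]
      refine Finset.sum_congr rfl fun a ha => Finset.sum_congr rfl fun b hb => ?_
      rw [ind_and, ind_and]; ring
    simp only [e1]
    rw [Av_sum]
    have e2 : ∀ a ∈ I, Av (fun ω : (Fin r × Fin g → Fin r) × (Fin r × Fin r → Mk) =>
        ∑ b ∈ I, ind (swA M a ω.1 ∧ swA M b ω.1) * ind (swB M good a ω.2 ∧ swB M good b ω.2)) ≤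
        ∑ b ∈ I, (p a * p b + ((if a = b then p a else 0) + (if a.1 = b.1 then 1 / (r:ℝ)^4 else 0))) := by
      intro a ha
      rw [Av_sum]
      refine Finset.sum_le_sum fun b hb => ?_
      rw [Av_prod]
      simp only [Av_mul_left, Av_mul_right]
      exact switch_pair M good a b (hIm a ha) (hIm b hb)
    refine (Finset.sum_le_sum e2).trans ?_
    simp only [Finset.sum_add_distrib]
    rw [← Finset.sum_mul_sum, hEN, ← sq, add_assoc]
    refine add_le_add le_rfl (add_le_add ?_ ?_)
    · refine Finset.sum_le_sum fun a ha => ?_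
      rw [Finset.sum_ite_eq, if_pos ha]
    · have e3 : ∀ a ∈ I, ∑ b ∈ I, (if a.1 = b.1 then 1 / (r:ℝ)^4 else 0) = g * (1 / (r:ℝ)^4) := by
        intro a ha
        rw [hI, Finset.sum_product]
        rw [Finset.sum_comm]
        simp only [Finset.sum_ite_eq]
        rw [Finset.sum_const, Finset.card_univ, Fintype.card_fin, nsmul_eq_mul, if_pos (Finset.mem_product.mp ha).1]
      rw [Finset.sum_congr rfl e3, Finset.sum_const, hI, Finset.card_product, Finset.card_univ, Fintype.card_fin]
      have h4 : (P.card : ℝ) ≤ (r:ℝ)^2 := by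
        have := Finset.card_le_univ P
        rw [Fintype.card_prod, Fintype.card_fin] at this
        rw [sq]; exact_mod_cast this
      rw [nsmul_eq_mul]; push_cast
      calc (P.card : ℝ) * g * (g * (1 / (r:ℝ)^4)) ≤ (r:ℝ)^2 * g * (g * (1 / (r:ℝ)^4)) := by gcongr
        _ = _ := by field_simp
  have hENge : (g:ℝ) / 36 ≤ Av N := by
    rw [hEN]
    have : ∀ a ∈ I, 1 / (r:ℝ)^2 * (1/9) ≤ p a := by
      intro a ha
      simp only [hp]
      rw [Pr_swA _ _ (hIm a ha).ne]
      gcongr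
      unfold swB
      rw [Pr_pi_on, Finset.prod_pair]
      · have := mul_le_mul (hgood (a.1.1, M a.1.2)) (hgood (a.1.2, M a.1.1)) (by norm_num) (by positivity)
        linarith
      · simp [(hIm a ha).ne]
    refine le_trans ?_ (Finset.sum_le_sum this)
    rw [Finset.sum_const, hI, Finset.card_product, Finset.card_univ, Fintype.card_fin, nsmul_eq_mul]
    push_cast
    calc (g:ℝ)/36 = (r:ℝ)^2/4 * g * (1 / (r:ℝ)^2 * (1/9)) := by field_simp; norm_num
      _ ≤ _ := by gcongr
  set E := Av N
  have hE : 0 < E := lt_of_lt_of_le (by positivity) hENge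
  have h1 := Pr_pos_ge N
  have h2 : Pr (fun ω : (Fin r × Fin g → Fin r) × (Fin r × Fin r → Mk) =>
      ¬ ∃ a : (Fin r × Fin r) × Fin g, a.1 ∈ P ∧ swA M a ω.1 ∧ swB M good a ω.2) ≤ 1 - Pr (fun ω => N ω ≠ 0) := by
    rw [← Pr_not]
    apply Pr_mono
    rintro ω hω h
    apply hω
    obtain ⟨a, ha, hne⟩ := Finset.exists_ne_zero_of_sum_ne_zero h
    refine ⟨a, (Finset.mem_product.mp ha).1, ?_, ?_⟩
    · by_contra hc; exact hne (by rw [ind_false hc, zero_mul])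
    · by_contra hc; exact hne (by rw [ind_false hc, mul_zero])
  refine h2.trans ?_
  set x := Pr (fun ω => N ω ≠ 0)
  have hx0 : 0 ≤ x := Pr_nonneg _
  have hx1 : x ≤ 1 := Pr_le_one _
  have h3 : E^2 ≤ x * (E^2 + E + g^2/(r:ℝ)^2) := h1.trans (by gcongr)
  have h4 : (1 - x) * E^2 ≤ E + g^2/(r:ℝ)^2 := by
    have : 0 ≤ (1 - x) * (E + g^2/(r:ℝ)^2) := mul_nonneg (by linarith) (by positivity)
    nlinarith
  have h5 : 1 - x ≤ (E + g^2/(r:ℝ)^2) / E^2 := by rwa [le_div_iff₀ (by positivity)]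
  refine h5.trans ?_
  have h6 : (E + g^2/(r:ℝ)^2) / E^2 = 1 / E + g^2/(r:ℝ)^2 / E^2 := by field_simp
  rw [h6]
  have h7 : 1 / E ≤ 36 / g := by
    rw [div_le_div_iff₀ hE hg0]; linarith
  have h8 : g^2/(r:ℝ)^2 / E^2 ≤ 1296 / (r:ℝ)^2 := by
    rw [div_div, div_le_div_iff₀ (by positivity) (by positivity)]
    have : (g:ℝ)^2 ≤ 1296 * E^2 := by nlinarith
    nlinarith [sq_nonneg (r:ℝ)]
  linarith
end switch

end

section
open Equiv

section hallcomb
variable {X Y : Type*} [Fintype X] [Fintype Y]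

lemma hall_select {k : ℕ} (f : X × Fin k → Y) (ok : X → Fin k → Prop)
    (hok : ∀ x, ∃ i0, ∀ i, i ≠ i0 → ok x i) (h2 : 2 * Fintype.card X ≤ Fintype.card Y + 1)
    (hf : ¬ hallBad f) :
    ∃ s : X → Fin k, (∀ x, ok x (s x)) ∧ Function.Injective (fun x => f (x, s x)) := by
  classical
  let t : X → Finset Y := fun x => (Finset.univ.filter (fun i => ok x i)).image (fun i => f (x, i))
  have hall : ∀ S : Finset X, S.card ≤ (S.biUnion t).card := by
    intro S
    by_contra hlt
    push Not at hlt
    apply hf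
    have hS : S.card ≤ Fintype.card X := Finset.card_le_univ S
    obtain ⟨B, hB1, hB2⟩ := Finset.exists_superset_card_eq (s := S.biUnion t) (n := S.card - 1)
      (by omega) (by omega)
    refine ⟨S, B, by omega, by omega, hB2, ?_⟩
    intro x hx
    obtain ⟨i0, hi0⟩ := hok x
    refine ⟨i0, fun i hi => hB1 ?_⟩
    rw [Finset.mem_biUnion]
    refine ⟨x, hx, Finset.mem_image.mpr ⟨i, ?_, rfl⟩⟩
    simpa using hi0 i hi
  obtain ⟨g, hg, hgt⟩ := (Finset.all_card_le_biUnion_card_iff_exists_injective t).mp hall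
  have : ∀ x, ∃ i, ok x i ∧ f (x, i) = g x := by
    intro x
    have := hgt x
    simp only [t, Finset.mem_image, Finset.mem_filter, Finset.mem_univ, true_and] at this
    exact this
  choose s hs1 hs2 using this
  refine ⟨s, hs1, ?_⟩
  intro x y hxy
  simp only [hs2] at hxy
  exact hg hxy

lemma hall_match {r k : ℕ} (τ : (Fin r ⊕ Fin r) × Fin k → Fin r) (ok : Fin r ⊕ Fin r → Fin k → Prop)
    (hok : ∀ x, ∃ i0, ∀ i, i ≠ i0 → ok x i)
    (h1 : ¬ hallBad (fun p : Fin r × Fin k => τ (Sum.inl p.1, p.2)))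
    (h2 : ¬ hallBad (fun p : Fin r × Fin k => τ (Sum.inr p.1, p.2))) :
    ∃ M : Perm (Fin r), ∀ v, (∃ j, ok (Sum.inl v) j ∧ τ (Sum.inl v, j) = M v) ∨
      (∃ j, ok (Sum.inr (M v)) j ∧ τ (Sum.inr (M v), j) = v) := by
  classical
  let adj : Fin r → Fin r → Prop := fun v w => (∃ j, ok (Sum.inl v) j ∧ τ (Sum.inl v, j) = w) ∨
      (∃ j, ok (Sum.inr w) j ∧ τ (Sum.inr w, j) = v)
  let t : Fin r → Finset (Fin r) := fun v => Finset.univ.filter (adj v)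
  have hall : ∀ S : Finset (Fin r), S.card ≤ (S.biUnion t).card := by
    intro S
    by_contra hlt
    push Not at hlt
    have hS : S.card ≤ r := by simpa using Finset.card_le_univ S
    by_cases hs : 2 * S.card ≤ r + 1
    · apply h1
      obtain ⟨B, hB1, hB2⟩ := Finset.exists_superset_card_eq (s := S.biUnion t) (n := S.card - 1)
        (by omega) (by simp; omega)
      refine ⟨S, B, by omega, by simpa using hs, hB2, ?_⟩
      intro x hx
      obtain ⟨i0, hi0⟩ := hok (Sum.inl x)
      refine ⟨i0, fun i hi => hB1 ?_⟩
      rw [Finset.mem_biUnion]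
      refine ⟨x, hx, ?_⟩
      simp only [t, Finset.mem_filter, Finset.mem_univ, true_and, adj]
      exact Or.inl ⟨i, hi0 i hi, rfl⟩
    · apply h2
      have hc : (S.biUnion t)ᶜ.card = r - (S.biUnion t).card := by
        rw [Finset.card_compl, Fintype.card_fin]
      obtain ⟨A, hA1, hA2⟩ := Finset.exists_subset_card_eq (s := (S.biUnion t)ᶜ) (n := r - S.card + 1)
        (by omega)
      refine ⟨A, Sᶜ, by omega, by rw [Fintype.card_fin]; omega, by rw [Finset.card_compl, Fintype.card_fin]; omega, ?_⟩
      intro w hw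
      have hw' := hA1 hw
      obtain ⟨i0, hi0⟩ := hok (Sum.inr w)
      refine ⟨i0, fun i hi => ?_⟩
      rw [Finset.mem_compl]
      intro hv
      rw [Finset.mem_compl, Finset.mem_biUnion] at hw'
      apply hw'
      refine ⟨_, hv, ?_⟩
      simp only [t, Finset.mem_filter, Finset.mem_univ, true_and, adj]
      exact Or.inr ⟨i, hi0 i hi, rfl⟩
  obtain ⟨g, hg, hgt⟩ := (Finset.all_card_le_biUnion_card_iff_exists_injective t).mp hall
  refine ⟨Equiv.ofBijective g (Finite.injective_iff_bijective.mp hg), fun v => ?_⟩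
  have := hgt v
  simp only [t, Finset.mem_filter, Finset.mem_univ, true_and, adj] at this
  exact this
end hallcomb

section labels
/-- half vertices: tails and heads -/
abbrev VS (r : ℕ) := Fin r ⊕ Fin r
/-- labels of main choices -/
abbrev Lab (r G k : ℕ) := VS r × Fin G × Fin k × Fin k
/-- underlying vertex -/
def pt {r : ℕ} : VS r → Fin r := Sum.elim id id
variable {r G k : ℕ}
/-- edge of a label -/
def eT (T : Lab r G k → Fin r) (l : Lab r G k) : Fin r × Fin r :=
  Sum.elim (fun v => (v, T l)) (fun w => (T l, w)) l.1

open Classical in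
/-- representative label of an edge -/
noncomputable def rep (T : Lab r G k → Fin r) (e : Fin r × Fin r) : Option (Lab r G k) :=
  if h : ∃ l, eT T l = e then some h.choose else none

lemma rep_some {T : Lab r G k → Fin r} {e : Fin r × Fin r} {l : Lab r G k} (h : rep T e = some l) :
    eT T l = e := by
  unfold rep at h
  split_ifs at h with h1
  · rw [← Option.some.inj h]; exact h1.choose_spec
lemma rep_exists {T : Lab r G k → Fin r} (l : Lab r G k) : ∃ l', rep T (eT T l) = some l' := by
  unfold rep
  rw [dif_pos ⟨l, rfl⟩]; exact ⟨_, rfl⟩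

/-- lost label -/
def lost (T : Lab r G k → Fin r) (l : Lab r G k) : Prop := rep T (eT T l) ≠ some l

lemma lost_pair {T : Lab r G k → Fin r} {l1 l2 : Lab r G k} (h1 : lost T l1) (h2 : lost T l2) :
    ∃ p, p ≠ l1 ∧ p ≠ l2 ∧ eT T p = eT T l1 := by
  obtain ⟨p, hp⟩ := rep_exists (T := T) l1
  refine ⟨p, ?_, ?_, rep_some hp⟩
  · rintro rfl; exact h1 hp
  · rintro rfl
    apply h2
    unfold lost at *
    rw [rep_some hp]; exact hp

lemma eT_eq_cases {T : Lab r G k → Fin r} {p l : Lab r G k} (h : eT T p = eT T l) :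
    (p.1 = l.1 ∧ T p = T l) ∨ (p.1.isLeft ≠ l.1.isLeft ∧ pt p.1 = T l ∧ T p = pt l.1) := by
  obtain ⟨x, p'⟩ := p
  obtain ⟨y, l'⟩ := l
  cases x <;> cases y <;> simp [eT, pt] at h ⊢ <;> tauto

open Classical in
/-- possible collision values -/
noncomputable def Gam (l1 l2 : Lab r G k) (T : Lab r G k → Fin r) : Finset (Fin r) :=
  Finset.univ.filter fun w => (∃ p, p.1 = l1.1 ∧ p ≠ l1 ∧ p ≠ l2 ∧ T p = w) ∨
    (∃ p, p.1.isLeft ≠ l1.1.isLeft ∧ pt p.1 = w ∧ T p = pt l1.1)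

lemma lost_Gam {T : Lab r G k → Fin r} {l1 l2 : Lab r G k} (h12 : l1.1 = l2.1)
    (h1 : lost T l1) (h2 : lost T l2) : T l1 ∈ Gam l1 l2 T ∧ T l2 ∈ Gam l1 l2 T := by
  constructor
  · obtain ⟨p, hp1, hp2, he⟩ := lost_pair h1 h2
    simp only [Gam, Finset.mem_filter, Finset.mem_univ, true_and]
    rcases eT_eq_cases he with ⟨a, b⟩ | ⟨a, b, c⟩
    · exact Or.inl ⟨p, a, hp1, hp2, b⟩
    · exact Or.inr ⟨p, a, b, c⟩
  · obtain ⟨p, hp1, hp2, he⟩ := lost_pair h2 h1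
    simp only [Gam, Finset.mem_filter, Finset.mem_univ, true_and]
    rw [h12]
    rcases eT_eq_cases he with ⟨a, b⟩ | ⟨a, b, c⟩
    · exact Or.inl ⟨p, a, hp2, hp1, b⟩
    · exact Or.inr ⟨p, a, b, c⟩

lemma Gam_congr {l1 l2 : Lab r G k} (h12 : l1.1 = l2.1) {T T' : Lab r G k → Fin r}
    (h : ∀ p, p ≠ l1 → p ≠ l2 → T p = T' p) : Gam l1 l2 T = Gam l1 l2 T' := by
  ext w
  simp only [Gam, Finset.mem_filter, Finset.mem_univ, true_and]
  refine or_congr (exists_congr fun p => ?_) (exists_congr fun p => ?_)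
  · constructor
    · rintro ⟨a, b, c, d⟩; exact ⟨a, b, c, by rw [← h p b c]; exact d⟩
    · rintro ⟨a, b, c, d⟩; exact ⟨a, b, c, by rw [h p b c]; exact d⟩
  · have hne : p.1.isLeft ≠ l1.1.isLeft → T p = T' p := by
      intro hh
      apply h
      · rintro rfl; exact hh rfl
      · rintro rfl; rw [h12] at hh; exact hh rfl
    constructor
    · rintro ⟨a, b, c⟩; exact ⟨a, b, by rw [← hne a]; exact c⟩
    · rintro ⟨a, b, c⟩; exact ⟨a, b, by rw [hne a]; exact c⟩

open Classical in
lemma Gam_card (l1 l2 : Lab r G k) (T : Lab r G k → Fin r) :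
    ((Gam l1 l2 T).card : ℝ) ≤ (G * k * k : ℕ) +
      ∑ p ∈ Finset.univ.filter (fun p : Lab r G k => p.1.isLeft ≠ l1.1.isLeft), ind (T p = pt l1.1) := by
  have hsub : Gam l1 l2 T ⊆ (Finset.univ.image (fun q : Fin G × Fin k × Fin k => T (l1.1, q))) ∪
      ((Finset.univ.filter (fun p : Lab r G k => p.1.isLeft ≠ l1.1.isLeft)).filter
        (fun p => T p = pt l1.1)).image (fun p => pt p.1) := by
    intro w hw
    simp only [Gam, Finset.mem_filter, Finset.mem_univ, true_and] at hw
    rw [Finset.mem_union]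
    rcases hw with ⟨p, a, b, c, d⟩ | ⟨p, a, b, c⟩
    · left; rw [Finset.mem_image]
      exact ⟨p.2, Finset.mem_univ _, by rw [← a]; exact d⟩
    · right; rw [Finset.mem_image]
      exact ⟨p, by simp [a, c], b⟩
  have h1 := (Finset.card_le_card hsub).trans (Finset.card_union_le _ _)
  have h2 : (Finset.univ.image (fun q : Fin G × Fin k × Fin k => T (l1.1, q))).card ≤ G * k * k := by
    refine Finset.card_image_le.trans ?_
    simp [mul_assoc]
  have h3 := Finset.card_image_le (s := ((Finset.univ.filter (fun p : Lab r G k => p.1.isLeft ≠ l1.1.isLeft)).filter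
        (fun p => T p = pt l1.1))) (f := fun p => pt p.1)
  have h4 : (((Finset.univ.filter (fun p : Lab r G k => p.1.isLeft ≠ l1.1.isLeft)).filter
        (fun p => T p = pt l1.1)).card : ℝ) = ∑ p ∈ Finset.univ.filter (fun p : Lab r G k => p.1.isLeft ≠ l1.1.isLeft), ind (T p = pt l1.1) := by
    rw [Finset.card_filter]
    push_cast
    refine Finset.sum_congr rfl fun p _ => ?_
    by_cases hp : T p = pt l1.1 <;> simp [ind, hp]
  rw [← h4]
  exact_mod_cast h1.trans (Nat.add_le_add h2 h3)

lemma Pr_two {X Y : Type*} [Fintype X] [Fintype Y] [DecidableEq X] [Nonempty Y] (x x' : X) (y y' : Y) :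
    Pr (fun f : X → Y => f x = y ∧ f x' = y') ≤
      1 / (Fintype.card Y : ℝ)^2 + if x = x' then 1 / (Fintype.card Y : ℝ) else 0 := by
  have hc : ∀ z : X, ∀ w : Y, Pr (fun f : X → Y => f z = w) = 1 / Fintype.card Y := by
    intro z w
    have := Pr_pi_on ({z} : Finset X) (fun _ => ({w} : Finset Y))
    simpa using this
  by_cases h : x = x'
  · rw [if_pos h]
    have h1 := Pr_and_le_left (fun f : X → Y => f x = y) (fun f => f x' = y')
    rw [hc] at h1
    have : (0:ℝ) ≤ 1 / (Fintype.card Y : ℝ)^2 := by positivity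
    linarith
  · rw [if_neg h, Pr_indep ({x} : Finset X) (fun f : X → Y => f x = y) (fun f => f x' = y'), hc, hc]
    · apply le_of_eq; rw [add_zero, div_mul_div_comm, sq, one_mul]
    · intro f f' hf; rw [hf x (by simp)]
    · intro f f' hf; rw [hf x' (by simpa using Ne.symm h)]

lemma card_opp (x : VS r) :
    (Finset.univ.filter (fun p : Lab r G k => p.1.isLeft ≠ x.isLeft)).card = r * (G * k * k) := by
  have e : (Finset.univ.filter (fun p : Lab r G k => p.1.isLeft ≠ x.isLeft)) =
      (Finset.univ.filter (fun y : VS r => y.isLeft ≠ x.isLeft)) ×ˢ Finset.univ := by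
    ext p; simp
  rw [e, Finset.card_product]
  have h2 : (Finset.univ.filter (fun y : VS r => y.isLeft ≠ x.isLeft)).card = r := by
    cases x with
    | inl v =>
      have : (Finset.univ.filter (fun y : VS r => y.isLeft ≠ (Sum.inl v : VS r).isLeft)) =
        (Finset.univ : Finset (Fin r)).map ⟨Sum.inr, Sum.inr_injective⟩ := by
        ext y; cases y <;> simp
      rw [this]; simp
    | inr v =>
      have : (Finset.univ.filter (fun y : VS r => y.isLeft ≠ (Sum.inr v : VS r).isLeft)) =
        (Finset.univ : Finset (Fin r)).map ⟨Sum.inl, Sum.inl_injective⟩ := by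
        ext y; cases y <;> simp
      rw [this]; simp
  rw [h2]
  simp [mul_assoc]

lemma Av_H2 (hr : 0 < r) (hA : 1 ≤ G * k * k) (x : VS r) :
    Av (fun T : Lab r G k → Fin r =>
      (∑ p ∈ Finset.univ.filter (fun p : Lab r G k => p.1.isLeft ≠ x.isLeft), ind (T p = pt x))^2) ≤
      2 * ((G * k * k : ℕ) : ℝ)^2 := by
  have : Nonempty (Fin r) := ⟨⟨0, hr⟩⟩
  have hr0 : (0:ℝ) < r := by exact_mod_cast hr
  set S := Finset.univ.filter (fun p : Lab r G k => p.1.isLeft ≠ x.isLeft) with hS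
  have hc : S.card = r * (G * k * k) := card_opp x
  have e1 : ∀ T : Lab r G k → Fin r, (∑ p ∈ S, ind (T p = pt x))^2 =
      ∑ p ∈ S, ∑ q ∈ S, ind (T p = pt x ∧ T q = pt x) := by
    intro T
    rw [sq, Finset.sum_mul_sum]
    simp only [ind_and]
  simp only [e1, Av_sum]
  have e2 : ∀ p q : Lab r G k, Av (fun T : Lab r G k → Fin r => ind (T p = pt x ∧ T q = pt x)) ≤
      1 / (r:ℝ)^2 + if p = q then 1 / (r:ℝ) else 0 := by
    intro p q
    have := Pr_two (Y := Fin r) p q (pt x) (pt x)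
    rw [Fintype.card_fin] at this
    exact this
  refine (Finset.sum_le_sum fun p hp => Finset.sum_le_sum fun q hq => e2 p q).trans ?_
  have e3 : ∀ p ∈ S, ∑ q ∈ S, (1 / (r:ℝ)^2 + if p = q then 1 / (r:ℝ) else 0) =
      S.card * (1 / (r:ℝ)^2) + 1 / r := by
    intro p hp
    rw [Finset.sum_add_distrib, Finset.sum_ite_eq, if_pos hp, Finset.sum_const, nsmul_eq_mul]
  rw [Finset.sum_congr rfl e3, Finset.sum_const, nsmul_eq_mul, hc]
  set A := G * k * k
  have hA1 : (1:ℝ) ≤ A := by exact_mod_cast hA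
  push_cast
  have : (r:ℝ) * A * (r * A * (1 / (r:ℝ)^2) + 1 / r) = A^2 + A := by field_simp
  rw [this]
  nlinarith

lemma Pr_lost2 (hr : 0 < r) (hA : 1 ≤ G * k * k) (l1 l2 : Lab r G k) (hne : l1 ≠ l2) (h12 : l1.1 = l2.1) :
    Pr (fun T : Lab r G k → Fin r => lost T l1 ∧ lost T l2) ≤ 6 * ((G * k * k : ℕ) : ℝ)^2 / (r:ℝ)^2 := by
  have : Nonempty (Fin r) := ⟨⟨0, hr⟩⟩
  have hr0 : (0:ℝ) < r := by exact_mod_cast hr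
  refine (Pr_mono (q := fun T => T l1 ∈ Gam l1 l2 T ∧ T l2 ∈ Gam l1 l2 T) fun T h => lost_Gam h12 h.1 h.2).trans ?_
  have hG1 : ∀ (f : Lab r G k → Fin r) y, Gam l1 l2 (Function.update f l1 y) = Gam l1 l2 f := by
    intro f y; apply Gam_congr h12; intro p hp _; rw [Function.update_of_ne hp]
  have hG2 : ∀ (f : Lab r G k → Fin r) y, Gam l1 l2 (Function.update f l2 y) = Gam l1 l2 f := by
    intro f y; apply Gam_congr h12; intro p _ hp; rw [Function.update_of_ne hp]
  unfold Pr
  rw [Av_resample _ l1]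
  have e1 : ∀ f : Lab r G k → Fin r, (Av fun y => ind (Function.update f l1 y l1 ∈ Gam l1 l2 (Function.update f l1 y) ∧
      Function.update f l1 y l2 ∈ Gam l1 l2 (Function.update f l1 y))) =
      ((Gam l1 l2 f).card : ℝ) / r * ind (f l2 ∈ Gam l1 l2 f) := by
    intro f
    simp only [hG1, Function.update_self, Function.update_of_ne hne.symm, ind_and, Av_mul_right]
    have := Pr_mem (Gam l1 l2 f)
    unfold Pr at this
    rw [this, Fintype.card_fin]
  simp only [e1]
  rw [Av_resample _ l2]
  have e2 : ∀ f : Lab r G k → Fin r, (Av fun y => ((Gam l1 l2 (Function.update f l2 y)).card : ℝ) / r *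
      ind (Function.update f l2 y l2 ∈ Gam l1 l2 (Function.update f l2 y))) =
      (1 / (r:ℝ)^2) * ((Gam l1 l2 f).card : ℝ)^2 := by
    intro f
    simp only [hG2, Function.update_self, Av_mul_left]
    have := Pr_mem (Gam l1 l2 f)
    unfold Pr at this
    rw [this, Fintype.card_fin]
    field_simp
  simp only [e2]
  rw [Av_mul_left]
  set A := G * k * k with hAd
  set H : (Lab r G k → Fin r) → ℝ := fun T =>
    ∑ p ∈ Finset.univ.filter (fun p : Lab r G k => p.1.isLeft ≠ l1.1.isLeft), ind (T p = pt l1.1) with hH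
  have h3 : ∀ f : Lab r G k → Fin r, ((Gam l1 l2 f).card : ℝ)^2 ≤ 2 * (A:ℝ)^2 + 2 * (H f)^2 := by
    intro f
    have h := Gam_card l1 l2 f
    have h' : ((Gam l1 l2 f).card : ℝ) ≤ A + H f := by
      rw [hH]; convert h using 2
    have h0 : (0:ℝ) ≤ (Gam l1 l2 f).card := by positivity
    nlinarith [sq_nonneg ((A:ℝ) - H f)]
  have h4 : Av (fun f : Lab r G k → Fin r => ((Gam l1 l2 f).card : ℝ)^2) ≤ 6 * (A:ℝ)^2 := by
    refine (Av_mono h3).trans ?_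
    rw [Av_add, Av_const, Av_mul_left]
    have := Av_H2 (G := G) (k := k) hr hA l1.1
    rw [← hAd] at this
    simp only [hH]
    linarith
  rw [div_mul_eq_mul_div, one_mul]
  gcongr

/-- no vertex has two lost labels -/
def E1bad (T : Lab r G k → Fin r) : Prop :=
  ∃ l1 l2 : Lab r G k, l1 ≠ l2 ∧ l1.1 = l2.1 ∧ lost T l1 ∧ lost T l2

lemma Pr_E1 (hr : 0 < r) (hA : 1 ≤ G * k * k) :
    Pr (fun T : Lab r G k → Fin r => E1bad T) ≤ 12 * ((G * k * k : ℕ) : ℝ)^4 / r := by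
  have hr0 : (0:ℝ) < r := by exact_mod_cast hr
  set S : Finset (VS r × (Fin G × Fin k × Fin k) × (Fin G × Fin k × Fin k)) :=
    Finset.univ.filter (fun z => z.2.1 ≠ z.2.2) with hS
  refine (Pr_mono (q := fun T => ∃ z ∈ S, lost T (z.1, z.2.1) ∧ lost T (z.1, z.2.2)) ?_).trans ?_
  · rintro T ⟨⟨x, a⟩, ⟨y, b⟩, hne, hxy, h1, h2⟩
    simp only at hxy
    subst hxy
    refine ⟨(x, a, b), ?_, h1, h2⟩
    simp only [hS, Finset.mem_filter, Finset.mem_univ, true_and]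
    rintro rfl; exact hne rfl
  refine (Pr_exists_le _ _).trans ?_
  refine (Finset.sum_le_sum (g := fun _ => 6 * ((G * k * k : ℕ) : ℝ)^2 / (r:ℝ)^2) fun z hz => ?_).trans ?_
  · simp only [hS, Finset.mem_filter, Finset.mem_univ, true_and] at hz
    apply Pr_lost2 hr hA
    · intro h; exact hz (Prod.mk.inj h).2
    · rfl
  · rw [Finset.sum_const, nsmul_eq_mul]
    have hc : (S.card : ℝ) ≤ 2 * r * ((G * k * k : ℕ) : ℝ)^2 := by
      have := Finset.card_le_univ S
      simp only [Fintype.card_prod, Fintype.card_sum, Fintype.card_fin] at this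
      have h : (S.card:ℝ) ≤ (((r + r) * ((G * (k * k)) * (G * (k * k))) : ℕ) : ℝ) := by exact_mod_cast this
      refine h.trans (le_of_eq ?_)
      push_cast; ring
    set A : ℝ := ((G * k * k : ℕ) : ℝ)
    calc (S.card : ℝ) * (6 * A^2 / (r:ℝ)^2) ≤ 2 * r * A^2 * (6 * A^2 / (r:ℝ)^2) := by gcongr
      _ = 12 * A^4 / r := by field_simp; ring
end labels

end

section
open Equiv

section pm
/-- marks: colour and deletion die -/
abbrev Mk (C N : ℕ) := Fin C × Fin N
/-- deleted mark -/
def del {C N : ℕ} (m : ℕ) (μ : Mk C N) : Prop := μ.2.val < m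
variable {r G k C N m : ℕ}

lemma Pr_del_card (hC : 0 < C) : 
    ((Finset.univ.filter (fun μ : Mk C N => μ.2.val < m)).card : ℝ) / Fintype.card (Mk C N) ≤ m / N := by
  have e : (Finset.univ.filter (fun μ : Mk C N => μ.2.val < m)) =
    Finset.univ ×ˢ (Finset.univ.filter (fun i : Fin N => i.val < m)) := by
    ext μ; simp
  have h : (Finset.univ.filter (fun i : Fin N => i.val < m)).card ≤ m := by
    rw [← Finset.card_range m]
    apply Finset.card_le_card_of_injOn (fun i => i.val)
    · intro i hi; simpa using hi
    · intro i _ j _ hij; exact Fin.ext hij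
  rw [e, Finset.card_product, Fintype.card_prod, Finset.card_univ, Fintype.card_fin, Fintype.card_fin]
  push_cast
  have hC0 : (C:ℝ) ≠ 0 := by exact_mod_cast hC.ne'
  rw [mul_div_mul_left _ _ hC0]
  gcongr

/-- some item has two deleted slots -/
def E2bad (m : ℕ) (c : Lab r G k → Mk C N) : Prop :=
  ∃ x g j s1 s2, s1 ≠ s2 ∧ del m (c (x, g, j, s1)) ∧ del m (c (x, g, j, s2))

lemma Pr_E2 (hC : 0 < C) (hN : 0 < N) :
    Pr (fun c : Lab r G k → Mk C N => E2bad m c) ≤ 2 * r * G * k^3 * (m / N : ℝ)^2 := by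
  have : Nonempty (Mk C N) := ⟨(⟨0, hC⟩, ⟨0, hN⟩)⟩
  set S : Finset ((VS r × Fin G × Fin k) × Fin k × Fin k) :=
    Finset.univ.filter (fun z => z.2.1 ≠ z.2.2) with hS
  refine (Pr_mono (q := fun c => ∃ z ∈ S, ∀ l ∈ ({(z.1.1, z.1.2.1, z.1.2.2, z.2.1), (z.1.1, z.1.2.1, z.1.2.2, z.2.2)} : Finset (Lab r G k)), c l ∈ Finset.univ.filter (fun μ : Mk C N => μ.2.val < m)) ?_).trans ?_
  · rintro c ⟨x, g, j, s1, s2, hne, h1, h2⟩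
    refine ⟨((x, g, j), s1, s2), by simpa [hS] using hne, ?_⟩
    intro l hl
    simp only [Finset.mem_insert, Finset.mem_singleton] at hl
    rcases hl with rfl | rfl
    · simpa [del] using h1
    · simpa [del] using h2
  refine (Pr_exists_le _ _).trans ?_
  refine (Finset.sum_le_sum (g := fun _ => (m / N : ℝ)^2) fun z hz => ?_).trans ?_
  · rw [Pr_pi_on _ (fun _ : Lab r G k => Finset.univ.filter (fun μ : Mk C N => μ.2.val < m)), Finset.prod_pair, sq]
    · have h := Pr_del_card (N := N) (m := m) hC
      exact mul_le_mul h h (by positivity) (by positivity)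
    · simp only [hS, Finset.mem_filter, Finset.mem_univ, true_and] at hz
      simpa using hz
  · rw [Finset.sum_const, nsmul_eq_mul]
    gcongr
    have := Finset.card_le_univ S
    simp only [Fintype.card_prod, Fintype.card_sum, Fintype.card_fin] at this
    have h : (S.card:ℝ) ≤ (((r + r) * (G * k) * (k * k) : ℕ) : ℝ) := by exact_mod_cast this
    refine h.trans (le_of_eq ?_)
    push_cast; ring

/-- colour Hall obstruction -/
def E3bad (b : VS r → Fin G) (c : Lab r G k → Mk C N) : Prop :=
  hallBad (fun p : (VS r × Fin k) × Fin k => (c (p.1.1, b p.1.1, p.1.2, p.2)).1)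

lemma Pr_E3 (hk : k = 40) (hN : 0 < N) (hC5 : 5 ≤ C) (hC : 2 * r * k ≤ C) (b : VS r → Fin G) :
    Pr (fun c : Lab r G k → Mk C N => E3bad b c) ≤ 1 / C := by
  have : Nonempty (Mk C N) := ⟨(⟨0, by omega⟩, ⟨0, hN⟩)⟩
  have : Nonempty (Fin N) := ⟨⟨0, hN⟩⟩
  let ι : (VS r × Fin k) × Fin k → Lab r G k := fun p => (p.1.1, b p.1.1, p.1.2, p.2)
  have hι : Function.Injective ι := by
    rintro ⟨⟨x, j⟩, s⟩ ⟨⟨x', j'⟩, s'⟩ h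
    simp only [ι, Prod.mk.injEq] at h
    simp [h]
  have h1 := Av_inj (Y := Mk C N) ι hι (fun f => ind (hallBad (fun p => (f p).1)))
  have h2 := Av_equiv (Equiv.arrowProdEquivProdArrow ((VS r × Fin k) × Fin k) (fun _ => Fin C) (fun _ => Fin N))
    (fun f => ind (hallBad f.1))
  have h3 := Av_fst (β := (VS r × Fin k) × Fin k → Fin N) (fun f : (VS r × Fin k) × Fin k → Fin C => ind (hallBad f))
  have h4 := Pr_hall (X := VS r × Fin k) (Y := Fin C) (by simp; nlinarith) (by simpa using hC5) k hk
  rw [Fintype.card_fin] at h4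
  unfold E3bad Pr at *
  refine le_trans (le_of_eq ?_) h4
  rw [← h3, ← h2]
  exact h1

lemma Pr_E45 (hk : k = 40) (hr : 5 ≤ r) (b : VS r → Fin G) (s : VS r → Fin k → Fin k) (σ : Fin r → VS r)
    (hσ : Function.Injective σ) :
    Pr (fun T : Lab r G k → Fin r => hallBad (fun p : Fin r × Fin k => T (σ p.1, b (σ p.1), p.2, s (σ p.1) p.2))) ≤ 1 / r := by
  have : Nonempty (Fin r) := ⟨⟨0, by omega⟩⟩
  let ι : Fin r × Fin k → Lab r G k := fun p => (σ p.1, b (σ p.1), p.2, s (σ p.1) p.2)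
  have hι : Function.Injective ι := by
    rintro ⟨x, j⟩ ⟨x', j'⟩ h
    simp only [ι, Prod.mk.injEq] at h
    simp [hσ h.1, h.2.2.1]
  have h1 := Av_inj (Y := Fin r) ι hι (fun f => ind (hallBad f))
  have h4 := Pr_hall (X := Fin r) (Y := Fin r) le_rfl (by simpa using hr) k hk
  rw [Fintype.card_fin] at h4
  refine le_trans (le_of_eq ?_) h4
  exact h1

/-- a good perfect matching for pattern b -/
def PMok (m : ℕ) (b : VS r → Fin G) (T : Lab r G k → Fin r) (c : Lab r G k → Mk C N)
    (M : Perm (Fin r)) (l : Fin r → Lab r G k) : Prop :=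
  (∀ v, rep T (v, M v) = some (l v) ∧ (l v).2.1 = b (l v).1 ∧ ¬ del m (c (l v))) ∧
  Function.Injective (fun v => (c (l v)).1)

lemma PMok_owner {m : ℕ} {b : VS r → Fin G} {T : Lab r G k → Fin r} {c : Lab r G k → Mk C N}
    {M : Perm (Fin r)} {l : Fin r → Lab r G k} (h : PMok m b T c M l) (v : Fin r) :
    (l v).1 = Sum.inl v ∨ (l v).1 = Sum.inr (M v) := by
  have := rep_some (h.1 v).1
  generalize l v = q at this
  obtain ⟨x, q⟩ := q
  cases x <;> simp [eT] at this ⊢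
  · exact this.1
  · exact this.2

lemma PMok_owner_inj {m : ℕ} {b : VS r → Fin G} {T : Lab r G k → Fin r} {c : Lab r G k → Mk C N}
    {M : Perm (Fin r)} {l : Fin r → Lab r G k} (h : PMok m b T c M l) :
    Function.Injective (fun v => (l v).1) := by
  intro v w hvw
  simp only at hvw
  rcases PMok_owner h v with h1 | h1 <;> rcases PMok_owner h w with h2 | h2 <;>
    rw [h1, h2] at hvw
  · exact Sum.inl_injective hvw
  · cases hvw
  · cases hvw
  · exact M.injective (Sum.inr_injective hvw)

lemma exists_PM (b : VS r → Fin G) (T : Lab r G k → Fin r) (c : Lab r G k → Mk C N)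
    (s : VS r → Fin k → Fin k) (hs1 : ∀ x j, ¬ del m (c (x, b x, j, s x j)))
    (hs2 : Function.Injective (fun p : VS r × Fin k => (c (p.1, b p.1, p.2, s p.1 p.2)).1)) (hk : 0 < k)
    (h1 : ¬ E1bad T)
    (h4 : ¬ hallBad (fun p : Fin r × Fin k => T (Sum.inl p.1, b (Sum.inl p.1), p.2, s (Sum.inl p.1) p.2)))
    (h5 : ¬ hallBad (fun p : Fin r × Fin k => T (Sum.inr p.1, b (Sum.inr p.1), p.2, s (Sum.inr p.1) p.2))) :
    ∃ M l, PMok m b T c M l := by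
  obtain ⟨M, hM⟩ := hall_match (fun p : (Fin r ⊕ Fin r) × Fin k => T (p.1, b p.1, p.2, s p.1 p.2))
    (fun x j => ¬ lost T (x, b x, j, s x j)) (by
      intro x
      by_cases hx : ∃ i0, lost T (x, b x, i0, s x i0)
      · obtain ⟨i0, hi0⟩ := hx
        refine ⟨i0, fun i hi hl => ?_⟩
        refine h1 ⟨(x, b x, i0, s x i0), (x, b x, i, s x i), ?_, rfl, hi0, hl⟩
        simp only [ne_eq, Prod.mk.injEq, not_and, true_and]
        intro h; exact absurd h.symm hi
      · push Not at hx
        exact ⟨⟨0, hk⟩, fun i _ => hx i⟩) h4 h5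
  have : ∀ v, ∃ p : VS r × Fin k, (p.1 = Sum.inl v ∨ p.1 = Sum.inr (M v)) ∧
      ¬ lost T (p.1, b p.1, p.2, s p.1 p.2) ∧ eT T (p.1, b p.1, p.2, s p.1 p.2) = (v, M v) := by
    intro v
    rcases hM v with ⟨j, hj1, hj2⟩ | ⟨j, hj1, hj2⟩
    · exact ⟨(Sum.inl v, j), Or.inl rfl, hj1, by simpa [eT] using hj2⟩
    · exact ⟨(Sum.inr (M v), j), Or.inr rfl, hj1, by simpa [eT] using hj2⟩
  choose p hp1 hp2 hp3 using this
  refine ⟨M, fun v => ((p v).1, b (p v).1, (p v).2, s (p v).1 (p v).2), ?_, ?_⟩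
  · intro v
    refine ⟨?_, rfl, hs1 _ _⟩
    have := hp2 v
    unfold lost at this
    push Not at this
    rw [← this, hp3]
  · intro v w hvw
    have h := hs2 hvw
    have h' := congrArg Prod.fst h
    rcases hp1 v with h1 | h1 <;> rcases hp1 w with h2 | h2 <;> rw [h1, h2] at h'
    · exact Sum.inl_injective h'
    · cases h'
    · cases h'
    · exact M.injective (Sum.inr_injective h')

lemma Pr_noPM (hk : k = 40) (hr : 5 ≤ r) (hG : 0 < G) (hN : 0 < N) (hC5 : 5 ≤ C) (hC : 4 * r * k ≤ C)
    (b : VS r → Fin G) :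
    Pr (fun ω : (Lab r G k → Fin r) × (Lab r G k → Mk C N) => ¬ ∃ M l, PMok m b ω.1 ω.2 M l) ≤
      12 * ((G * k * k : ℕ) : ℝ)^4 / r + 2 / r + (2 * r * G * k^3 * (m / N : ℝ)^2 + 1 / C) := by
  have : Nonempty (Fin r) := ⟨⟨0, by omega⟩⟩
  have : Nonempty (Mk C N) := ⟨(⟨0, by omega⟩, ⟨0, hN⟩)⟩
  rw [Pr_prod]
  unfold Pr
  rw [Av_comm]
  set B : ℝ := 12 * ((G * k * k : ℕ) : ℝ)^4 / r + 2 / r with hB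
  have hB0 : 0 ≤ B := by positivity
  have key : ∀ c : Lab r G k → Mk C N, (Av fun T : Lab r G k → Fin r => ind (¬ ∃ M l, PMok m b T c M l)) ≤
      B + ind (E2bad m c ∨ E3bad b c) := by
    intro c
    by_cases hc : E2bad m c ∨ E3bad b c
    · rw [ind_true hc]
      have := Pr_le_one (fun T : Lab r G k → Fin r => ¬ ∃ M l, PMok m b T c M l)
      unfold Pr at this
      linarith
    · rw [ind_false hc, add_zero]
      push Not at hc
      obtain ⟨s, hs1, hs2⟩ := hall_select (fun p : (VS r × Fin k) × Fin k => (c (p.1.1, b p.1.1, p.1.2, p.2)).1)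
        (fun p i => ¬ del m (c (p.1, b p.1, p.2, i))) (by
          rintro ⟨x, j⟩
          by_cases hx : ∃ i0, del m (c (x, b x, j, i0))
          · obtain ⟨i0, hi0⟩ := hx
            exact ⟨i0, fun i hi hl => hc.1 ⟨x, b x, j, i, i0, hi, hl, hi0⟩⟩
          · push Not at hx
            exact ⟨⟨0, by omega⟩, fun i _ => hx i⟩) (by simp; nlinarith) hc.2
      have h1 := Pr_E1 (r := r) (G := G) (k := k) (by omega) (by subst hk; nlinarith)
      have h4 := Pr_E45 hk hr b (fun x j => s (x, j)) Sum.inl Sum.inl_injective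
      have h5 := Pr_E45 hk hr b (fun x j => s (x, j)) Sum.inr Sum.inr_injective
      refine (Pr_mono (p := fun T : Lab r G k → Fin r => ¬ ∃ M l, PMok m b T c M l)
        (q := fun T => E1bad T ∨ (hallBad (fun p : Fin r × Fin k => T (Sum.inl p.1, b (Sum.inl p.1), p.2, s (Sum.inl p.1, p.2))) ∨
          hallBad (fun p : Fin r × Fin k => T (Sum.inr p.1, b (Sum.inr p.1), p.2, s (Sum.inr p.1, p.2))))) ?_).trans ?_
      · intro T hT
        by_contra hcon
        push Not at hcon
        exact hT (exists_PM b T c (fun x j => s (x, j)) (fun x j => hs1 (x, j)) hs2 (by omega) hcon.1 hcon.2.1 hcon.2.2)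
      · refine (Pr_or_le _ _).trans ?_
        have := Pr_or_le (fun T : Lab r G k → Fin r => hallBad (fun p : Fin r × Fin k => T (Sum.inl p.1, b (Sum.inl p.1), p.2, s (Sum.inl p.1, p.2))))
          (fun T => hallBad (fun p : Fin r × Fin k => T (Sum.inr p.1, b (Sum.inr p.1), p.2, s (Sum.inr p.1, p.2))))
        have e : (2:ℝ) / r = 1 / r + 1 / r := by ring
        rw [hB, e]
        linarith
  refine (Av_mono key).trans ?_
  rw [Av_add, Av_const]
  have h2 := Pr_E2 (r := r) (G := G) (k := k) (C := C) (N := N) (m := m) (by omega) hN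
  have h3 := Pr_E3 (r := r) (G := G) (k := k) (C := C) (N := N) hk hN hC5 (by nlinarith) b
  have := Pr_or_le (fun c : Lab r G k → Mk C N => E2bad m c) (fun c => E3bad b c)
  unfold Pr at this h2 h3
  linarith
end pm

end

section
open Equiv

section sw
variable {r G k C N m g : ℕ}

/-- rainbow permutation -/
def Rb (m : ℕ) (T : Lab r G k → Fin r) (R : Fin r × Fin g → Fin r) (κ : Fin r × Fin r → Mk C N)
    (M : Perm (Fin r)) : Prop :=
  (∀ v, ((∃ l, eT T l = (v, M v)) ∨ ∃ j, R (v, j) = M v) ∧ ¬ del m (κ (v, M v))) ∧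
  Function.Injective (fun v => (κ (v, M v)).1)

/-- combined marks -/
noncomputable def kst (T : Lab r G k → Fin r) (c : Lab r G k → Mk C N) (κ : Fin r × Fin r → Mk C N)
    (e : Fin r × Fin r) : Mk C N :=
  (rep T e).elim (κ e) c

lemma PMok_Rb {b : VS r → Fin G} {T : Lab r G k → Fin r} {c : Lab r G k → Mk C N}
    {M : Perm (Fin r)} {l : Fin r → Lab r G k} (h : PMok m b T c M l)
    (R : Fin r × Fin g → Fin r) (κ : Fin r × Fin r → Mk C N) : Rb m T R (kst T c κ) M := by
  have e : ∀ v, kst T c κ (v, M v) = c (l v) := by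
    intro v; simp [kst, (h.1 v).1]
  refine ⟨fun v => ⟨Or.inl ⟨l v, rep_some (h.1 v).1⟩, ?_⟩, ?_⟩
  · rw [e]; exact (h.1 v).2.2
  · simp only [e]; exact h.2

/-- good pattern -/
def goodb (m : ℕ) (b : VS r → Fin G) (T : Lab r G k → Fin r) (c : Lab r G k → Mk C N)
    (R : Fin r × Fin g → Fin r) (κ : Fin r × Fin r → Mk C N) 
    (M : Bool → Perm (Fin r)) (l : Fin r → Lab r G k) : Prop :=
  PMok m b T c (M false) l ∧ Perm.sign (M false) ≠ Perm.sign (M true) ∧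
    (Finset.univ.filter (fun v => M true v ≠ M false v)).card ≤ 2 ∧
    ∀ e, Rb m T R (kst T c κ) (M e)

/-- colours allowed for a switch -/
def goodset (m : ℕ) (U : Finset (Fin C)) (M : Perm (Fin r)) (e : Fin r × Fin r) : Finset (Mk C N) :=
  Finset.univ.filter (fun μ => ¬ μ.2.val < m ∧ μ.1 ∉ U ∧ (if e.1 < M⁻¹ e.2 then μ.1.val < C / 2 else ¬ μ.1.val < C / 2))

lemma card_fin_lt (n a : ℕ) (h : a ≤ n) : (Finset.univ.filter (fun i : Fin n => i.val < a)).card = a := by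
  rw [Fin.card_filter_val_lt]; omega

lemma goodset_card (U : Finset (Fin C)) (hU : U.card ≤ r) (M : Perm (Fin r)) (e : Fin r × Fin r)
    (hC : 20 ≤ C) (hCr : 20 * r ≤ C) (hN : 0 < N) (hm : 10 * m ≤ N) :
    (1/3 : ℝ) ≤ ((goodset m U M e : Finset (Mk C N)).card : ℝ) / Fintype.card (Mk C N) := by
  have key : ∀ p : Fin C → Prop, ∀ _ : DecidablePred p, C / 2 ≤ (Finset.univ.filter p).card →
     (1/3 : ℝ) ≤ ((Finset.univ.filter (fun μ : Mk C N => ¬ μ.2.val < m ∧ μ.1 ∉ U ∧ p μ.1)).card : ℝ) / Fintype.card (Mk C N) := by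
    intro p _ hp
    have e1 : (Finset.univ.filter (fun μ : Mk C N => ¬ μ.2.val < m ∧ μ.1 ∉ U ∧ p μ.1)) =
      ((Finset.univ.filter p) \ U) ×ˢ (Finset.univ.filter (fun i : Fin N => ¬ i.val < m)) := by
      ext μ; simp; tauto
    have h1 : (Finset.univ.filter (fun i : Fin N => ¬ i.val < m)).card = N - m := by
      have := Finset.card_filter_add_card_filter_not (s := (Finset.univ : Finset (Fin N))) (fun i => i.val < m)
      rw [card_fin_lt N m (by omega), Finset.card_univ, Fintype.card_fin] at this
      omega
    have h2 : C / 2 - r ≤ ((Finset.univ.filter p) \ U).card := by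
      have := Finset.le_card_sdiff U (Finset.univ.filter p)
      omega
    rw [e1, Finset.card_product, h1, Fintype.card_prod, Fintype.card_fin, Fintype.card_fin]
    have hpos : (0:ℝ) < ((C * N : ℕ) : ℝ) := by exact_mod_cast Nat.mul_pos (by omega) hN
    rw [le_div_iff₀ hpos]
    push_cast
    rw [Nat.cast_sub (by omega)]
    have h3 : (0.425:ℝ) * C ≤ (((Finset.univ.filter p) \ U).card : ℝ) := by
      have h4 : C ≤ 2 * (((Finset.univ.filter p) \ U).card) + 1 + 2 * r := by omega
      have h4' : (C:ℝ) ≤ 2 * (((Finset.univ.filter p) \ U).card) + 1 + 2 * r := by exact_mod_cast h4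
      have h5 : (20:ℝ) * r ≤ C := by exact_mod_cast hCr
      have h6 : (20:ℝ) ≤ C := by exact_mod_cast hC
      linarith
    have h7 : (0.9:ℝ) * N ≤ (N:ℝ) - m := by
      have : (10:ℝ) * m ≤ N := by exact_mod_cast hm
      linarith
    have := mul_le_mul h3 h7 (by positivity) (by positivity)
    have h8 : (0:ℝ) ≤ (C:ℝ) * N := by positivity
    nlinarith
  unfold goodset
  have hlt := card_fin_lt C (C/2) (by omega)
  by_cases h : e.1 < M⁻¹ e.2
  · simp only [h, if_true]
    exact key (fun i => i.val < C / 2) inferInstance (by rw [hlt])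
  · simp only [h, if_false]
    refine key (fun i => ¬ i.val < C / 2) inferInstance ?_
    have := Finset.card_filter_add_card_filter_not (s := (Finset.univ : Finset (Fin C))) (fun i => i.val < C/2)
    rw [hlt, Finset.card_univ, Fintype.card_fin] at this
    omega

open Classical in
/-- pairs available for switching -/
noncomputable def swP (T : Lab r G k → Fin r) (M : Perm (Fin r)) : Finset (Fin r × Fin r) :=
  Finset.univ.filter (fun p => p.1 < p.2 ∧ rep T (p.1, M p.2) = none ∧ rep T (p.2, M p.1) = none)

lemma card_lt_pairs (r : ℕ) : r * r ≤ 2 * (Finset.univ.filter (fun p : Fin r × Fin r => p.1 < p.2)).card + r := by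
  have h1 : (Finset.univ : Finset (Fin r × Fin r)) ⊆ (Finset.univ.filter (fun p : Fin r × Fin r => p.1 < p.2)) ∪
     ((Finset.univ.filter (fun p : Fin r × Fin r => p.1 < p.2)).image Prod.swap) ∪ (Finset.univ.image (fun v : Fin r => (v, v))) := by
    rintro ⟨v, u⟩ -
    simp only [Finset.mem_union, Finset.mem_filter, Finset.mem_univ, true_and, Finset.mem_image, Prod.exists, Prod.swap_prod_mk, Prod.mk.injEq]
    rcases lt_trichotomy v u with h | h | h
    · exact Or.inl (Or.inl h)
    · exact Or.inr ⟨v, rfl, h⟩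
    · exact Or.inl (Or.inr ⟨u, v, h, rfl, rfl⟩)
  have h2 := Finset.card_le_card h1
  have h3 := h2.trans ((Finset.card_union_le _ _).trans (Nat.add_le_add_right (Finset.card_union_le _ _) _))
  have h4 := Finset.card_image_le (s := Finset.univ.filter (fun p : Fin r × Fin r => p.1 < p.2)) (f := Prod.swap)
  have h5 := Finset.card_image_le (s := (Finset.univ : Finset (Fin r))) (f := fun v => (v, v))
  rw [Finset.card_univ, Fintype.card_fin] at h5
  rw [Finset.card_univ, Fintype.card_prod, Fintype.card_fin] at h3
  omega

lemma swP_card (T : Lab r G k → Fin r) (M : Perm (Fin r)) (hr : 2 + 8 * (G * k * k) ≤ r) :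
    (r:ℝ)^2 / 4 ≤ (swP T M).card := by
  classical
  have h1 : (Finset.univ.filter (fun p : Fin r × Fin r => p.1 < p.2)) ⊆ swP T M ∪
      Finset.univ.image (fun l : Lab r G k => if (eT T l).1 < M⁻¹ (eT T l).2 then ((eT T l).1, M⁻¹ (eT T l).2)
        else (M⁻¹ (eT T l).2, (eT T l).1)) := by
    rintro ⟨v, u⟩ hp
    simp only [Finset.mem_filter, Finset.mem_univ, true_and] at hp
    rw [Finset.mem_union]
    by_cases h1 : rep T (v, M u) = none
    · by_cases h2 : rep T (u, M v) = none
      · left; simp [swP, hp, h1, h2]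
      · right
        obtain ⟨l, hl⟩ := Option.ne_none_iff_exists'.mp h2
        rw [Finset.mem_image]
        refine ⟨l, Finset.mem_univ _, ?_⟩
        rw [rep_some hl]
        simp [hp.not_gt]
    · right
      obtain ⟨l, hl⟩ := Option.ne_none_iff_exists'.mp h1
      rw [Finset.mem_image]
      refine ⟨l, Finset.mem_univ _, ?_⟩
      rw [rep_some hl]
      simp [hp]
  have h2 := (Finset.card_le_card h1).trans (Finset.card_union_le _ _)
  have h3 := Finset.card_image_le (s := (Finset.univ : Finset (Lab r G k))) (f := fun l : Lab r G k => if (eT T l).1 < M⁻¹ (eT T l).2 then ((eT T l).1, M⁻¹ (eT T l).2)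
        else (M⁻¹ (eT T l).2, (eT T l).1))
  rw [Finset.card_univ] at h3
  simp only [Fintype.card_prod, Fintype.card_sum, Fintype.card_fin] at h3
  have h4 := card_lt_pairs r
  set A := G * k * k with hA
  have h3' := h2.trans (Nat.add_le_add_left h3 _)
  have e : (r + r) * (G * (k * k)) = 2 * r * A := by rw [hA]; ring
  rw [e] at h3'
  have h5 : r * r ≤ 2 * (swP T M).card + 4 * r * A + r := by nlinarith
  have h6 : (r:ℝ) * r ≤ 2 * (swP T M).card + 4 * r * A + r := by exact_mod_cast h5
  have h7 : (2:ℝ) + 8 * A ≤ r := by exact_mod_cast hr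
  have h8 : (0:ℝ) ≤ r := by positivity
  nlinarith

lemma switch_good {b : VS r → Fin G} {T : Lab r G k → Fin r} {c : Lab r G k → Mk C N}
    {M : Perm (Fin r)} {l : Fin r → Lab r G k} (h : PMok m b T c M l)
    (R : Fin r × Fin g → Fin r) (κ : Fin r × Fin r → Mk C N) (a : (Fin r × Fin r) × Fin g)
    (ha : a.1 ∈ swP T M) (hA : swA M a R)
    (hB : swB M (goodset m (Finset.univ.image (fun v => (c (l v)).1)) M) a κ) :
    ∃ M' : Bool → Perm (Fin r), goodb m b T c R κ M' l := by
  classical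
  obtain ⟨⟨v, u⟩, i⟩ := a
  simp only [swP, Finset.mem_filter, Finset.mem_univ, true_and] at ha
  obtain ⟨hvu, hn1, hn2⟩ := ha
  have hne : v ≠ u := hvu.ne
  have hA1 := hA (v, i) (by simp)
  have hA2 := hA (u, i) (by simp)
  simp only [swap_apply_left, swap_apply_right, Finset.mem_singleton] at hA1 hA2
  have hB1 := hB (v, M u) (by simp)
  have hB2 := hB (u, M v) (by simp)
  have hi : ∀ x, M⁻¹ (M x) = x := fun x => M.symm_apply_apply x
  simp only [goodset, Finset.mem_filter, Finset.mem_univ, true_and, hi, hvu, if_true,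
    hvu.not_gt, if_false, Finset.mem_image, not_exists] at hB1 hB2
  set M1 : Perm (Fin r) := M * swap v u with hM1
  have e1 : M1 v = M u := by simp [hM1]
  have e2 : M1 u = M v := by simp [hM1]
  have e3 : ∀ w, w ≠ v → w ≠ u → M1 w = M w := by
    intro w h1 h2; simp [hM1, swap_apply_of_ne_of_ne h1 h2]
  have k1 : kst T c κ (v, M1 v) = κ (v, M u) := by rw [e1]; simp [kst, hn1]
  have k2 : kst T c κ (u, M1 u) = κ (u, M v) := by rw [e2]; simp [kst, hn2]
  have k3 : ∀ w, w ≠ v → w ≠ u → kst T c κ (w, M1 w) = c (l w) := by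
    intro w h1 h2; rw [e3 w h1 h2]; simp [kst, (h.1 w).1]
  have hRb1 : Rb m T R (kst T c κ) M1 := by
    constructor
    · intro w
      by_cases hw1 : w = v
      · subst hw1
        refine ⟨Or.inr ⟨i, by rw [e1]; exact hA1⟩, ?_⟩
        rw [k1]; exact hB1.1
      by_cases hw2 : w = u
      · subst hw2
        refine ⟨Or.inr ⟨i, by rw [e2]; exact hA2⟩, ?_⟩
        rw [k2]; exact hB2.1
      refine ⟨Or.inl ⟨l w, by rw [e3 w hw1 hw2]; exact rep_some (h.1 w).1⟩, ?_⟩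
      rw [k3 w hw1 hw2]; exact (h.1 w).2.2
    · have main : ∀ w w', w ≠ w' → (kst T c κ (w, M1 w)).1 = (kst T c κ (w', M1 w')).1 →
          (w = v → False) ∧ (w = u → False) := by
        intro w w' hww hc
        constructor
        · rintro rfl
          rw [k1] at hc
          by_cases hw2 : w' = u
          · subst hw2; rw [k2] at hc
            apply hB2.2.2; rw [← hc]; exact hB1.2.2
          · rw [k3 w' (Ne.symm hww) hw2] at hc
            exact hB1.2.1 w' hc.symm
        · rintro rfl
          rw [k2] at hc
          by_cases hw2 : w' = v
          · subst hw2; rw [k1] at hc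
            apply hB2.2.2; rw [hc]; exact hB1.2.2
          · rw [k3 w' hw2 (Ne.symm hww)] at hc
            exact hB2.2.1 w' hc.symm
      intro w w' hc
      by_contra hww
      have a1 := main w w' hww hc
      have a2 := main w' w (Ne.symm hww) hc.symm
      simp only at hc
      rw [k3 w a1.1 a1.2, k3 w' a2.1 a2.2] at hc
      exact hww (h.2 hc)
  refine ⟨fun e => if e then M1 else M, ?_, ?_, ?_, ?_⟩
  · exact h
  · simp only [Bool.false_eq_true, if_false, if_true, hM1, map_mul, Perm.sign_swap hne]
    intro hh
    have : (Perm.sign M : ℤˣ) * 1 = Perm.sign M * -1 := by rw [mul_one]; exact hh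
    have := mul_left_cancel this
    exact absurd this (by decide)
  · refine (Finset.card_le_card (t := {v, u}) ?_).trans Finset.card_le_two
    intro w hw
    simp only [Bool.false_eq_true, if_false, if_true, Finset.mem_filter, Finset.mem_univ, true_and] at hw
    by_contra hcon
    simp only [Finset.mem_insert, Finset.mem_singleton, not_or] at hcon
    exact hw (e3 w hcon.1 hcon.2)
  · intro e
    cases e
    · exact PMok_Rb h R κ
    · exact hRb1

/-- failure probability for a fixed pattern -/
noncomputable def dlt (r G k C N m g : ℕ) : ℝ :=
  12 * ((G * k * k : ℕ) : ℝ)^4 / r + 2 / r + (2 * r * G * k^3 * (m / N : ℝ)^2 + 1 / C) + (36 / g + 1296 / (r:ℝ)^2)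

lemma Pr_notgood (hk : k = 40) (hG : 0 < G) (hg : 0 < g) (hN : 0 < N) (hC5 : 20 ≤ C) (hC : 4 * r * k ≤ C)
    (hm : 10 * m ≤ N) (hrA : 2 + 8 * (G * k * k) ≤ r) (b : VS r → Fin G) :
    Pr (fun ω : ((Lab r G k → Fin r) × (Lab r G k → Mk C N)) × ((Fin r × Fin g → Fin r) × (Fin r × Fin r → Mk C N)) =>
      ¬ ∃ M l, goodb m b ω.1.1 ω.1.2 ω.2.1 ω.2.2 M l) ≤ dlt r G k C N m g := by
  have hr5 : 5 ≤ r := by subst hk; nlinarith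
  have : Nonempty (Fin r) := ⟨⟨0, by omega⟩⟩
  have : Nonempty (Mk C N) := ⟨(⟨0, by omega⟩, ⟨0, hN⟩)⟩
  rw [Pr_prod]
  have h1 := Pr_noPM (m := m) hk hr5 hG hN (by omega) hC b
  set B : ℝ := 36 / g + 1296 / (r:ℝ)^2 with hB
  have hB0 : 0 ≤ B := by positivity
  have key : ∀ ω : (Lab r G k → Fin r) × (Lab r G k → Mk C N),
      Pr (fun ω2 : (Fin r × Fin g → Fin r) × (Fin r × Fin r → Mk C N) => ¬ ∃ M l, goodb m b ω.1 ω.2 ω2.1 ω2.2 M l) ≤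
      ind (¬ ∃ M l, PMok m b ω.1 ω.2 M l) + B := by
    intro ω
    by_cases hω : ∃ M l, PMok m b ω.1 ω.2 M l
    · rw [ind_false (not_not.mpr hω), zero_add]
      obtain ⟨M, l, hM⟩ := hω
      refine le_trans (Pr_mono ?_) (switch_prob (g := g) (Mk := Mk C N) M
        (goodset m (Finset.univ.image (fun v => (ω.2 (l v)).1)) M) (by omega) hg ?_ (swP ω.1 M) ?_ ?_)
      · rintro ω2 hn ⟨a, ha, hA, hB⟩
        obtain ⟨M', hM'⟩ := switch_good hM ω2.1 ω2.2 a ha hA hB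
        exact hn ⟨M', l, hM'⟩
      · intro e
        apply goodset_card _ _ _ _ hC5 (by subst hk; nlinarith) hN hm
        exact Finset.card_image_le.trans (by simp)
      · intro p hp
        simp only [swP, Finset.mem_filter, Finset.mem_univ, true_and] at hp
        exact hp.1
      · exact swP_card _ _ hrA
    · rw [ind_true hω]
      have := Pr_le_one (fun ω2 : (Fin r × Fin g → Fin r) × (Fin r × Fin r → Mk C N) => ¬ ∃ M l, goodb m b ω.1 ω.2 ω2.1 ω2.2 M l)
      linarith
  refine (Av_mono key).trans ?_
  rw [Av_add, Av_const]
  unfold dlt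
  unfold Pr at h1
  linarith
end sw

end

section
open Equiv

section agree
variable {r G k C N m g : ℕ}

lemma agree_bound {b : VS r → Fin G} {T : Lab r G k → Fin r} {c : Lab r G k → Mk C N}
    {M : Perm (Fin r)} {l : Fin r → Lab r G k} (h : PMok m b T c M l) (q : ℕ) (hG : 0 < G) :
    Pr (fun b' : VS r → Fin G => ∃ M' : Perm (Fin r), ∃ l', PMok m b' T c M' l' ∧
      q ≤ (Finset.univ.filter (fun v => M v = M' v)).card) ≤ 2 ^ r / (G:ℝ) ^ q := by
  classical
  have : Nonempty (Fin G) := ⟨⟨0, hG⟩⟩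
  have hinj := PMok_owner_inj h
  have h1 : Pr (fun b' : VS r → Fin G => ∃ M' : Perm (Fin r), ∃ l', PMok m b' T c M' l' ∧
      q ≤ (Finset.univ.filter (fun v => M v = M' v)).card) ≤
      Pr (fun b' : VS r → Fin G => ∃ S ∈ Finset.powersetCard q (Finset.univ : Finset (Fin r)),
        ∀ x ∈ S.image (fun v => (l v).1), b' x ∈ ({b x} : Finset (Fin G))) := by
    apply Pr_mono
    rintro b' ⟨M', l', hP, hq⟩
    obtain ⟨S, hS, hc⟩ := Finset.exists_subset_card_eq hq
    refine ⟨S, Finset.mem_powersetCard.mpr ⟨Finset.subset_univ _, hc⟩, ?_⟩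
    intro x hx
    obtain ⟨v, hv, rfl⟩ := Finset.mem_image.mp hx
    have hM : M v = M' v := by simpa using hS hv
    have e1 := h.1 v
    have e2 := hP.1 v
    rw [← hM, e1.1] at e2
    have e3 := Option.some.inj e2.1
    rw [← e3] at e2
    rw [Finset.mem_singleton, ← e2.2.1, e1.2.1]
  refine h1.trans ((Pr_exists_le _ _).trans ?_)
  have h2 : ∀ S ∈ Finset.powersetCard q (Finset.univ : Finset (Fin r)),
      Pr (fun b' : VS r → Fin G => ∀ x ∈ S.image (fun v => (l v).1), b' x ∈ ({b x} : Finset (Fin G))) = 1 / (G:ℝ)^q := by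
    intro S hS
    rw [Pr_pi_on]
    simp only [Finset.card_singleton, Fintype.card_fin, Nat.cast_one, Finset.prod_const]
    rw [Finset.card_image_of_injective _ hinj, (Finset.mem_powersetCard.mp hS).2]
    simp
  rw [Finset.sum_congr rfl h2, Finset.sum_const, Finset.card_powersetCard, Finset.card_univ, Fintype.card_fin, nsmul_eq_mul]
  rw [mul_one_div]
  gcongr
  exact_mod_cast Nat.choose_le_two_pow r q

lemma supp_bound (M : Bool → Perm (Fin r)) (M' : Bool → Perm (Fin r)) (e e' : Bool)
    (h : (Finset.univ.filter (fun v => M true v ≠ M false v)).card ≤ 2)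
    (h' : (Finset.univ.filter (fun v => M' true v ≠ M' false v)).card ≤ 2) (q s : ℕ)
    (hq : (Finset.univ.filter (fun v => M false v = M' false v)).card < q) (hs : s + q + 4 ≤ r) :
    s ≤ ((M e)⁻¹ * M' e').support.card := by
  classical
  have h1 : (Finset.univ : Finset (Fin r)) ⊆ ((M e)⁻¹ * M' e').support ∪ 
    ((Finset.univ.filter (fun v => M false v = M' false v)) ∪ 
     ((Finset.univ.filter (fun v => M true v ≠ M false v)) ∪ (Finset.univ.filter (fun v => M' true v ≠ M' false v)))) := by
    intro v _
    simp only [Finset.mem_union, Perm.mem_support, Finset.mem_filter, Finset.mem_univ, true_and]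
    by_contra hcon
    push Not at hcon
    obtain ⟨a1, a2, a3, a4⟩ := hcon
    have b1 : M' e' v = M e v := by
      have := congrArg (M e) a1
      rw [Perm.mul_apply] at this
      simpa using this
    have b2 : M e v = M false v := by cases e <;> simp [a3]
    have b3 : M' e' v = M' false v := by cases e' <;> simp [a4]
    exact a2 (by rw [← b2, ← b1, b3])
  have h2 := Finset.card_le_card h1
  have h3 := Finset.card_union_le ((M e)⁻¹ * M' e').support ((Finset.univ.filter (fun v => M false v = M' false v)) ∪ 
     ((Finset.univ.filter (fun v => M true v ≠ M false v)) ∪ (Finset.univ.filter (fun v => M' true v ≠ M' false v))))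
  have h4 := Finset.card_union_le (Finset.univ.filter (fun v => M false v = M' false v)) 
     ((Finset.univ.filter (fun v => M true v ≠ M false v)) ∪ (Finset.univ.filter (fun v => M' true v ≠ M' false v)))
  have h5 := Finset.card_union_le (Finset.univ.filter (fun v => M true v ≠ M false v)) (Finset.univ.filter (fun v => M' true v ≠ M' false v))
  rw [Finset.card_univ, Fintype.card_fin] at h2
  omega

end agree

section sm
variable {n G k C N m g : ℕ}

/-- second moment denominator -/
noncomputable def Dn (n G q s : ℕ) (η : ℝ) : ℝ :=
  ((n:ℝ)+1) * (2/(s*(1-η)) + Real.exp (-(s*η/2))) / 2 + 4 * ((n:ℝ)+1) * (2 ^ (n+1) / (G:ℝ)^q)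

lemma sm_fixed (hn : 1 ≤ n) (hG : 0 < G) (q s : ℕ) (hs0 : 0 < s) (hs : s + q + 4 ≤ n + 1) (η : ℝ) (hη0 : 0 < η) (hη : η ≤ 1/2)
    (T : Lab (n+1) G k → Fin (n+1)) (c : Lab (n+1) G k → Mk C N)
    (R : Fin (n+1) × Fin g → Fin (n+1)) (κ : Fin (n+1) × Fin (n+1) → Mk C N)
    (hhalf : Pr (fun b : VS (n+1) → Fin G => ¬ ∃ M l, goodb m b T c R κ M l) < 1/2) :
    1 ≤ Pr (fun φ : Perm (Fin (n+1)) => ∃ M, Rb m T R (kst T c κ) M ∧ cyc (φ * M)) * Dn n G q s η := by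
  classical
  have : Nonempty (Fin G) := ⟨⟨0, hG⟩⟩
  let Gd : Finset (VS (n+1) → Fin G) := Finset.univ.filter (fun b => ∃ M l, goodb m b T c R κ M l)
  have hex : ∀ b : VS (n+1) → Fin G, ∃ M : Bool → Perm (Fin (n+1)),
      b ∈ Gd → ∃ l, goodb m b T c R κ M l := by
    intro b
    by_cases hb : b ∈ Gd
    · obtain ⟨M, l, h⟩ := (Finset.mem_filter.mp hb).2
      exact ⟨M, fun _ => ⟨l, h⟩⟩
    · exact ⟨fun _ => 1, fun h => absurd h hb⟩
  choose M hM using hex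
  have hη1 : 0 < 1 - η := by linarith
  have h1 := second_moment hn Gd M (fun b hb => by obtain ⟨l, hl⟩ := hM b hb; exact hl.2.1)
    (fun b b' => q ≤ (Finset.univ.filter (fun v => M b false v = M b' false v)).card)
    (2/(s*(1-η)) + Real.exp (-(s*η/2))) (2 ^ (n+1) / (G:ℝ)^q) (by positivity) ?_ Fintype.card_pos ?_ ?_
  · refine h1.trans ?_
    unfold Dn
    refine mul_le_mul_of_nonneg_right (Pr_mono ?_) (by positivity)
    rintro φ ⟨b, hb, e, hc⟩
    obtain ⟨l, hl⟩ := hM b hb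
    exact ⟨M b e, hl.2.2.2 e, hc⟩
  · intro b hb b' hb' hbad e e'
    obtain ⟨l, hl⟩ := hM b hb
    obtain ⟨l', hl'⟩ := hM b' hb'
    refine I01_bound _ s η (by exact_mod_cast hs0) ?_ hη0 hη
    have := supp_bound (M b) (M b') e e' hl.2.2.1 hl'.2.2.1 q s (not_le.mp hbad) hs
    exact_mod_cast this
  · rw [Pr_not] at hhalf
    have e1 : Pr (fun b : VS (n+1) → Fin G => ∃ M l, goodb m b T c R κ M l) = Gd.card / Fintype.card (VS (n+1) → Fin G) := by
      rw [← Pr_mem]; simp [Gd]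
    rw [e1] at hhalf
    have hp : (0:ℝ) < Fintype.card (VS (n+1) → Fin G) := by exact_mod_cast Fintype.card_pos
    have : (1/2:ℝ) < Gd.card / Fintype.card (VS (n+1) → Fin G) := by linarith
    rw [lt_div_iff₀ hp] at this
    linarith
  · apply Av_le_const
    intro b
    by_cases hb : b ∈ Gd
    · obtain ⟨l, hl⟩ := hM b hb
      refine le_trans (Av_mono fun b' => ind_mono ?_) (agree_bound hl.1 q hG)
      rintro ⟨-, hb', hq⟩
      obtain ⟨l', hl'⟩ := hM b' hb'
      exact ⟨M b' false, l', hl'.1, hq⟩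
    · have : ∀ b' : VS (n+1) → Fin G, ind (b ∈ Gd ∧ b' ∈ Gd ∧ q ≤ (Finset.univ.filter (fun v => M b false v = M b' false v)).card) = 0 :=
        fun b' => ind_false fun h => hb h.1
      simp only [this, Av_const]
      positivity

lemma sm_avg (hk : k = 40) (hG : 0 < G) (hg : 0 < g) (hN : 0 < N) (hC5 : 20 ≤ C) (hC : 4 * (n+1) * k ≤ C)
    (hm : 10 * m ≤ N) (hrA : 2 + 8 * (G * k * k) ≤ n+1)
    (q s : ℕ) (hs0 : 0 < s) (hs : s + q + 4 ≤ n + 1) (η : ℝ) (hη0 : 0 < η) (hη : η ≤ 1/2) :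
    1 - 2 * dlt (n+1) G k C N m g ≤
    Av (fun ω : ((Lab (n+1) G k → Fin (n+1)) × (Lab (n+1) G k → Mk C N)) × ((Fin (n+1) × Fin g → Fin (n+1)) × (Fin (n+1) × Fin (n+1) → Mk C N)) =>
      Pr (fun φ : Perm (Fin (n+1)) => ∃ M, Rb m ω.1.1 ω.2.1 (kst ω.1.1 ω.1.2 ω.2.2) M ∧ cyc (φ * M))) * Dn n G q s η := by
  have : Nonempty (Mk C N) := ⟨(⟨0, by omega⟩, ⟨0, hN⟩)⟩
  have : Nonempty (Fin G) := ⟨⟨0, hG⟩⟩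
  have hη1 : 0 < 1 - η := by linarith
  have hD : 0 ≤ Dn n G q s η := by unfold Dn; positivity
  have hP := Pr_notgood (r := n+1) (m := m) (g := g) hk hG hg hN hC5 hC hm hrA
  have h1 : Av (fun ω : ((Lab (n+1) G k → Fin (n+1)) × (Lab (n+1) G k → Mk C N)) × ((Fin (n+1) × Fin g → Fin (n+1)) × (Fin (n+1) × Fin (n+1) → Mk C N)) =>
     Pr (fun b : VS (n+1) → Fin G => ¬ ∃ M l, goodb m b ω.1.1 ω.1.2 ω.2.1 ω.2.2 M l)) ≤ dlt (n+1) G k C N m g := by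
    unfold Pr at hP ⊢
    rw [Av_comm]
    exact Av_le_const hP
  have h2 := Pr_markov (f := fun ω : ((Lab (n+1) G k → Fin (n+1)) × (Lab (n+1) G k → Mk C N)) × ((Fin (n+1) × Fin g → Fin (n+1)) × (Fin (n+1) × Fin (n+1) → Mk C N)) =>
     Pr (fun b : VS (n+1) → Fin G => ¬ ∃ M l, goodb m b ω.1.1 ω.1.2 ω.2.1 ω.2.2 M l)) (fun _ => Pr_nonneg _) (t := 1/2) (by norm_num)
  have h3 := Pr_not (fun ω : ((Lab (n+1) G k → Fin (n+1)) × (Lab (n+1) G k → Mk C N)) × ((Fin (n+1) × Fin g → Fin (n+1)) × (Fin (n+1) × Fin (n+1) → Mk C N)) =>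
     1/2 ≤ Pr (fun b : VS (n+1) → Fin G => ¬ ∃ M l, goodb m b ω.1.1 ω.1.2 ω.2.1 ω.2.2 M l))
  have h4 : 1 - 2 * dlt (n+1) G k C N m g ≤ Pr (fun ω : ((Lab (n+1) G k → Fin (n+1)) × (Lab (n+1) G k → Mk C N)) × ((Fin (n+1) × Fin g → Fin (n+1)) × (Fin (n+1) × Fin (n+1) → Mk C N)) =>
     ¬ 1/2 ≤ Pr (fun b : VS (n+1) → Fin G => ¬ ∃ M l, goodb m b ω.1.1 ω.1.2 ω.2.1 ω.2.2 M l)) := by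
    rw [h3]; linarith
  refine h4.trans ?_
  rw [← Av_mul_right]
  refine Av_mono fun ω => ?_
  by_cases hω : 1/2 ≤ Pr (fun b : VS (n+1) → Fin G => ¬ ∃ M l, goodb m b ω.1.1 ω.1.2 ω.2.1 ω.2.2 M l)
  · rw [ind_false (not_not.mpr hω)]
    exact mul_nonneg (Pr_nonneg _) hD
  · rw [ind_true hω]
    exact sm_fixed (by omega) hG q s hs0 hs η hη0 hη _ _ _ _ (not_le.mp hω)
end sm

end

section
open Equiv

section rename
variable {r G k C N m g : ℕ}

/-- a rainbow Hamilton cycle in the label model -/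
def HC (m : ℕ) (T : Lab r G k → Fin r) (R : Fin r × Fin g → Fin r) (κ : Fin r × Fin r → Mk C N) : Prop :=
  ∃ M, Rb m T R κ M ∧ cyc M

lemma kst_avg (T : Lab r G k → Fin r) [Nonempty (Mk C N)] (F : (Fin r × Fin r → Mk C N) → ℝ) :
    (Av fun c : Lab r G k → Mk C N => Av fun κ : Fin r × Fin r → Mk C N => F (kst T c κ)) = Av F := by
  classical
  let ι : Fin r × Fin r → Lab r G k ⊕ (Fin r × Fin r) := fun e => (rep T e).elim (Sum.inr e) Sum.inl
  have hι : Function.Injective ι := by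
    intro e e' h
    cases h1 : rep T e with
    | none =>
      cases h2 : rep T e' with
      | none => simpa [ι, h1, h2] using h
      | some l => simp [ι, h1, h2] at h
    | some l =>
      cases h2 : rep T e' with
      | none => simp [ι, h1, h2] at h
      | some l' =>
        have : l = l' := by simpa [ι, h1, h2] using h
        subst this
        rw [← rep_some h1, rep_some h2]
  rw [← Av_inj ι hι F, ← Av_equiv (Equiv.sumArrowEquivProdArrow (Lab r G k) (Fin r × Fin r) (Mk C N)).symm, Av_prod]
  congr 1; funext c; congr 1; funext κ; congr 1; funext e
  simp only [Function.comp, ι, kst]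
  cases h1 : rep T e <;> simp [Equiv.sumArrowEquivProdArrow]

/-- rename of labels -/
def piL (φ : Perm (Fin r)) : Lab r G k ≃ Lab r G k := Equiv.prodCongr (Equiv.sumCongr (Equiv.refl _) φ) (Equiv.refl _)
/-- rename targets -/
def ET (φ : Perm (Fin r)) : (Lab r G k → Fin r) ≃ (Lab r G k → Fin r) :=
  (Equiv.piCongrRight (fun l : Lab r G k => (Sum.elim (fun _ => φ) (fun _ => Equiv.refl _) l.1 : Perm (Fin r)))).trans
    (Equiv.arrowCongr (piL φ) (Equiv.refl _))
/-- rename random choices -/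
def ER (φ : Perm (Fin r)) : (Fin r × Fin g → Fin r) ≃ (Fin r × Fin g → Fin r) :=
  Equiv.arrowCongr (Equiv.refl _) φ
/-- rename marks -/
def EK (φ : Perm (Fin r)) : (Fin r × Fin r → Mk C N) ≃ (Fin r × Fin r → Mk C N) :=
  Equiv.arrowCongr (Equiv.prodCongr (Equiv.refl _) φ) (Equiv.refl _)

lemma eT_ET (φ : Perm (Fin r)) (T : Lab r G k → Fin r) (l : Lab r G k) :
    eT (ET φ T) (piL φ l) = ((eT T l).1, φ (eT T l).2) := by
  obtain ⟨x, y⟩ := l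
  cases x <;> simp [eT, ET, piL, Equiv.arrowCongr]

lemma EK_apply (φ : Perm (Fin r)) (κ : Fin r × Fin r → Mk C N) (v w : Fin r) : EK φ κ (v, φ w) = κ (v, w) := by
  simp [EK, Equiv.arrowCongr]

lemma Rb_rename (φ : Perm (Fin r)) {T : Lab r G k → Fin r} {R : Fin r × Fin g → Fin r}
    {κ : Fin r × Fin r → Mk C N} {M : Perm (Fin r)} (h : Rb m T R κ M) :
    Rb m (ET φ T) (ER φ R) (EK φ κ) (φ * M) := by
  constructor
  · intro v
    obtain ⟨h1, h2⟩ := h.1 v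
    refine ⟨?_, by rw [Perm.mul_apply, EK_apply]; exact h2⟩
    rcases h1 with ⟨l, hl⟩ | ⟨j, hj⟩
    · exact Or.inl ⟨piL φ l, by rw [eT_ET, hl]; rfl⟩
    · exact Or.inr ⟨j, by rw [Perm.mul_apply, ← hj]; rfl⟩
  · have := h.2
    simpa only [Perm.mul_apply, EK_apply] using this

lemma HC_avg [Nonempty (Mk C N)] : 
    Av (fun ω : ((Lab r G k → Fin r) × (Lab r G k → Mk C N)) × ((Fin r × Fin g → Fin r) × (Fin r × Fin r → Mk C N)) =>
      Pr (fun φ : Perm (Fin r) => ∃ M, Rb m ω.1.1 ω.2.1 (kst ω.1.1 ω.1.2 ω.2.2) M ∧ cyc (φ * M))) ≤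
    Av fun T : Lab r G k → Fin r => Av fun R : Fin r × Fin g → Fin r => Av fun κ : Fin r × Fin r → Mk C N => ind (HC m T R κ) := by
  let f : (Lab r G k → Fin r) → (Fin r × Fin g → Fin r) → (Fin r × Fin r → Mk C N) → Perm (Fin r) → ℝ :=
    fun T R κ φ => ind (∃ M, Rb m T R κ M ∧ cyc (φ * M))
  have e1 : Av (fun ω : ((Lab r G k → Fin r) × (Lab r G k → Mk C N)) × ((Fin r × Fin g → Fin r) × (Fin r × Fin r → Mk C N)) =>
      Pr (fun φ : Perm (Fin r) => ∃ M, Rb m ω.1.1 ω.2.1 (kst ω.1.1 ω.1.2 ω.2.2) M ∧ cyc (φ * M))) = 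
      Av fun T => Av fun R => Av fun κ => Av fun φ => f T R κ φ := by
    rw [Av_prod, Av_prod]
    congr 1; funext T
    have : ∀ c : Lab r G k → Mk C N, 
       Av (fun b : (Fin r × Fin g → Fin r) × (Fin r × Fin r → Mk C N) => Pr (fun φ : Perm (Fin r) => ∃ M, Rb m T b.1 (kst T c b.2) M ∧ cyc (φ * M)))
       = Av fun R => Av fun κ => Av fun φ => f T R (kst T c κ) φ := by
      intro c
      rw [Av_prod]; rfl
    simp only [this]
    rw [Av_comm]
    congr 1; funext R
    exact kst_avg T (fun κ => Av fun φ => f T R κ φ)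
  rw [e1]
  have e2 : (Av fun T => Av fun R => Av fun κ => Av fun φ => f T R κ φ) = Av fun φ => Av fun T => Av fun R => Av fun κ => f T R κ φ := by
    rw [Av_comm (fun φ T => Av fun R => Av fun κ => f T R κ φ)]
    congr 1; funext T
    rw [Av_comm (fun φ R => Av fun κ => f T R κ φ)]
    congr 1; funext R
    rw [Av_comm (fun φ κ => f T R κ φ)]
  rw [e2]
  apply Av_le_const
  intro φ
  refine le_trans ?_ (Av_equiv (ET φ) _).le
  refine Av_mono fun T => ?_
  refine le_trans ?_ (Av_equiv (ER φ) _).le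
  refine Av_mono fun R => ?_
  refine le_trans ?_ (Av_equiv (EK φ) _).le
  refine Av_mono fun κ => ind_mono ?_
  rintro ⟨M, h1, h2⟩
  exact ⟨φ * M, Rb_rename φ h1, h2⟩
end rename

end

section
open Equiv

section kernel
variable {X A B : Type*} [Fintype X] [DecidableEq X] [Fintype A] [Fintype B]

lemma coupling (K : X → A → B → ℝ) (hK0 : ∀ x a b, 0 ≤ K x a b) (hK1 : ∀ x a, ∑ b, K x a b = 1)
    (F : (X → A) → ℝ) (F' : (X → B) → ℝ) (hF : ∀ a b, (∀ x, K x (a x) (b x) ≠ 0) → F a ≤ F' b) :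
    Av F ≤ ∑ b : X → B, F' b * ∏ x, Av (fun a => K x a (b x)) := by
  have h1 : ∀ a : X → A, F a ≤ ∑ b : X → B, F' b * ∏ x, K x (a x) (b x) := by
    intro a
    have e : (1:ℝ) = ∑ b : X → B, ∏ x, K x (a x) (b x) := by
      have := Finset.prod_univ_sum (fun _ : X => (Finset.univ : Finset B)) (fun x b => K x (a x) b)
      simp only [hK1, Finset.prod_const_one, Fintype.piFinset_univ] at this
      exact this
    calc F a = F a * 1 := (mul_one _).symm
      _ = ∑ b : X → B, F a * ∏ x, K x (a x) (b x) := by rw [e, Finset.mul_sum]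
      _ ≤ _ := by
        refine Finset.sum_le_sum fun b _ => ?_
        by_cases hb : ∀ x, K x (a x) (b x) ≠ 0
        · exact mul_le_mul_of_nonneg_right (hF a b hb) (Finset.prod_nonneg fun x _ => hK0 _ _ _)
        · push Not at hb
          obtain ⟨x, hx⟩ := hb
          rw [Finset.prod_eq_zero (Finset.mem_univ x) hx]; simp
  refine (Av_mono h1).trans (le_of_eq ?_)
  rw [Av_sum]
  refine Finset.sum_congr rfl fun b _ => ?_
  rw [Av_mul_left, Av_pi_prod (fun x a => K x a (b x))]
end kernel

section setkernel
variable {r : ℕ} {J : Type*} [Fintype J]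

/-- sets compatible with choices -/
noncomputable def compat (d : ℕ) (v : Fin r) (t : J → Fin r) : Finset (Finset (Fin r)) :=
  (validSets r d v).filter (fun S => (Finset.univ.image t).erase v ⊆ S)

open Classical in
/-- kernel from choices to sets -/
noncomputable def Kset (d : ℕ) (v : Fin r) (t : J → Fin r) (S : Finset (Fin r)) : ℝ :=
  if S ∈ compat d v t then 1 / (compat d v t).card else 0

lemma mem_compat {d : ℕ} {v : Fin r} {t : J → Fin r} {S : Finset (Fin r)} :
    S ∈ compat d v t ↔ (S.card = d ∧ v ∉ S) ∧ ∀ j, t j ≠ v → t j ∈ S := by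
  simp only [compat, validSets, Finset.mem_filter, Finset.mem_univ, true_and, Finset.subset_iff, Finset.mem_erase, Finset.mem_image]
  constructor
  · rintro ⟨h, h2⟩
    exact ⟨h, fun j hj => h2 ⟨hj, j, rfl⟩⟩
  · rintro ⟨h, h2⟩
    refine ⟨h, ?_⟩
    rintro x ⟨hx, j, rfl⟩
    exact h2 j hx

lemma compat_nonempty {d : ℕ} (v : Fin r) (t : J → Fin r) (h1 : Fintype.card J ≤ d) (h2 : d + 1 ≤ r) :
    (compat d v t).Nonempty := by
  have hs : (Finset.univ.image t).erase v ⊆ Finset.univ.erase v := Finset.erase_subset_erase _ (Finset.subset_univ _)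
  have hc : ((Finset.univ.image t).erase v).card ≤ d :=
    (Finset.card_le_card (Finset.erase_subset _ _)).trans (Finset.card_image_le.trans (by simpa using h1))
  obtain ⟨S, hS1, hS2, hS3⟩ := Finset.exists_subsuperset_card_eq hs hc (by simp; omega)
  refine ⟨S, ?_⟩
  simp only [compat, validSets, Finset.mem_filter, Finset.mem_univ, true_and]
  exact ⟨⟨hS3, fun hv => by simpa using hS2 hv⟩, hS1⟩

lemma Kset_sum {d : ℕ} (v : Fin r) (t : J → Fin r) (h1 : Fintype.card J ≤ d) (h2 : d + 1 ≤ r) :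
    ∑ S, Kset d v t S = 1 := by
  classical
  unfold Kset
  rw [← Finset.sum_filter, Finset.sum_const, nsmul_eq_mul]
  have : (Finset.univ.filter (fun S => S ∈ compat d v t)) = compat d v t := by ext; simp
  rw [this]
  have := (compat_nonempty v t h1 h2).card_pos
  field_simp

lemma Kset_perm (d : ℕ) (v : Fin r) (t : J → Fin r) (S : Finset (Fin r)) (σ : Perm (Fin r)) (hσ : σ v = v) :
    Kset d v (fun j => σ (t j)) (S.map σ.toEmbedding) = Kset d v t S := by
  classical
  have hm : ∀ S : Finset (Fin r), S ∈ compat d v t ↔ S.map σ.toEmbedding ∈ compat d v (fun j => σ (t j)) := by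
    intro S
    rw [mem_compat, mem_compat]
    have e1 : v ∈ S.map σ.toEmbedding ↔ v ∈ S := by
      conv_lhs => rw [← hσ]
      rw [Finset.mem_map_equiv]; simp
    have e2 : ∀ j, σ (t j) ≠ v ↔ t j ≠ v := by
      intro j
      conv_lhs => rw [← hσ]
      simp
    have e3 : ∀ j, σ (t j) ∈ S.map σ.toEmbedding ↔ t j ∈ S := by
      intro j; rw [Finset.mem_map_equiv]; simp
    rw [e1, Finset.card_map]
    simp only [e2, e3]
  have hc : (compat d v t).card = (compat d v (fun j => σ (t j))).card := by
    apply Finset.card_equiv σ.finsetCongr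
    intro S
    rw [hm S]; rfl
  unfold Kset
  by_cases h : S ∈ compat d v t
  · rw [if_pos h, if_pos ((hm S).1 h), hc]
  · rw [if_neg h, if_neg (fun h' => h ((hm S).2 h'))]

lemma exists_perm (d : ℕ) (v : Fin r) (S S' : Finset (Fin r)) (h : S ∈ validSets r d v) (h' : S' ∈ validSets r d v) :
    ∃ σ : Perm (Fin r), σ v = v ∧ S.map σ.toEmbedding = S' := by
  classical
  simp only [validSets, Finset.mem_filter, Finset.mem_univ, true_and] at h h'
  let e : {x // x ∈ S} ≃ {x // x ∈ S'} := Finset.equivOfCardEq (h.1.trans h'.1.symm)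
  let τ := e.extendSubtype
  have h1 : ∀ x ∈ S, τ x ∈ S' := fun x hx => e.extendSubtype_mem x hx
  have h2 : τ v ∉ S' := e.extendSubtype_not_mem v h.2
  refine ⟨swap (τ v) v * τ, by simp, ?_⟩
  apply Finset.eq_of_subset_of_card_le
  · intro y hy
    rw [Finset.mem_map] at hy
    obtain ⟨x, hx, rfl⟩ := hy
    have a1 := h1 x hx
    have : (swap (τ v) v * τ) x = τ x := by
      rw [Perm.mul_apply, swap_apply_of_ne_of_ne]
      · rintro h0; rw [h0] at a1; exact h2 a1
      · rintro h0; rw [h0] at a1; exact h'.2 a1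
    simp only [Equiv.coe_toEmbedding, this]
    exact a1
  · rw [Finset.card_map, h.1, h'.1]

lemma Kset_avg [DecidableEq J] {d : ℕ} (v : Fin r) (h1 : Fintype.card J ≤ d) (h2 : d + 1 ≤ r) (S : Finset (Fin r)) :
    Av (fun t : J → Fin r => Kset d v t S) = if S ∈ validSets r d v then 1 / ((validSets r d v).card : ℝ) else 0 := by
  have : Nonempty (Fin r) := ⟨v⟩
  split_ifs with hS
  · have hconst : ∀ S' ∈ validSets r d v, Av (fun t : J → Fin r => Kset d v t S') = Av (fun t : J → Fin r => Kset d v t S) := by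
      intro S' hS'
      obtain ⟨σ, hv, rfl⟩ := exists_perm d v S S' hS hS'
      rw [← Av_equiv (Equiv.arrowCongr (Equiv.refl J) σ)]
      congr 1; funext t
      exact Kset_perm d v t S σ hv
    have hzero : ∀ S', S' ∉ validSets r d v → Av (fun t : J → Fin r => Kset d v t S') = 0 := by
      intro S' hS'
      have : ∀ t : J → Fin r, Kset d v t S' = 0 := by
        intro t; unfold Kset; rw [if_neg]; intro h; exact hS' (Finset.mem_filter.mp h).1
      simp only [this, Av_const]
    have htot : ∑ S', Av (fun t : J → Fin r => Kset d v t S') = 1 := by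
      rw [← Av_sum]; simp only [Kset_sum v _ h1 h2, Av_const]
    rw [← Finset.sum_subset (Finset.subset_univ (validSets r d v)) (fun S' _ h => hzero S' h),
      Finset.sum_congr rfl hconst, Finset.sum_const, nsmul_eq_mul] at htot
    have : ((validSets r d v).card : ℝ) ≠ 0 := by
      have := Finset.card_pos.mpr ⟨S, hS⟩
      positivity
    field_simp
    linarith
  · have : ∀ t : J → Fin r, Kset d v t S = 0 := by
      intro t; unfold Kset; rw [if_neg]; intro h; exact hS (Finset.mem_filter.mp h).1
    simp only [this, Av_const]
end setkernel

section coinkernel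
variable {C N m : ℕ}
open Classical in
/-- kernel from marks to colours and coins -/
noncomputable def Kcoin (m : ℕ) (p : ℝ) (a : Mk C N) (b : Fin C × Bool) : ℝ :=
  (if a.1 = b.1 then 1 else 0) * (if a.2.val < m then (if b.2 then p else 1 - p) else (if b.2 then 0 else 1))

lemma Kcoin_nonneg (p : ℝ) (h0 : 0 ≤ p) (h1 : p ≤ 1) (a : Mk C N) (b : Fin C × Bool) : 0 ≤ Kcoin m p a b := by
  unfold Kcoin
  have : 0 ≤ 1 - p := by linarith
  split_ifs <;> simp [*]

lemma Kcoin_sum (p : ℝ) (a : Mk C N) : ∑ b, Kcoin m p a b = 1 := by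
  classical
  unfold Kcoin
  rw [Fintype.sum_prod_type, Finset.sum_eq_single a.1]
  · simp
  · intro b _ hb
    simp [Ne.symm hb]
  · simp

lemma Kcoin_avg (p : ℝ) (hC : 0 < C) (hN : 0 < N) (hm : m ≤ N) (b : Fin C × Bool) :
    Av (fun a : Mk C N => Kcoin m p a b) = 1 / C * (if b.2 then m / N * p else 1 - m / N * p) := by
  classical
  have : Nonempty (Fin C) := ⟨⟨0, hC⟩⟩
  have : Nonempty (Fin N) := ⟨⟨0, hN⟩⟩
  unfold Kcoin
  rw [Av_prod]
  refine Eq.trans (Eq.trans (congrArg Av (funext fun a => Av_mul_left (if a = b.1 then 1 else 0)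
    (fun i : Fin N => (if i.val < m then (if b.2 then p else 1 - p) else (if b.2 then 0 else 1)))))
    (Av_mul_right _ _)) ?_
  congr 1
  · have := Pr_eq_const b.1
    simp only [Pr, ind, Fintype.card_fin] at this
    convert this
  · have hN' : (N:ℝ) ≠ 0 := by positivity
    have e : ∀ x y : ℝ, Av (fun i : Fin N => if i.val < m then x else y) = m / N * x + (1 - m / N) * y := by
      intro x y
      unfold Av
      rw [Finset.sum_ite, Finset.sum_const, Finset.sum_const]
      have h1 := card_fin_lt N m hm
      have h2 := Finset.card_filter_add_card_filter_not (s := (Finset.univ : Finset (Fin N))) (fun i => i.val < m)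
      rw [h1, Finset.card_univ, Fintype.card_fin] at h2
      have h3 : ((Finset.univ.filter (fun i : Fin N => ¬ i.val < m)).card : ℝ) = N - m := by
        have h2' : m + (Finset.univ.filter (fun i : Fin N => ¬ i.val < m)).card = N := by convert h2
        have : (m:ℝ) + ((Finset.univ.filter (fun i : Fin N => ¬ i.val < m)).card : ℝ) = N := by exact_mod_cast h2'
        linarith
      rw [h1, nsmul_eq_mul, nsmul_eq_mul, h3, Fintype.card_fin]
      field_simp
    obtain ⟨b1, b2⟩ := b
    cases b2 <;> simp [e]
    ring
end coinkernel

end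

section
open Equiv

section steps
variable {r G k C N m g : ℕ}

/-- choices per half vertex -/
abbrev JJ (G k g : ℕ) := (Fin G × Fin k × Fin k) ⊕ Fin g

/-- rainbow cycle with sets and marks -/
def HS (m : ℕ) (S : VS r → Finset (Fin r)) (κ : Fin r × Fin r → Mk C N) : Prop :=
  ∃ M : Perm (Fin r), cyc M ∧ (∀ v, (M v ∈ S (Sum.inl v) ∨ v ∈ S (Sum.inr (M v))) ∧ ¬ del m (κ (v, M v))) ∧
    Function.Injective (fun v => (κ (v, M v)).1)

/-- rainbow cycle with sets, colours and coins -/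
def HG (S : VS r → Finset (Fin r)) (b : Fin r × Fin r → Fin C × Bool) : Prop :=
  ∃ M : Perm (Fin r), cyc M ∧ (∀ v, (M v ∈ S (Sum.inl v) ∨ v ∈ S (Sum.inr (M v))) ∧ (b (v, M v)).2 = false) ∧
    Function.Injective (fun v => (b (v, M v)).1)

lemma cyc_ne {M : Perm (Fin r)} (h : cyc M) (hr : 2 ≤ r) (v : Fin r) : M v ≠ v := by
  intro hv
  have : Nontrivial (Fin r) := Fin.nontrivial_iff_two_le.mpr hr
  obtain ⟨w, hw⟩ := exists_ne v
  exact hw ((h v w).eq_of_left hv).symm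

/-- weight of a neighbour set -/
noncomputable def wS (r d : ℕ) (v : Fin r) (S : Finset (Fin r)) : ℝ :=
  if S ∈ validSets r d v then 1 / ((validSets r d v).card : ℝ) else 0

lemma step0 (hr : 2 ≤ r) (H : (Lab r G k → Fin r) → (Fin r × Fin g → Fin r) → ℝ) :
    (Av fun T => Av fun R => H T R) =
    Av fun t : VS r → (JJ G k g → Fin r) => H (fun l => t l.1 (Sum.inl l.2)) (fun p => t (Sum.inl p.1) (Sum.inr p.2)) := by
  classical
  have : Nonempty (Fin r) := ⟨⟨0, by omega⟩⟩
  let ι : Lab r G k ⊕ (Fin r × Fin g) → VS r × JJ G k g :=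
    Sum.elim (fun l => (l.1, Sum.inl l.2)) (fun p => (Sum.inl p.1, Sum.inr p.2))
  have hι : Function.Injective ι := by
    rintro (⟨x, y⟩ | ⟨v, j⟩) (⟨x', y'⟩ | ⟨v', j'⟩) h <;> simp_all [ι]
  rw [← Av_equiv (Equiv.curry (VS r) (JJ G k g) (Fin r))]
  rw [← Av_prod (fun p : (Lab r G k → Fin r) × (Fin r × Fin g → Fin r) => H p.1 p.2)]
  rw [← Av_equiv (Equiv.sumArrowEquivProdArrow (Lab r G k) (Fin r × Fin g) (Fin r)), ← Av_inj ι hι]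
  rfl

lemma step1 (hr : 2 ≤ r) (δ : VS r → ℕ) (hδ1 : ∀ x, Fintype.card (JJ G k g) ≤ δ x) (hδ2 : ∀ x, δ x + 1 ≤ r) :
    (Av fun T : Lab r G k → Fin r => Av fun R : Fin r × Fin g → Fin r => Av fun κ : Fin r × Fin r → Mk C N => ind (HC m T R κ))
    ≤ ∑ S : VS r → Finset (Fin r), (Av fun κ : Fin r × Fin r → Mk C N => ind (HS m S κ)) * ∏ x, wS r (δ x) (pt x) (S x) := by
  rw [step0 hr (fun T R => Av fun κ : Fin r × Fin r → Mk C N => ind (HC m T R κ))]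
  have h := coupling (fun (x : VS r) (t : JJ G k g → Fin r) (S : Finset (Fin r)) => Kset (δ x) (pt x) t S)
    (fun x a b => by unfold Kset; split_ifs <;> positivity) (fun x a => Kset_sum _ _ (hδ1 x) (hδ2 x))
    (fun t => Av fun κ : Fin r × Fin r → Mk C N => ind (HC m (fun l => t l.1 (Sum.inl l.2)) (fun p => t (Sum.inl p.1) (Sum.inr p.2)) κ))
    (fun S => Av fun κ : Fin r × Fin r → Mk C N => ind (HS m S κ)) ?_
  · refine h.trans (le_of_eq ?_)
    refine Finset.sum_congr rfl fun S _ => ?_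
    congr 1
    refine Finset.prod_congr rfl fun x _ => ?_
    rw [Kset_avg _ (hδ1 x) (hδ2 x)]; rfl
  · intro t S hK
    have hmem : ∀ x j, t x j ≠ pt x → t x j ∈ S x := by
      intro x
      have hx : S x ∈ compat (δ x) (pt x) (t x) := by
        by_contra hc
        exact hK x (if_neg hc)
      exact (mem_compat.mp hx).2
    refine Av_mono fun κ => ind_mono ?_
    rintro ⟨M, ⟨h1, h2⟩, hc⟩
    refine ⟨M, hc, fun v => ⟨?_, (h1 v).2⟩, h2⟩
    have hne := cyc_ne hc hr v
    rcases (h1 v).1 with ⟨⟨x, y⟩, hl⟩ | ⟨j, hj⟩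
    · cases x with
      | inl u =>
        simp only [eT, Sum.elim_inl, Prod.mk.injEq] at hl
        obtain ⟨rfl, h3⟩ := hl
        left
        rw [← h3]; apply hmem; rw [h3]; exact hne
      | inr u =>
        simp only [eT, Sum.elim_inr, Prod.mk.injEq] at hl
        obtain ⟨h3, rfl⟩ := hl
        right
        have := hmem (Sum.inr (M v)) (Sum.inl y) (by rw [h3]; exact hne.symm)
        rwa [h3] at this
    · left
      simp only at hj
      rw [← hj]; apply hmem; rw [hj]; exact hne

lemma step2 (hC : 0 < C) (hN : 0 < N) (hm : m ≤ N) (hm0 : 0 < m) (q₀ : ℝ) (hq : 0 ≤ q₀) (hq1 : q₀ ≤ m / N) (S : VS r → Finset (Fin r)) :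
    (Av fun κ : Fin r × Fin r → Mk C N => ind (HS m S κ)) ≤
    ∑ b : Fin r × Fin r → Fin C × Bool, ind (HG S b) * ∏ e, (1 / C * (if (b e).2 then q₀ else 1 - q₀)) := by
  have hN' : (0:ℝ) < N := by exact_mod_cast hN
  have hm' : (0:ℝ) < m := by exact_mod_cast hm0
  have e1 : (m / N : ℝ) * (q₀ * N / m) = q₀ := by field_simp
  have h := coupling (fun (_ : Fin r × Fin r) (a : Mk C N) b => Kcoin m (q₀ * N / m) a b)
    (fun x a b => Kcoin_nonneg _ (by positivity) (by
      rw [div_le_one hm']; rw [le_div_iff₀ hN'] at hq1; exact hq1) a b) (fun x a => Kcoin_sum _ a)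
    (fun κ => ind (HS m S κ)) (fun b => ind (HG S b)) ?_
  · refine h.trans (le_of_eq ?_)
    refine Finset.sum_congr rfl fun b _ => ?_
    congr 1
    refine Finset.prod_congr rfl fun x _ => ?_
    rw [Kcoin_avg _ hC hN hm, e1]
  · intro κ b hK
    have h1 : ∀ e, (κ e).1 = (b e).1 ∧ (¬ del m (κ e) → (b e).2 = false) := by
      intro e
      have := hK e
      unfold Kcoin at this
      constructor
      · by_contra hc
        apply this; rw [if_neg hc]; simp
      · intro hd
        by_contra hc
        apply this
        have hd' : ¬ (κ e).2.val < m := hd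
        rw [if_neg hd']
        simp only [Bool.not_eq_false] at hc
        simp [hc]
    apply ind_mono
    rintro ⟨M, hc, h2, h3⟩
    refine ⟨M, hc, fun v => ⟨(h2 v).1, (h1 _).2 (h2 v).2⟩, ?_⟩
    simpa only [(h1 _).1] using h3
end steps

end

section
open Equiv

section meas
variable {r C : ℕ}

lemma HG_ham (hr : 2 ≤ r) (S : VS r → Finset (Fin r)) (b : Fin r × Fin r → Fin C × Bool) (h : HG S b) :
    HasRainbowDirHamCycle (r := r) (C := C) (fun v => (S (Sum.inl v), S (Sum.inr v)), fun e => (b e).1, fun e => (b e).2) := by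
  obtain ⟨M, hc, h1, h2⟩ := h
  have : NeZero r := ⟨by omega⟩
  let v0 : Fin r := ⟨0, by omega⟩
  have hcyc : M.IsCycleOn ((Finset.univ : Finset (Fin r)) : Set (Fin r)) :=
    ⟨by simp , fun x _ y _ => hc x y⟩
  have hcard : (M ^ r) v0 = v0 := by
    have := hcyc.pow_card_apply (Finset.mem_univ v0)
    rwa [Finset.card_univ, Fintype.card_fin] at this
  let f : ZMod r → Fin r := fun i => (M ^ i.val) v0
  have hsucc : ∀ i, f (i + 1) = M (f i) := by
    intro i
    simp only [f]
    rw [ZMod.val_add, ZMod.val_one'' (by omega)]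
    have hi := ZMod.val_lt i
    by_cases hlt : i.val + 1 < r
    · rw [Nat.mod_eq_of_lt hlt, pow_succ', Perm.mul_apply]
    · have : i.val + 1 = r := by omega
      rw [this, Nat.mod_self, pow_zero, ← Perm.mul_apply, ← pow_succ', this, hcard]; rfl
  have hsurj : Function.Surjective f := by
    intro w
    obtain ⟨n, hn, hw⟩ := hcyc.exists_pow_eq (Finset.mem_univ v0) (Finset.mem_univ w)
    rw [Finset.card_univ, Fintype.card_fin] at hn
    refine ⟨(n : ZMod r), ?_⟩
    simp only [f]
    rw [ZMod.val_natCast_of_lt hn, hw]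
  have hbij : Function.Bijective f := by
    rw [Fintype.bijective_iff_surjective_and_card]
    exact ⟨hsurj, by simp [ZMod.card]⟩
  refine ⟨f, hbij, fun i => ?_, ?_⟩
  · rw [hsucc]
    exact ⟨(h1 (f i)).1, Or.inr (h1 (f i)).2⟩
  · simp only [hsucc]
    exact h2.comp hbij.1

lemma uniformOn_single {α : Type*} [MeasurableSpace α] [MeasurableSingletonClass α] [DecidableEq α] (s : Finset α) (hs : s.Nonempty) (a : α) :
    uniformOn s {a} = ENNReal.ofReal (if a ∈ s then 1 / (s.card : ℝ) else 0) := by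
  unfold uniformOn
  rw [dif_pos hs, PMF.toMeasure_apply_singleton _ _ (measurableSet_singleton a), PMF.uniformOfFinset_apply]
  split_ifs with h
  · rw [one_div, ENNReal.ofReal_inv_of_pos (by exact_mod_cast hs.card_pos), ENNReal.ofReal_natCast]
  · simp

lemma bern_single (q : ℝ) (h0 : 0 ≤ q) (h1 : q ≤ 1) (β : Bool) :
    bernoulliM q {β} = ENNReal.ofReal (if β then q else 1 - q) := by
  unfold bernoulliM
  rw [PMF.toMeasure_apply_singleton _ _ (measurableSet_singleton β), PMF.bernoulli_apply]
  have e : min (Real.toNNReal q) 1 = Real.toNNReal q := min_eq_left (by simpa using h1)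
  rw [e]
  cases β
  · have := ENNReal.ofReal_sub 1 h0
    simp only [Bool.false_eq_true, if_false, this]
    simp [ENNReal.ofReal]
  · simp [ENNReal.ofReal]

/-- reindexing of the sample space -/
def Phi (r C : ℕ) : (VS r → Finset (Fin r)) × (Fin r × Fin r → Fin C × Bool) ≃ GammaSpace r C where
  toFun p := (fun v => (p.1 (Sum.inl v), p.1 (Sum.inr v)), fun e => (p.2 e).1, fun e => (p.2 e).2)
  invFun ω := (Sum.elim (fun v => (ω.1 v).1) (fun v => (ω.1 v).2), fun e => (ω.2.1 e, ω.2.2 e))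
  left_inv := by
    rintro ⟨S, b⟩
    refine Prod.ext ?_ rfl
    funext x; cases x <;> rfl
  right_inv := by rintro ⟨S, b⟩; rfl

instance (μ : ℝ) : SigmaFinite (bernoulliM μ) := inferInstance

lemma gamma_single (δp δm : Fin r → ℕ) (q₀ : ℝ) (h0 : 0 ≤ q₀) (h1 : q₀ ≤ 1) (hC : 0 < C)
    (hp : ∀ v, (validSets r (δp v) v).Nonempty) (hm : ∀ v, (validSets r (δm v) v).Nonempty)
    (S : VS r → Finset (Fin r)) (b : Fin r × Fin r → Fin C × Bool) :
    gammaM r C δp δm q₀ {Phi r C (S, b)} =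
      ENNReal.ofReal ((∏ x, wS r (Sum.elim δp δm x) (pt x) (S x)) * ∏ e, (1 / C * (if (b e).2 then q₀ else 1 - q₀))) := by
  have hw : ∀ d v (S : Finset (Fin r)), 0 ≤ wS r d v S := by intro d v S; unfold wS; split_ifs <;> positivity
  have hb : ∀ β : Bool, 0 ≤ (if β then q₀ else 1 - q₀) := by intro β; cases β <;> simp [h0, h1]
  have : Nonempty (Fin C) := ⟨⟨0, hC⟩⟩
  have e0 : ({Phi r C (S, b)} : Set (GammaSpace r C)) = {(Phi r C (S,b)).1} ×ˢ ({(Phi r C (S,b)).2.1} ×ˢ {(Phi r C (S,b)).2.2}) := by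
    rw [Set.singleton_prod_singleton, Set.singleton_prod_singleton]
  rw [e0]
  unfold gammaM
  rw [Measure.prod_prod, Measure.prod_prod, Measure.pi_singleton, Measure.pi_singleton, Measure.pi_singleton]
  have e1 : ∀ v, ((uniformOn (validSets r (δp v) v)).prod (uniformOn (validSets r (δm v) v))) {(Phi r C (S,b)).1 v} =
     ENNReal.ofReal (wS r (δp v) v (S (Sum.inl v)) * wS r (δm v) v (S (Sum.inr v))) := by
    intro v
    have : ({(Phi r C (S,b)).1 v} : Set (Finset (Fin r) × Finset (Fin r))) = {S (Sum.inl v)} ×ˢ {S (Sum.inr v)} := by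
      rw [Set.singleton_prod_singleton]; rfl
    rw [this, Measure.prod_prod, uniformOn_single _ (hp v), uniformOn_single _ (hm v), ENNReal.ofReal_mul (hw _ _ _)]
    rfl
  simp only [e1, bern_single q₀ h0 h1, uniformOn_single _ Finset.univ_nonempty]
  rw [← ENNReal.ofReal_prod_of_nonneg (fun v _ => mul_nonneg (hw _ _ _) (hw _ _ _)),
    ← ENNReal.ofReal_prod_of_nonneg (fun e _ => by simp),
    ← ENNReal.ofReal_prod_of_nonneg (fun e _ => hb _), ← ENNReal.ofReal_mul, ← ENNReal.ofReal_mul]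
  · congr 1
    rw [Fintype.prod_sum_type, Finset.prod_mul_distrib]
    congr 1
    rw [← Finset.prod_mul_distrib]
    refine Finset.prod_congr rfl fun e _ => ?_
    simp only [Phi, Finset.mem_univ, if_true, Finset.card_univ, Fintype.card_fin, Equiv.coe_fn_mk]
    rfl
  · exact Finset.prod_nonneg fun v _ => mul_nonneg (hw _ _ _) (hw _ _ _)
  · exact Finset.prod_nonneg fun v _ => by simp

lemma gamma_ge (hr : 2 ≤ r) (δp δm : Fin r → ℕ) (q₀ : ℝ) (h0 : 0 ≤ q₀) (h1 : q₀ ≤ 1) (hC : 0 < C)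
    (hp : ∀ v, (validSets r (δp v) v).Nonempty) (hm : ∀ v, (validSets r (δm v) v).Nonempty) :
    ENNReal.ofReal (∑ S : VS r → Finset (Fin r), (∑ b : Fin r × Fin r → Fin C × Bool, ind (HG S b) * 
      ∏ e, (1 / C * (if (b e).2 then q₀ else 1 - q₀))) * ∏ x, wS r (Sum.elim δp δm x) (pt x) (S x)) ≤
    gammaM r C δp δm q₀ {ω | HasRainbowDirHamCycle ω} := by
  classical
  have hw : ∀ d v (S : Finset (Fin r)), 0 ≤ wS r d v S := by intro d v S; unfold wS; split_ifs <;> positivity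
  have hb : ∀ β : Bool, 0 ≤ (if β then q₀ else 1 - q₀) := by intro β; cases β <;> simp [h0, h1]
  let A : Finset (GammaSpace r C) := (Finset.univ.filter (fun p : (VS r → Finset (Fin r)) × (Fin r × Fin r → Fin C × Bool) => HG p.1 p.2)).map (Phi r C).toEmbedding
  have hA : (A : Set (GammaSpace r C)) ⊆ {ω | HasRainbowDirHamCycle ω} := by
    intro ω hω
    simp only [A, Finset.coe_map, Set.mem_image, Finset.mem_coe, Finset.mem_filter, Finset.mem_univ, true_and] at hω
    obtain ⟨⟨S, b⟩, h, rfl⟩ := hω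
    exact HG_ham hr S b h
  refine le_trans (le_of_eq ?_) (measure_mono hA)
  rw [← sum_measure_singleton]
  simp only [A]
  rw [Finset.sum_map]
  simp only [Equiv.coe_toEmbedding]
  have hs : ∑ p ∈ Finset.univ.filter (fun p : (VS r → Finset (Fin r)) × (Fin r × Fin r → Fin C × Bool) => HG p.1 p.2),
      gammaM r C δp δm q₀ {Phi r C p} = _ :=
    Finset.sum_congr rfl (fun p _ => gamma_single δp δm q₀ h0 h1 hC hp hm p.1 p.2)
  rw [hs, ← ENNReal.ofReal_sum_of_nonneg]
  · congr 1
    rw [Finset.sum_filter, Fintype.sum_prod_type]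
    refine Finset.sum_congr rfl fun S _ => ?_
    rw [Finset.sum_mul]
    refine Finset.sum_congr rfl fun b _ => ?_
    unfold ind
    split_ifs
    · ring
    · simp
  · intro p _
    exact mul_nonneg (Finset.prod_nonneg fun _ _ => hw _ _ _) (Finset.prod_nonneg fun e _ => mul_nonneg (by positivity) (hb _))
end meas

end

section
open Equiv

section finalfinite
variable {r C : ℕ}

lemma valid_nonempty {d : ℕ} (v : Fin r) (h : d + 1 ≤ r) : (validSets r d v).Nonempty := by
  obtain ⟨S, hS⟩ := compat_nonempty (J := Empty) v (fun e => e.elim) (by simp) h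
  exact ⟨S, (Finset.mem_filter.mp hS).1⟩

lemma gamma_le_one (δp δm : Fin r → ℕ) (q₀ : ℝ) (hC : 0 < C)
    (hp : ∀ v, δp v + 1 ≤ r) (hm : ∀ v, δm v + 1 ≤ r) (A : Set (GammaSpace r C)) :
    gammaM r C δp δm q₀ A ≤ 1 := by
  have : Nonempty (Fin C) := ⟨⟨0, hC⟩⟩
  have h1 : ∀ v, IsProbabilityMeasure (uniformOn (validSets r (δp v) v)) := by
    intro v; unfold uniformOn; rw [dif_pos (valid_nonempty v (hp v))]; infer_instance
  have h2 : ∀ v, IsProbabilityMeasure (uniformOn (validSets r (δm v) v)) := by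
    intro v; unfold uniformOn; rw [dif_pos (valid_nonempty v (hm v))]; infer_instance
  have h3 : IsProbabilityMeasure (uniformOn (Finset.univ : Finset (Fin C))) := by
    unfold uniformOn; rw [dif_pos Finset.univ_nonempty]; infer_instance
  have : IsProbabilityMeasure (gammaM r C δp δm q₀) := by
    unfold gammaM
    infer_instance
  exact prob_le_one

lemma final_lower (δp δm : Fin r → ℕ) (q₀ : ℝ) (G g m N q s : ℕ) (η : ℝ) (hG : 0 < G) (hg : 0 < g) (hN : 0 < N)
    (hC5 : 20 ≤ C) (hC : 160 * r ≤ C) (hm0 : 0 < m) (hm : 10 * m ≤ N) (hrA : 2 + 8 * (G * 40 * 40) ≤ r)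
    (hs0 : 0 < s) (hs : s + q + 4 ≤ r) (hη0 : 0 < η) (hη : η ≤ 1/2)
    (h0 : 0 ≤ q₀) (hq : q₀ ≤ m / N) 
    (hp : ∀ v, δp v + 1 ≤ r) (hmm : ∀ v, δm v + 1 ≤ r)
    (hp' : ∀ v, G * 40 * 40 + g ≤ δp v) (hmm' : ∀ v, G * 40 * 40 + g ≤ δm v) 
    (x : ℝ) (hx : x * Dn (r-1) G q s η ≤ 1 - 2 * dlt r G 40 C N m g) :
    ENNReal.ofReal x ≤ gammaM r C δp δm q₀ {ω | HasRainbowDirHamCycle ω} := by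
  obtain ⟨n, rfl⟩ : ∃ n, r = n + 1 := ⟨r - 1, by omega⟩
  have hN' : (0:ℝ) < N := by exact_mod_cast hN
  have hη1 : 0 < 1 - η := by linarith
  have hs' : (0:ℝ) < s := by exact_mod_cast hs0
  have hD : 0 < Dn n G q s η := by unfold Dn; positivity
  have : Nonempty (Mk C N) := ⟨(⟨0, by omega⟩, ⟨0, hN⟩)⟩
  have h1 := sm_avg (n := n) (G := G) (C := C) (N := N) (m := m) (g := g) (k := 40) rfl hG hg hN hC5 (by omega) hm hrA q s hs0 hs η hη0 hη
  have h2 := HC_avg (r := n+1) (G := G) (C := C) (N := N) (m := m) (g := g) (k := 40)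
  have h3 := step1 (r := n+1) (G := G) (C := C) (N := N) (m := m) (g := g) (k := 40) (by omega) (Sum.elim δp δm)
    (by
      have e : Fintype.card (JJ G 40 g) = G * 40 * 40 + g := by simp [JJ]; ring
      rw [e]
      rintro (v | v)
      · exact hp' v
      · exact hmm' v)
    (by
      rintro (v | v)
      · exact hp v
      · exact hmm v)
  have h4 := gamma_ge (r := n+1) (C := C) (by omega) δp δm q₀ h0 (by
      refine hq.trans ?_
      rw [div_le_one hN']
      exact_mod_cast (by omega : m ≤ N)) (by omega) (fun v => valid_nonempty v (hp v)) (fun v => valid_nonempty v (hmm v))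
  refine le_trans (ENNReal.ofReal_le_ofReal ?_) h4
  have h5 : x ≤ Av (fun ω : ((Lab (n+1) G 40 → Fin (n+1)) × (Lab (n+1) G 40 → Mk C N)) × ((Fin (n+1) × Fin g → Fin (n+1)) × (Fin (n+1) × Fin (n+1) → Mk C N)) =>
      Pr (fun φ : Perm (Fin (n+1)) => ∃ M, Rb m ω.1.1 ω.2.1 (kst ω.1.1 ω.1.2 ω.2.2) M ∧ cyc (φ * M))) := by
    have := hx.trans h1
    exact le_of_mul_le_mul_right this hD
  refine h5.trans (h2.trans (h3.trans ?_))
  refine Finset.sum_le_sum fun S _ => ?_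
  refine mul_le_mul_of_nonneg_right (step2 (by omega) hN (by omega) hm0 q₀ h0 hq S) ?_
  refine Finset.prod_nonneg fun x _ => ?_
  unfold wS; split_ifs <;> positivity
end finalfinite

lemma par (ε θ ℓ : ℝ) (hℓ : 0 < ℓ) (h1 : 100 / Real.sqrt ℓ < ε) (h2 : ε ≤ 1) (h3 : 100 / Real.sqrt ℓ < θ) (h4 : θ ≤ 1) :
    0 < th1 ε θ ∧ 0 < Lparam ε θ ∧ 1 ≤ Lparam ε θ ∧ Lparam ε θ ≤ 15 * Real.exp (ℓ/4) ∧ 1800 ≤ th1 ε θ * Lparam ε θ ∧ 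
    277 / ℓ ≤ ε / 3 * th1 ε θ := by
  have hs : 0 < Real.sqrt ℓ := Real.sqrt_pos.mpr hℓ
  have hss : Real.sqrt ℓ * Real.sqrt ℓ = ℓ := Real.mul_self_sqrt hℓ.le
  set t := 100 / Real.sqrt ℓ with ht
  have ht0 : 0 < t := by positivity
  have htt : t * t = 10000 / ℓ := by rw [ht, div_mul_div_comm, hss]; norm_num
  set a := th1 ε θ with ha
  have ha1 : t / 12 ≤ a := by
    rw [ha]; unfold th1
    apply le_min <;> linarith
  have ha2 : a ≤ 1/12 := by
    rw [ha]; unfold th1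
    exact (min_le_right _ _).trans (by linarith)
  have ha0 : 0 < a := by linarith
  have hε0 : 0 < ε := by linarith
  have hp0 : 0 < ε / 3 * a := by positivity
  have hp : 277 / ℓ ≤ ε / 3 * a := by
    have : t / 3 * (t / 12) ≤ ε / 3 * a := by
      apply mul_le_mul <;> first | linarith | positivity
    refine le_trans ?_ this
    have e : t / 3 * (t / 12) = (t * t) / 36 := by ring
    rw [e, htt, div_div, div_le_div_iff₀ hℓ (by positivity)]
    nlinarith
  have hx : 40 / (ε / 3 * a) ≤ ℓ / 4 := by
    rw [div_le_iff₀ hp0]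
    rw [div_le_iff₀ hℓ] at hp
    nlinarith
  have hL : Lparam ε θ = 15 * Real.exp (40 / (ε / 3 * a)) := by
    unfold Lparam
    rw [← ha]
    apply max_eq_left
    have h5 := Real.add_one_le_exp (40 / (ε / 3 * a))
    have h6 : 7 / a ≤ 40 / (ε / 3 * a) := by
      rw [div_le_div_iff₀ ha0 hp0]
      nlinarith
    have h7 : 0 < 40 / (ε / 3 * a) := by positivity
    linarith
  have hLg : 1 ≤ Lparam ε θ := by
    rw [hL]
    have := Real.one_le_exp (x := 40 / (ε / 3 * a)) (by positivity)
    linarith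
  refine ⟨ha0, by linarith, hLg, ?_, ?_, hp⟩
  · rw [hL]
    have := Real.exp_le_exp.mpr hx
    linarith
  · rw [hL]
    have h5 := Real.add_one_le_exp (40 / (ε / 3 * a))
    have h6 : a * (15 * (40 / (ε / 3 * a))) ≤ a * (15 * Real.exp (40 / (ε / 3 * a))) := by
      apply mul_le_mul_of_nonneg_left _ ha0.le
      linarith
    refine le_trans ?_ h6
    have e : a * (15 * (40 / (ε / 3 * a))) = 1800 / ε := by field_simp; norm_num
    rw [e, le_div_iff₀ hε0]
    linarith

lemma Dn_bound (h : ℕ) (hh : 4 ≤ h) (β : ℝ) (hβ : 0 < β) : ∀ᶠ r : ℕ in atTop, ∃ q s : ℕ, 0 < s ∧ s + q + 4 ≤ r ∧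
    Dn (r-1) (4^h) q s (1/(h:ℝ)) ≤ 1/(1-2/(h:ℝ))^2 + β := by
  have hh' : (4:ℝ) ≤ h := by exact_mod_cast hh
  have t1 : Tendsto (fun r : ℕ => (r:ℝ) * Real.exp (-(1/(4*(h:ℝ))) * r)) atTop (nhds 0) := by
    have := (Real.tendsto_pow_mul_exp_neg_atTop_nhds_zero 1)
    have h2 : Tendsto (fun r : ℕ => (1/(4*(h:ℝ))) * (r:ℝ)) atTop atTop :=
      Tendsto.const_mul_atTop (by positivity) tendsto_natCast_atTop_atTop
    have h3 := (this.comp h2).const_mul (4 * (h:ℝ))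
    rw [mul_zero] at h3
    refine h3.congr fun r => ?_
    simp only [Function.comp, pow_one]
    rw [neg_mul]
    field_simp
  have t2 : Tendsto (fun r : ℕ => (r:ℝ) * (1/2:ℝ)^r) atTop (nhds 0) :=
    tendsto_self_mul_const_pow_of_lt_one (by norm_num) (by norm_num)
  have t3 := (t1.const_mul (1/2)).add (t2.const_mul 4)
  simp only [mul_zero, add_zero] at t3
  filter_upwards [t3.eventually (gt_mem_nhds hβ), eventually_ge_atTop (5 * h)] with r hr hr5
  have hr5' : (5:ℝ) * h ≤ r := by exact_mod_cast hr5
  have hh0 : (0:ℝ) < h := by linarith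
  set q := r / h + 1 with hq
  have hq1 : r ≤ h * q := by
    have := Nat.div_add_mod r h
    have h2 := Nat.mod_lt r (by omega : 0 < h)
    rw [hq, mul_add]; omega
  have hq2 : (q:ℝ) ≤ r / h + 1 := by
    rw [hq]; push_cast
    have := Nat.cast_div_le (α := ℝ) (m := r) (n := h)
    linarith
  have hrh : (5:ℝ) ≤ r / h := by rw [le_div_iff₀ hh0]; exact hr5'
  have hrq : (r:ℝ)/h ≤ r / 4 := by
    apply div_le_div_of_nonneg_left <;> first | positivity | linarith
  have hr20 : (20:ℝ) ≤ r := by linarith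
  have hqr : q + 4 < r := by
    have : (q:ℝ) + 4 < r := by linarith
    exact_mod_cast this
  obtain ⟨s, hs⟩ : ∃ s, s = r - q - 4 := ⟨_, rfl⟩
  have hs1 : (s:ℝ) = r - q - 4 := by
    have : s + q + 4 = r := by omega
    have : (s:ℝ) + q + 4 = r := by exact_mod_cast this
    linarith
  have hsl : (r:ℝ) * (1 - 2/h) ≤ s := by
    have e : (r:ℝ) * (1 - 2/h) = r - 2 * (r/h) := by ring
    rw [e, hs1]; linarith
  have h2h : 2/(h:ℝ) ≤ 1/2 := by rw [div_le_div_iff₀ hh0 (by norm_num)]; linarith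
  have hx0 : 0 < 2/(h:ℝ) := by positivity
  have h1h : 1/(h:ℝ) = (2/(h:ℝ))/2 := by ring
  set x := 2/(h:ℝ) with hx
  have hr0 : (0:ℝ) < r := by linarith
  have hsp : (0:ℝ) < r * (1 - x) := by apply mul_pos hr0; linarith
  refine ⟨q, s, by omega, by omega, ?_⟩
  have ecast : (((r - 1 : ℕ) : ℝ) + 1) = r := by
    have : r - 1 + 1 = r := by omega
    exact_mod_cast this
  unfold Dn
  rw [ecast, show r - 1 + 1 = r by omega]
  have a1 : 2 / ((s:ℝ) * (1 - 1/(h:ℝ))) ≤ 2 / (r * (1-x)^2) := by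
    apply div_le_div_of_nonneg_left (by norm_num)
    · have : 0 < 1 - x := by linarith
      positivity
    · have : (r:ℝ) * (1-x)^2 = (r * (1-x)) * (1-x) := by ring
      rw [this]
      apply mul_le_mul hsl _ (by linarith) (by positivity)
      rw [h1h]; linarith
  have a2 : Real.exp (-((s:ℝ) * (1/(h:ℝ)) / 2)) ≤ Real.exp (-(1/(4*(h:ℝ))) * r) := by
    apply Real.exp_le_exp.mpr
    have e1 : -(1/(4*(h:ℝ))) * r = -((r * (1/2)) * (1/(h:ℝ)) / 2) := by field_simp; norm_num
    rw [e1]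
    have : (r:ℝ) * (1/2) ≤ s := le_trans (by nlinarith) hsl
    have h9 : 0 < 1/(h:ℝ) := by positivity
    nlinarith
  have a3 : (2:ℝ)^r / (((4^h : ℕ) : ℝ))^q ≤ (1/2:ℝ)^r := by
    push_cast
    rw [← pow_mul]
    have : (4:ℝ)^r ≤ 4^(h*q) := pow_le_pow_right₀ (by norm_num) hq1
    calc (2:ℝ)^r / 4^(h*q) ≤ 2^r/4^r := by
          apply div_le_div_of_nonneg_left <;> first | positivity | exact this
      _ = (1/2)^r := by rw [← div_pow]; norm_num
  have a4 : (r:ℝ) * (2 / (r * (1-x)^2)) / 2 = 1/(1-x)^2 := by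
    have : 1 - x ≠ 0 := by intro h0; rw [h0] at hsp; simp at hsp
    field_simp
  have b1 := mul_le_mul_of_nonneg_left (add_le_add a1 a2) hr0.le
  have b2 := mul_le_mul_of_nonneg_left a3 (by positivity : (0:ℝ) ≤ 4 * r)
  rw [mul_add] at b1
  linarith

end


lemma dlt_bound (G g n r C m : ℕ) (hr : 1 ≤ r) (hrn : r ≤ n) (hC : 160 * r ≤ C) (hm : (m:ℝ) ≤ 2 * Real.log n) :
    dlt r G 40 C n m g ≤ (12 * ((G * 40 * 40 : ℕ) : ℝ)^4 + 1299) * (1 / (r:ℝ)) + 512000 * G * (Real.log n ^ 2 / n) + 36 / g := by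
  have hr' : (1:ℝ) ≤ r := by exact_mod_cast hr
  have hrn' : (r:ℝ) ≤ n := by exact_mod_cast hrn
  have hn0 : (0:ℝ) < n := by linarith
  have hC' : (r:ℝ) ≤ C := by exact_mod_cast (by omega : r ≤ C)
  unfold dlt
  have a1 : (1:ℝ) / C ≤ 1 / r := one_div_le_one_div_of_le (by linarith) hC'
  have a2 : (1296:ℝ) / (r:ℝ)^2 ≤ 1296 * (1 / (r:ℝ)) := by
    rw [mul_one_div]
    apply div_le_div_of_nonneg_left (by norm_num) (by linarith)
    nlinarith
  have a3 : (2:ℝ) * r * G * (40:ℕ)^3 * ((m:ℝ) / n)^2 ≤ 512000 * G * (Real.log n ^ 2 / n) := by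
    have b1 : (m:ℝ)^2 ≤ 4 * Real.log n ^ 2 := by
      have : (0:ℝ) ≤ m := by positivity
      nlinarith
    have b2 : ((m:ℝ) / n)^2 ≤ 4 * Real.log n ^ 2 / n^2 := by
      rw [div_pow]; gcongr
    calc (2:ℝ) * r * G * (40:ℕ)^3 * ((m:ℝ) / n)^2 ≤ 2 * n * G * (40:ℕ)^3 * (4 * Real.log n ^ 2 / n^2) := by gcongr
      _ = 512000 * G * (Real.log n ^ 2 / n) := by
        push_cast
        field_simp
        ring
  have e1 : (12:ℝ) * ((G * 40 * 40 : ℕ) : ℝ)^4 / r = 12 * ((G * 40 * 40 : ℕ) : ℝ)^4 * (1 / (r:ℝ)) := by ring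
  have e2 : (2:ℝ) / r = 2 * (1 / (r:ℝ)) := by ring
  rw [e1, e2]
  linarith

lemma tau_arith (τ h g d D : ℝ) (hτ0 : 0 < τ) (hτ1 : τ < 1) (hh0 : 0 < h) (hh : 16 ≤ τ * h) (hg0 : 0 < g) (hg : 576 ≤ τ * g)
    (hd : d ≤ 36 / g + τ / 16) (hD : D ≤ 1/(1-2/h)^2 + τ/16) : (1 - τ) * D ≤ 1 - 2 * d := by
  have h1 : 36 / g ≤ τ / 16 := by rw [div_le_div_iff₀ hg0 (by norm_num)]; linarith
  have h2 : 2 / h ≤ τ / 8 := by rw [div_le_div_iff₀ hh0 (by norm_num)]; linarith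
  have h3 : 0 < 2 / h := by positivity
  set x := 2 / h
  have h4 : 1/(1-x)^2 ≤ 1 + 4 * x := by
    have : 0 < 1 - x := by linarith
    rw [div_le_iff₀ (by positivity)]
    have hx8 : x ≤ 1/8 := by linarith
    nlinarith [mul_nonneg h3.le (mul_nonneg h3.le h3.le), mul_nonneg h3.le (by linarith : 0 ≤ 2 - 7 * x)]
  have h5 : D ≤ 1 + 9 * τ / 16 := by linarith
  have h6 : (1 - τ) * D ≤ (1 - τ) * (1 + 9 * τ / 16) := mul_le_mul_of_nonneg_left h5 (by linarith)
  nlinarith [mul_pos hτ0 hτ0]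

lemma point (n : ℕ) (ε θ : ℝ) (hℓ : 0 < Real.log (Real.log n)) (hln : 1 ≤ Real.log n) 
    (hsq : Real.log n ^ 2 / n ≤ 1/1000)
    (h1 : 100 / Real.sqrt (Real.log (Real.log n)) < ε) (h2 : ε ≤ 1)
    (h3 : 100 / Real.sqrt (Real.log (Real.log n)) < θ) (h4 : θ ≤ 1) (r : ℕ)
    (hr1 : (n : ℝ) / (2 * Lparam ε θ) ≤ r) (hr2 : (r : ℝ) ≤ n / Lparam ε θ) :
    Real.log n ≤ r ∧ 5 * Real.log n + 1 ≤ r ∧ r ≤ n ∧ 160 * r ≤ ⌊th1 ε θ * n⌋₊ ∧ 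
    Real.log (Real.log n) / 1000 ≤ ε / 3 * th1 ε θ / (200 * Lparam ε θ) * Real.log n := by
  obtain ⟨ha, hL0, hL1, hL2, haL, hp⟩ := par ε θ _ hℓ h1 h2 h3 h4
  set ℓ := Real.log (Real.log n) with hℓd
  set L := Lparam ε θ
  set a := th1 ε θ
  have hexp : Real.exp ℓ = Real.log n := Real.exp_log (by linarith)
  have hn0 : (0:ℝ) < n := by
    rcases Nat.eq_zero_or_pos n with h0 | h0
    · subst h0; simp at hln; linarith
    · exact_mod_cast h0
  have hn : 1000 * Real.log n ^ 2 ≤ n := by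
    rw [div_le_iff₀ hn0] at hsq; linarith
  have hLlog : L ≤ 15 * Real.log n := by
    have : Real.exp (ℓ/4) ≤ Real.exp ℓ := Real.exp_le_exp.mpr (by linarith)
    rw [hexp] at this; linarith
  have hr3 : (n:ℝ) / (30 * Real.log n) ≤ r := by
    refine le_trans ?_ hr1
    apply div_le_div_of_nonneg_left hn0.le (by positivity)
    linarith
  have hr4 : 6 * Real.log n ≤ r := by
    refine le_trans ?_ hr3
    rw [le_div_iff₀ (by positivity)]
    nlinarith
  have hr5 : (r:ℝ) ≤ n := hr2.trans (div_le_self hn0.le hL1)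
  refine ⟨by linarith, by linarith, by exact_mod_cast hr5, ?_, ?_⟩
  · apply Nat.le_floor
    push_cast
    rw [le_div_iff₀ hL0] at hr2
    have h5 : (r:ℝ) * 1800 ≤ a * n := by
      calc (r:ℝ) * 1800 ≤ r * (a * L) := by gcongr
        _ = a * (r * L) := by ring
        _ ≤ a * n := by gcongr
    have : (0:ℝ) ≤ r := by positivity
    linarith
  · set E := Real.exp (ℓ/4) with hE
    have hE0 : 0 < E := Real.exp_pos _
    have hE4 : Real.log n = E ^ 4 := by
      rw [← hexp, hE, ← Real.exp_nat_mul]; congr 1; push_cast; ring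
    have hEl : ℓ / 4 ≤ E := by
      have := Real.add_one_le_exp (ℓ/4); linarith
    have h5 : 277 / ℓ / (200 * (15 * E)) ≤ ε / 3 * a / (200 * L) := by
      have h6 : 0 < 277 / ℓ := by positivity
      apply div_le_div₀ (by linarith) hp (by positivity)
      linarith
    have h7 : 277 / ℓ / (200 * (15 * E)) * Real.log n ≤ ε / 3 * a / (200 * L) * Real.log n :=
      mul_le_mul_of_nonneg_right h5 (by linarith)
    refine le_trans ?_ h7
    rw [hE4]
    have e : 277 / ℓ / (200 * (15 * E)) * E ^ 4 = 277 * E^3 / (3000 * ℓ) := by field_simp; norm_num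
    rw [e, div_le_div_iff₀ (by norm_num) (by positivity)]
    have hE1 : 1 ≤ E := Real.one_le_exp (by linarith)
    have h8 : ℓ * ℓ ≤ 16 * (E * E) := by nlinarith
    have h9 : E * E ≤ E ^ 3 := by nlinarith [mul_pos hE0 hE0]
    nlinarith

/-- With the parameters of the paper
(`100/√(log log n) < ε, θ ≤ 1`, `θ₁ = θ₃ = min(θ/3, ε₂/4)`,
`L = max(15·e^{40/(ε₃θ₃)}, 7/θ₁)`, `n/(2L) ≤ r ≤ n/L`, all degrees `δ±` between
`(ε₁θ₁/(200L))·log n` and `5·log n`, palette of `⌊θ₁·n⌋` colors, deletion probability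
`q₀ ≤ log n / n`), the random colored digraph `Γ` contains a rainbow directed Hamilton
cycle with high probability. -/
theorem gamma_rainbow_dir_ham_whp (ε θ : ℕ → ℝ) (r : ℕ → ℕ)
    (δp δm : ∀ n : ℕ, Fin (r n) → ℕ) (q₀ : ℕ → ℝ)
    (hε : ∀ᶠ n : ℕ in atTop,
      100 / Real.sqrt (Real.log (Real.log n)) < ε n ∧ ε n ≤ 1)
    (hθ : ∀ᶠ n : ℕ in atTop,
      100 / Real.sqrt (Real.log (Real.log n)) < θ n ∧ θ n ≤ 1)
    (hr : ∀ᶠ n : ℕ in atTop,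
      (n : ℝ) / (2 * Lparam (ε n) (θ n)) ≤ r n ∧ (r n : ℝ) ≤ n / Lparam (ε n) (θ n))
    (hδp : ∀ᶠ n : ℕ in atTop, ∀ k : Fin (r n),
      ε n / 3 * th1 (ε n) (θ n) / (200 * Lparam (ε n) (θ n)) * Real.log n ≤ δp n k ∧
      (δp n k : ℝ) ≤ 5 * Real.log n)
    (hδm : ∀ᶠ n : ℕ in atTop, ∀ k : Fin (r n),
      ε n / 3 * th1 (ε n) (θ n) / (200 * Lparam (ε n) (θ n)) * Real.log n ≤ δm n k ∧
      (δm n k : ℝ) ≤ 5 * Real.log n)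
    (hq₀ : ∀ᶠ n : ℕ in atTop, 0 ≤ q₀ n ∧ q₀ n ≤ Real.log n / n) :
    Tendsto
      (fun n : ℕ =>
        gammaM (r n) ⌊th1 (ε n) (θ n) * n⌋₊ (δp n) (δm n) (q₀ n)
          {ω | HasRainbowDirHamCycle ω})
      atTop (nhds 1) := by
  have hnlog : Tendsto (fun n : ℕ => Real.log (n:ℝ)) atTop atTop := Real.tendsto_log_atTop.comp tendsto_natCast_atTop_atTop
  have hnll : Tendsto (fun n : ℕ => Real.log (Real.log (n:ℝ))) atTop atTop := Real.tendsto_log_atTop.comp hnlog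
  have hsq : Tendsto (fun n : ℕ => Real.log (n:ℝ) ^ 2 / n) atTop (nhds 0) :=
    ((Real.isLittleO_pow_log_id_atTop (n := 2)).tendsto_div_nhds_zero).comp tendsto_natCast_atTop_atTop
  have hpt : ∀ᶠ n : ℕ in atTop, Real.log n ≤ r n ∧ 5 * Real.log n + 1 ≤ r n ∧ r n ≤ n ∧ 160 * r n ≤ ⌊th1 (ε n) (θ n) * n⌋₊ ∧ 
    Real.log (Real.log n) / 1000 ≤ ε n / 3 * th1 (ε n) (θ n) / (200 * Lparam (ε n) (θ n)) * Real.log n := by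
    filter_upwards [hε, hθ, hr, hnlog.eventually_ge_atTop 1, hnll.eventually_gt_atTop 0,
      hsq.eventually (ge_mem_nhds (by norm_num : (0:ℝ) < 1/1000))] with n h1 h2 h3 h4 h5 h6
    exact point n (ε n) (θ n) h5 h4 h6 h1.1 h1.2 h2.1 h2.2 (r n) h3.1 h3.2
  have hrT : Tendsto r atTop atTop := by
    rw [← tendsto_natCast_atTop_iff (R := ℝ)]
    exact tendsto_atTop_mono' _ (hpt.mono fun n h => h.1) hnlog
  have hδ1 : ∀ᶠ n : ℕ in atTop, (∀ k, δp n k + 1 ≤ r n) ∧ (∀ k, δm n k + 1 ≤ r n) := by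
    filter_upwards [hpt, hδp, hδm] with n h1 h2 h3
    constructor
    · intro k
      have := (h2 k).2
      have : (δp n k : ℝ) + 1 ≤ r n := by linarith
      exact_mod_cast this
    · intro k
      have := (h3 k).2
      have : (δm n k : ℝ) + 1 ≤ r n := by linarith
      exact_mod_cast this
  have hC20 : ∀ᶠ n : ℕ in atTop, 20 ≤ ⌊th1 (ε n) (θ n) * n⌋₊ := by
    filter_upwards [hpt, hrT.eventually_ge_atTop 1] with n h1 h2
    have := h1.2.2.2.1
    omega
  rw [ENNReal.tendsto_nhds ENNReal.one_ne_top]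
  intro τ' hτ'
  obtain ⟨τ, hτ0, hτ1, hττ⟩ : ∃ τ : ℝ, 0 < τ ∧ τ < 1 ∧ ENNReal.ofReal τ ≤ τ' := by
    by_cases ht : τ' = ⊤
    · exact ⟨1/2, by norm_num, by norm_num, by rw [ht]; exact le_top⟩
    · have h0 : 0 < τ'.toReal := ENNReal.toReal_pos hτ'.ne' ht
      refine ⟨min τ'.toReal (1/2), by positivity, (min_le_right _ _).trans_lt (by norm_num), ?_⟩
      exact (ENNReal.ofReal_le_ofReal (min_le_left _ _)).trans (ENNReal.ofReal_toReal ht).le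
  obtain ⟨h, hh⟩ := exists_nat_ge (16 / τ)
  obtain ⟨g, hg⟩ := exists_nat_ge (576 / τ)
  rw [div_le_iff₀ hτ0] at hh hg
  have hh0 : (0:ℝ) < h := by
    by_contra hc
    nlinarith
  have hh4 : 4 ≤ h := by
    have : (4:ℝ) ≤ h := by nlinarith
    exact_mod_cast this
  have hg0 : (0:ℝ) < g := by
    by_contra hc
    nlinarith
  have hD := hrT.eventually (Dn_bound h hh4 (τ/16) (by positivity))
  have hdT : Tendsto (fun n : ℕ => (12 * (((4^h) * 40 * 40 : ℕ) : ℝ)^4 + 1299) * (1 / (r n:ℝ)) + 512000 * ((4^h : ℕ) : ℝ) * (Real.log n ^ 2 / n)) atTop (nhds 0) := by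
    have t1 : Tendsto (fun n : ℕ => 1 / (r n:ℝ)) atTop (nhds 0) := 
      (tendsto_one_div_atTop_nhds_zero_nat (𝕜 := ℝ)).comp hrT
    have := (t1.const_mul (12 * (((4^h) * 40 * 40 : ℕ) : ℝ)^4 + 1299)).add (hsq.const_mul (512000 * ((4^h : ℕ) : ℝ)))
    simpa using this
  have hdeg : ∀ᶠ n : ℕ in atTop, (∀ k, 4^h * 40 * 40 + g ≤ δp n k) ∧ (∀ k, 4^h * 40 * 40 + g ≤ δm n k) := by
    filter_upwards [hpt, hδp, hδm, hnll.eventually_ge_atTop (1000 * ((4^h * 40 * 40 + g : ℕ) : ℝ))] with n h1 h2 h3 h4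
    have h5 := h1.2.2.2.2
    constructor
    · intro k
      have h6 := (h2 k).1
      have : ((4^h * 40 * 40 + g : ℕ) : ℝ) ≤ δp n k := by linarith
      exact_mod_cast this
    · intro k
      have h6 := (h3 k).1
      have : ((4^h * 40 * 40 + g : ℕ) : ℝ) ≤ δm n k := by linarith
      exact_mod_cast this
  filter_upwards [hpt, hδ1, hC20, hD, hdT.eventually (ge_mem_nhds (by positivity : (0:ℝ) < τ/16)), hdeg, hq₀,
    hnlog.eventually_ge_atTop 1, hsq.eventually (ge_mem_nhds (by norm_num : (0:ℝ) < 1/1000)),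
    hrT.eventually_ge_atTop (2 + 8 * (4^h * 40 * 40))] with n h1 h2 h3 h4 h5 h6 h7 h8 h9 h10
  have hup := gamma_le_one (C := ⌊th1 (ε n) (θ n) * n⌋₊) (δp n) (δm n) (q₀ n) (by omega) h2.1 h2.2 {ω | HasRainbowDirHamCycle ω}
  refine ⟨?_, hup.trans le_self_add⟩
  obtain ⟨q, s, hs0, hs, hDn⟩ := h4
  have hn1 : 1 ≤ n := by have := h1.2.2.1; omega
  have hn0 : (0:ℝ) < n := by exact_mod_cast hn1
  have hm2 : ((⌈Real.log n⌉₊ : ℕ) : ℝ) ≤ 2 * Real.log n := by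
    have := (Nat.ceil_lt_add_one (by linarith : 0 ≤ Real.log (n:ℝ))).le
    linarith
  have hm10 : 10 * ⌈Real.log (n:ℝ)⌉₊ ≤ n := by
    have h11 : 1000 * Real.log n ^ 2 ≤ n := by rw [div_le_iff₀ hn0] at h9; linarith
    have : (10:ℝ) * ((⌈Real.log n⌉₊ : ℕ) : ℝ) ≤ n := by nlinarith
    exact_mod_cast this
  have hd := dlt_bound (4^h) g n (r n) ⌊th1 (ε n) (θ n) * n⌋₊ ⌈Real.log (n:ℝ)⌉₊ (by omega) h1.2.2.1 h1.2.2.2.1 hm2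
  have hfin := tau_arith τ h g _ _ hτ0 hτ1 hh0 (by linarith) hg0 (by linarith) (by linarith : dlt (r n) (4^h) 40 ⌊th1 (ε n) (θ n) * n⌋₊ n ⌈Real.log (n:ℝ)⌉₊ g ≤ 36 / g + τ / 16) hDn
  have hlow := final_lower (δp n) (δm n) (q₀ n) (4^h) g ⌈Real.log (n:ℝ)⌉₊ n q s (1/(h:ℝ)) (by positivity) (by exact_mod_cast hg0) (by omega)
    h3 h1.2.2.2.1 (Nat.ceil_pos.mpr (by linarith)) hm10 h10 hs0 hs (by positivity)
    (by rw [div_le_div_iff₀ hh0 (by norm_num)]; have : (4:ℝ) ≤ h := by exact_mod_cast hh4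
        linarith) h7.1
    (h7.2.trans (by gcongr; exact Nat.le_ceil _)) h2.1 h2.2 h6.1 h6.2 (1 - τ) hfin
  refine le_trans ?_ hlow
  rw [ENNReal.ofReal_sub _ hτ0.le, ENNReal.ofReal_one]
  exact tsub_le_tsub_left hττ _
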